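/- Convergence for s < 1/2. Assume (H1)–(H4) and s ∈ (0,1/2). For each ε > 0 let u^ε be the unique viscosity solution of ∂_t u^ε = I_s[u^ε(t,·)] − W'(u^ε/ε^{2s}) + σ(t/ε^{2s}, x/ε) on ℝ⁺×ℝ^N with u^ε(0,x)=u₀(x), and let u⁰ be the unique viscosity solution of ∂_t u = H̄₂(I_s[u(t,·)]) on ℝ⁺×ℝ^N with u(0,x)=u₀(x), where H̄₂(L) := H̄(0,L). Then u^ε converges to u⁰ locally uniformly in (t,x) as ε → 0. -/

import Mathlib

/-!
By comparison of `u^ε` with `u⁰`, through a perturbed-test-function argument inside a doubling of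
variables; only one inequality is needed, since the problem is invariant under `u ↦ -u` (with `W'`,
`σ`, `H̄` reflected).

Suppose `u^ε - u⁰` exceeds `η` somewhere. Penalising by `c|x - x'|² + c(t - t')²`, by a term that
grows in time, and by a small bump, one finds a maximum point; barriers that are linear in time keep
it away from `t = 0`. Testing `u⁰` there gives `H̄(0, ℓ) ≤ b`, where `b` is the time slope and `ℓ`
the nonlocal term of `u⁰`. At the same point `u^ε` is touched from above with time slope `b + κ`,
and its far field is controlled by that of `u⁰`. Since `s < 1/2`, a function with linear growth near
a point has a finite nonlocal term there, so the whole macroscopic gradient contributes only an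
error that vanishes with the radius `r` of the excluded ball; this is why only `p = 0` occurs in the
effective equation.

After zooming by `ε` in space and `ε^{2s}` in time around the maximum point, `u^ε` becomes a
subsolution of the cell equation on a large ball, its exterior contributing at most a constant
slightly below some `L` close to `ℓ` to the nonlocal term. Comparison on that ball bounds it by the
supersolution of the cell problem with forcing `L`, whose slope is `H̄(0, L)`. Over a long
microscopic time this gives `b + κ ≤ H̄(0, L) + κ/2`, and the continuity of `H̄` contradicts
`H̄(0, ℓ) ≤ b`. All constants are uniform in the contact point, and `L` ranges over a finite grid,
so the contradiction holds for all small `ε`.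
-/

open MeasureTheory Filter Metric Set RealInnerProductSpace

noncomputable section

/-- `ℝ^N` as a Euclidean space. -/
abbrev EN (N : ℕ) := EuclideanSpace ℝ (Fin N)

/-- The singular kernel `g(z/|z|) |z|^{-N-2s}` of the anisotropic Lévy operator. -/
noncomputable def levyKernel (N : ℕ) (s : ℝ) (g : EN N → ℝ) (z : EN N) : ℝ :=
  g (‖z‖⁻¹ • z) * ‖z‖ ^ (-(N : ℝ) - 2 * s)

/-- `I^{1,r}[φ, x]`: integral over `|z| ≤ r` of the second order increment of `φ`. -/
noncomputable def levyI1 (N : ℕ) (s : ℝ) (g : EN N → ℝ) (φ : EN N → ℝ) (r : ℝ) (x : EN N) : ℝ :=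
  ∫ z in {z : EN N | ‖z‖ ≤ r}, (φ (x + z) - φ x - fderiv ℝ φ x z) * levyKernel N s g z

/-- `I^{2,r}[u, x]`: integral over `|z| > r` of the increment of `u`. -/
noncomputable def levyI2 (N : ℕ) (s : ℝ) (g : EN N → ℝ) (u : EN N → ℝ) (r : ℝ) (x : EN N) : ℝ :=
  ∫ z in {z : EN N | r < ‖z‖}, (u (x + z) - u x) * levyKernel N s g z

/-- The anisotropic Lévy operator `I_s` of order `2s`, defined as a principal value. -/
noncomputable def levyOp (N : ℕ) (s : ℝ) (g : EN N → ℝ) (φ : EN N → ℝ) (x : EN N) : ℝ :=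
  limUnder (nhdsWithin 0 (Ioi (0:ℝ)))
    (fun ρ => ∫ y in {y : EN N | ρ < ‖y‖}, (φ (x + y) - φ x) * levyKernel N s g y)

/-- (H1): `g` is continuous, positive on the sphere and even. -/
def H1 (N : ℕ) (g : EN N → ℝ) : Prop :=
  Continuous g ∧ (∀ z : EN N, ‖z‖ = 1 → 0 < g z) ∧ (∀ z : EN N, g (-z) = g z)

/-- (H2): `W ∈ C^{1,1}(ℝ)` and `W(v+1) = W(v)`. -/
def H2 (W : ℝ → ℝ) : Prop :=
  ContDiff ℝ 1 W ∧ (∃ K : NNReal, LipschitzWith K (deriv W)) ∧ ∀ v, W (v + 1) = W v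

/-- (H3): `σ ∈ C^{0,1}(ℝ⁺ × ℝ^N)`, 1-periodic in `t` and ℤ^N-periodic in `x`. -/
def H3 (N : ℕ) (σ : ℝ → EN N → ℝ) : Prop :=
  (∃ K : NNReal, LipschitzWith K (fun q : ℝ × EN N => σ q.1 q.2)) ∧
  (∀ t x, σ (t + 1) x = σ t x) ∧
  (∀ (k : Fin N → ℤ) (t : ℝ) (x : EN N), σ t (x + (WithLp.equiv 2 (Fin N → ℝ)).symm (fun j => (k j : ℝ))) = σ t x)

/-- (H4): `u₀ ∈ W^{2,∞}(ℝ^N)`. -/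
def H4 (N : ℕ) (u₀ : EN N → ℝ) : Prop :=
  ContDiff ℝ 2 u₀ ∧
  ∃ M, ∀ x, |u₀ x| ≤ M ∧ ‖fderiv ℝ u₀ x‖ ≤ M ∧ ‖fderiv ℝ (fderiv ℝ u₀) x‖ ≤ M

/-- Boundedness on `(0,T) × ℝ^N` for every `T > 0`. -/
def LocBddPos (N : ℕ) (u : ℝ → EN N → ℝ) : Prop :=
  ∀ T > 0, ∃ M, ∀ t ∈ Ioc (0:ℝ) T, ∀ x, |u t x| ≤ M

/-- Viscosity subsolution of `∂_t u = F(t, x, u, ∇_x u, I_s[u(t,·)])` with initial datum `u₀`. -/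
def IsSubsol (N : ℕ) (s : ℝ) (g : EN N → ℝ)
    (F : ℝ → EN N → ℝ → (EN N →L[ℝ] ℝ) → ℝ → ℝ)
    (u₀ : EN N → ℝ) (u : ℝ → EN N → ℝ) : Prop :=
  UpperSemicontinuousOn (fun q : ℝ × EN N => u q.1 q.2) (Ici 0 ×ˢ univ) ∧
  LocBddPos N u ∧
  (∀ x, u 0 x ≤ u₀ x) ∧
  ∀ (t₀ : ℝ) (x₀ : EN N), 0 < t₀ →
    ∀ (φ : ℝ → EN N → ℝ), ContDiff ℝ 2 (fun q : ℝ × EN N => φ q.1 q.2) →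
    ∀ τ r : ℝ, 0 < τ → τ < t₀ → 0 < r →
    (∀ t x, t ∈ Ioo (t₀ - τ) (t₀ + τ) → x ∈ ball x₀ r →
      u t x - φ t x ≤ u t₀ x₀ - φ t₀ x₀) →
    deriv (fun t => φ t x₀) t₀ -
      F t₀ x₀ (u t₀ x₀) (fderiv ℝ (fun x => φ t₀ x) x₀)
        (levyI1 N s g (fun x => φ t₀ x) r x₀ + levyI2 N s g (fun x => u t₀ x) r x₀) ≤ 0

/-- Viscosity supersolution of `∂_t u = F(t, x, u, ∇_x u, I_s[u(t,·)])` with initial datum `u₀`. -/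
def IsSupersol (N : ℕ) (s : ℝ) (g : EN N → ℝ)
    (F : ℝ → EN N → ℝ → (EN N →L[ℝ] ℝ) → ℝ → ℝ)
    (u₀ : EN N → ℝ) (u : ℝ → EN N → ℝ) : Prop :=
  LowerSemicontinuousOn (fun q : ℝ × EN N => u q.1 q.2) (Ici 0 ×ˢ univ) ∧
  LocBddPos N u ∧
  (∀ x, u₀ x ≤ u 0 x) ∧
  ∀ (t₀ : ℝ) (x₀ : EN N), 0 < t₀ →
    ∀ (φ : ℝ → EN N → ℝ), ContDiff ℝ 2 (fun q : ℝ × EN N => φ q.1 q.2) →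
    ∀ τ r : ℝ, 0 < τ → τ < t₀ → 0 < r →
    (∀ t x, t ∈ Ioo (t₀ - τ) (t₀ + τ) → x ∈ ball x₀ r →
      u t₀ x₀ - φ t₀ x₀ ≤ u t x - φ t x) →
    0 ≤ deriv (fun t => φ t x₀) t₀ -
      F t₀ x₀ (u t₀ x₀) (fderiv ℝ (fun x => φ t₀ x) x₀)
        (levyI1 N s g (fun x => φ t₀ x) r x₀ + levyI2 N s g (fun x => u t₀ x) r x₀)

/-- Viscosity solution in `C_b(ℝ⁺ × ℝ^N)`. -/
def IsSol (N : ℕ) (s : ℝ) (g : EN N → ℝ)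
    (F : ℝ → EN N → ℝ → (EN N →L[ℝ] ℝ) → ℝ → ℝ)
    (u₀ : EN N → ℝ) (u : ℝ → EN N → ℝ) : Prop :=
  ContinuousOn (fun q : ℝ × EN N => u q.1 q.2) (Ici 0 ×ˢ univ) ∧
  IsSubsol N s g F u₀ u ∧ IsSupersol N s g F u₀ u

/-- The right-hand side of the cell problem
`∂_τ w = I_s[w(τ,·)] + L − W'(w + p·y) + σ(τ,y)`. -/
def cellF (N : ℕ) (W : ℝ → ℝ) (σ : ℝ → EN N → ℝ) (p : EN N) (L : ℝ) :
    ℝ → EN N → ℝ → (EN N →L[ℝ] ℝ) → ℝ → ℝ :=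
  fun τ y v _ I => I + L - deriv W (v + ⟪p, y⟫) + σ τ y

/-- `w(τ,y)/τ → lam` as `τ → +∞`, locally uniformly in `y`. -/
def SlopeLim (N : ℕ) (w : ℝ → EN N → ℝ) (lam : ℝ) : Prop :=
  ∀ ε > 0, ∀ R > 0, ∃ T : ℝ, ∀ τ, T ≤ τ → ∀ y : EN N, ‖y‖ ≤ R → |w τ y / τ - lam| ≤ ε

end

open scoped Topology

/-! ### The Lévy kernel -/

section Kernel

variable {N : ℕ} {s : ℝ} {g : EN N → ℝ}

/-- An angular density of a Lévy kernel: continuous, and nonnegative on the unit sphere. -/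
structure IsAngularDensity (g : EN N → ℝ) : Prop where
  continuous : Continuous g
  nonneg : ∀ z, ‖z‖ = 1 → 0 ≤ g z

theorem H1.isAngularDensity (hg : H1 N g) : IsAngularDensity g :=
  ⟨hg.1, fun z hz => (hg.2.1 z hz).le⟩

theorem levyKernel_zero (hs : 0 < s) : levyKernel N s g 0 = 0 := by
  have : (0 : ℝ) ≤ N := N.cast_nonneg
  simp [levyKernel, Real.zero_rpow (show -(N : ℝ) - 2 * s ≠ 0 by linarith)]

theorem levyKernel_nonneg (hs : 0 < s) (hg : IsAngularDensity g) (z : EN N) :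
    0 ≤ levyKernel N s g z := by
  rcases eq_or_ne z 0 with rfl | hz
  · rw [levyKernel_zero hs]
  · exact mul_nonneg (hg.nonneg _ (norm_smul_inv_norm (𝕜 := ℝ) hz)) (by positivity)

theorem measurable_levyKernel (hg : IsAngularDensity g) : Measurable (levyKernel N s g) := by
  have hdir : Measurable fun z : EN N => ‖z‖⁻¹ • z := by fun_prop
  exact (hg.continuous.measurable.comp hdir).mul (by fun_prop)

theorem exists_levyKernel_le (hs : 0 < s) (hg : IsAngularDensity g) :
    ∃ G, 0 ≤ G ∧ ∀ z, levyKernel N s g z ≤ G * ‖z‖ ^ (-(N + 2 * s)) := by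
  obtain ⟨G, hG⟩ :=
    (isCompact_sphere (0 : EN N) 1).bddAbove_image hg.continuous.continuousOn
  refine ⟨|G|, abs_nonneg _, fun z => ?_⟩
  rcases eq_or_ne z 0 with rfl | hz
  · rw [levyKernel_zero hs]
    positivity
  · have hdir : ‖z‖⁻¹ • z ∈ sphere (0 : EN N) 1 :=
      mem_sphere_zero_iff_norm.2 (norm_smul_inv_norm (𝕜 := ℝ) hz)
    rw [levyKernel, neg_add']
    gcongr
    exact (hG ⟨_, hdir, rfl⟩).trans (le_abs_self G)

theorem levyKernel_smul {ε : ℝ} (hε : 0 < ε) (z : EN N) :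
    levyKernel N s g (ε • z) = ε ^ (-(N : ℝ) - 2 * s) * levyKernel N s g z := by
  have hdir : ‖ε • z‖⁻¹ • (ε • z) = ‖z‖⁻¹ • z := by
    rw [norm_smul, Real.norm_of_nonneg hε.le, smul_smul]
    congr 1
    field_simp
  rw [levyKernel, levyKernel, hdir, norm_smul, Real.norm_of_nonneg hε.le,
    Real.mul_rpow hε.le (norm_nonneg _)]
  ring

theorem measurableSet_norm_le (r : ℝ) : MeasurableSet {z : EN N | ‖z‖ ≤ r} :=
  measurableSet_le measurable_norm measurable_const

theorem measurableSet_lt_norm (r : ℝ) : MeasurableSet {z : EN N | r < ‖z‖} :=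
  measurableSet_lt measurable_const measurable_norm

/-- The first moment of the Lévy kernel on the ball of radius `r`; it is finite precisely because
`2s < 1`. -/
noncomputable def nearMoment (s : ℝ) (g : EN N → ℝ) (r : ℝ) : ℝ :=
  ∫ z in {z : EN N | ‖z‖ ≤ r}, ‖z‖ * levyKernel N s g z

/-- The mass of the Lévy kernel outside the ball of radius `r`. -/
noncomputable def tailMass (s : ℝ) (g : EN N → ℝ) (r : ℝ) : ℝ :=
  ∫ z in {z : EN N | r < ‖z‖}, levyKernel N s g z

theorem nearMoment_nonneg (hs : 0 < s) (hg : IsAngularDensity g) (r : ℝ) :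
    0 ≤ nearMoment s g r :=
  integral_nonneg fun z => mul_nonneg (norm_nonneg z) (levyKernel_nonneg hs hg z)

theorem tailMass_nonneg (hs : 0 < s) (hg : IsAngularDensity g) (r : ℝ) : 0 ≤ tailMass s g r :=
  integral_nonneg fun z => levyKernel_nonneg hs hg z

theorem integrableOn_norm_mul_levyKernel (hs : s ∈ Ioo (0 : ℝ) (1 / 2)) (hg : IsAngularDensity g)
    (r : ℝ) :
    IntegrableOn (fun z : EN N => ‖z‖ * levyKernel N s g z) {z : EN N | ‖z‖ ≤ r} := by
  rcases N.eq_zero_or_pos with rfl | hN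
  · refine integrableOn_zero.congr_fun (fun z _ => ?_) (measurableSet_norm_le r)
    simp [Subsingleton.elim z 0]
  obtain ⟨G, hG₀, hG⟩ := exists_levyKernel_le hs.1 hg
  have hball : {z : EN N | ‖z‖ ≤ r} ⊆ ball 0 (r + 1) := fun z hz =>
    mem_ball_zero_iff.2 (lt_of_le_of_lt hz (lt_add_one r))
  refine IntegrableOn.mono_set (integrableOn_ball_of_norm_le_rpow (C := G) (α := N + 2 * s - 1)
    (by rwa [finrank_euclideanSpace_fin]) (by simpa using by linarith [hs.2])
    (ae_of_all _ fun z => ?_)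
    (measurable_norm.mul (measurable_levyKernel hg)).aestronglyMeasurable) hball
  rw [Real.norm_of_nonneg (mul_nonneg (norm_nonneg _) (levyKernel_nonneg hs.1 hg z))]
  rcases eq_or_ne z 0 with rfl | hz
  · simp only [norm_zero, zero_mul]
    positivity
  · calc ‖z‖ * levyKernel N s g z ≤ ‖z‖ * (G * ‖z‖ ^ (-(N + 2 * s))) := by gcongr; exact hG z
      _ = G * ‖z‖ ^ (-(N + 2 * s - 1)) := by
        rw [show -(N + 2 * s - 1) = -(N + 2 * s) + 1 by ring,
          Real.rpow_add_one (norm_ne_zero_iff.2 hz)]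
        ring

theorem integrableOn_levyKernel (hs : 0 < s) (hg : IsAngularDensity g) {r : ℝ} (hr : 0 < r) :
    IntegrableOn (levyKernel N s g) {z : EN N | r < ‖z‖} := by
  obtain ⟨G, hG₀, hG⟩ := exists_levyKernel_le hs hg
  have hjapanese : Integrable fun z : EN N =>
      G * (r / (1 + r)) ^ (-(N + 2 * s)) * (1 + ‖z‖) ^ (-(N + 2 * s)) :=
    (integrable_one_add_norm (by simpa using hs)).const_mul _
  refine hjapanese.integrableOn.mono' (measurable_levyKernel hg).aestronglyMeasurable
    ((ae_restrict_iff' (measurableSet_lt_norm r)).2 (ae_of_all _ fun z hz => ?_))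
  have hz : r < ‖z‖ := hz
  rw [Real.norm_of_nonneg (levyKernel_nonneg hs hg z), mul_assoc,
    ← Real.mul_rpow (by positivity) (by positivity)]
  refine (hG z).trans (mul_le_mul_of_nonneg_left ?_ hG₀)
  refine Real.rpow_le_rpow_of_nonpos (by positivity) ?_ (by linarith [N.cast_nonneg (α := ℝ)])
  rw [div_mul_eq_mul_div, div_le_iff₀ (by positivity)]
  linarith

open scoped Pointwise in
theorem smul_setOf_norm_le {ε : ℝ} (hε : 0 < ε) (r : ℝ) :
    ε • {z : EN N | ‖z‖ ≤ r} = {z | ‖z‖ ≤ ε * r} := by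
  ext z
  rw [mem_smul_set_iff_inv_smul_mem₀ hε.ne', mem_ofPred_eq, mem_ofPred_eq, norm_smul, norm_inv,
    Real.norm_of_nonneg hε.le, inv_mul_le_iff₀ hε]

open scoped Pointwise in
theorem smul_setOf_lt_norm {ε : ℝ} (hε : 0 < ε) (r : ℝ) :
    ε • {z : EN N | r < ‖z‖} = {z | ε * r < ‖z‖} := by
  ext z
  rw [mem_smul_set_iff_inv_smul_mem₀ hε.ne', mem_ofPred_eq, mem_ofPred_eq, norm_smul, norm_inv,
    Real.norm_of_nonneg hε.le, lt_inv_mul_iff₀ hε]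

open scoped Pointwise in
theorem setIntegral_comp_smul_levyKernel {ε : ℝ} (hε : 0 < ε) (S : Set (EN N)) (f : EN N → ℝ) :
    ∫ z in S, f (ε • z) * levyKernel N s g z
      = ε ^ (2 * s) * ∫ z in ε • S, f z * levyKernel N s g z := by
  have hkernel : ∀ z : EN N, f (ε • z) * levyKernel N s g z
      = ε ^ (N + 2 * s) * (f (ε • z) * levyKernel N s g (ε • z)) := fun z => by
    rw [levyKernel_smul hε, ← neg_add', Real.rpow_neg hε.le]
    have := Real.rpow_pos_of_pos hε (N + 2 * s)
    field_simp
  simp_rw [hkernel]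
  rw [integral_const_mul,
    Measure.setIntegral_comp_smul_of_pos volume (fun z => f z * levyKernel N s g z) S hε,
    finrank_euclideanSpace, Fintype.card_fin, smul_eq_mul, ← mul_assoc, Real.rpow_add hε,
    Real.rpow_natCast]
  field_simp

theorem nearMoment_eq_rpow_mul {r : ℝ} (hr : 0 < r) :
    nearMoment s g r = r ^ (1 - 2 * s) * nearMoment s g 1 := by
  have h := setIntegral_comp_smul_levyKernel (s := s) (g := g) hr {z : EN N | ‖z‖ ≤ 1} (‖·‖)
  simp only [smul_setOf_norm_le hr, mul_one, norm_smul, Real.norm_of_nonneg hr.le, mul_assoc,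
    integral_const_mul] at h
  change r * nearMoment s g 1 = r ^ (2 * s) * nearMoment s g r at h
  rw [Real.rpow_sub hr, Real.rpow_one, div_mul_eq_mul_div, h]
  exact (mul_div_cancel_left₀ _ (Real.rpow_pos_of_pos hr _).ne').symm

theorem tailMass_eq_rpow_mul {ε : ℝ} (hε : 0 < ε) (r : ℝ) :
    tailMass s g r = ε ^ (2 * s) * tailMass s g (ε * r) := by
  simpa only [smul_setOf_lt_norm hε, one_mul, tailMass] using
    setIntegral_comp_smul_levyKernel (s := s) (g := g) hε {z : EN N | r < ‖z‖} fun _ => 1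

theorem tendsto_nearMoment_zero (hs : s < 1 / 2) :
    Tendsto (nearMoment s g) (𝓝[>] 0) (𝓝 0) := by
  have hpow : Tendsto (fun r : ℝ => r ^ (1 - 2 * s) * nearMoment s g 1)
      (𝓝[>] 0) (𝓝 (0 ^ (1 - 2 * s) * nearMoment s g 1)) :=
    ((Real.continuousAt_rpow_const 0 (1 - 2 * s) (Or.inr (by linarith))).tendsto.mono_left
      nhdsWithin_le_nhds).mul_const _
  rw [Real.zero_rpow (by linarith), zero_mul] at hpow
  exact hpow.congr' (eventually_mem_nhdsWithin.mono fun r hr => (nearMoment_eq_rpow_mul hr).symm)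

theorem tendsto_rpow_neg_mul_atTop (hs : 0 < s) (c : ℝ) :
    Tendsto (fun r : ℝ => r ^ (-(2 * s)) * c) atTop (𝓝 0) := by
  simpa using (tendsto_rpow_neg_atTop (by linarith : 0 < 2 * s)).mul_const c

theorem tendsto_tailMass_atTop (hs : 0 < s) : Tendsto (tailMass s g) atTop (𝓝 0) := by
  refine (tendsto_rpow_neg_mul_atTop hs (tailMass s g 1)).congr' ?_
  filter_upwards [eventually_gt_atTop 0] with r hr
  rw [tailMass_eq_rpow_mul hr 1, mul_one, ← mul_assoc, ← Real.rpow_add hr, neg_add_cancel,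
    Real.rpow_zero, one_mul]

theorem tendsto_inv_mul_nearMoment_atTop (hs : 0 < s) :
    Tendsto (fun r => r⁻¹ * nearMoment s g r) atTop (𝓝 0) := by
  refine (tendsto_rpow_neg_mul_atTop hs (nearMoment s g 1)).congr' ?_
  filter_upwards [eventually_gt_atTop 0] with r hr
  rw [nearMoment_eq_rpow_mul hr, ← mul_assoc, ← Real.rpow_neg_one, ← Real.rpow_add hr]
  ring_nf

end Kernel

/-! ### The two parts of the Lévy operator -/

section Operators

variable {N : ℕ} {s : ℝ} {g : EN N → ℝ}

/-- Bounded continuous functions, as a predicate. -/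
structure IsContBdd (u : EN N → ℝ) : Prop where
  continuous : Continuous u
  exists_abs_le : ∃ M, ∀ x, |u x| ≤ M

theorem isContBdd_zero : IsContBdd fun _ : EN N => 0 :=
  ⟨continuous_const, 0, fun _ => by simp⟩

theorem abs_levyI1_le (hs : s ∈ Ioo (0 : ℝ) (1 / 2)) (hg : IsAngularDensity g)
    {φ : EN N → ℝ} {r C : ℝ} {x : EN N}
    (h : ∀ z, ‖z‖ ≤ r → |φ (x + z) - φ x - fderiv ℝ φ x z| ≤ C * ‖z‖) :
    |levyI1 N s g φ r x| ≤ C * nearMoment s g r := by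
  rw [nearMoment, ← integral_const_mul, ← Real.norm_eq_abs, levyI1]
  refine norm_integral_le_of_norm_le ((integrableOn_norm_mul_levyKernel hs hg r).const_mul C)
    ((ae_restrict_iff' (measurableSet_norm_le r)).2 (ae_of_all _ fun z hz => ?_))
  have hk := levyKernel_nonneg hs.1 hg z
  rw [norm_mul, Real.norm_eq_abs, Real.norm_of_nonneg hk, ← mul_assoc]
  exact mul_le_mul_of_nonneg_right (h z hz) hk

theorem tendsto_levyI1_zero (hs : s ∈ Ioo (0 : ℝ) (1 / 2)) (hg : IsAngularDensity g)
    {φ : EN N → ℝ} {x : EN N} (hφ : DifferentiableAt ℝ φ x) :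
    Tendsto (fun ρ => levyI1 N s g φ ρ x) (𝓝[>] 0) (𝓝 0) := by
  obtain ⟨d, hd, hincr⟩ := Metric.eventually_nhds_iff.1
    ((hasFDerivAt_iff_isLittleO_nhds_zero.1 hφ.hasFDerivAt).bound zero_lt_one)
  refine squeeze_zero_norm' ?_ (tendsto_nearMoment_zero (N := N) (g := g) hs.2)
  filter_upwards [Ioo_mem_nhdsGT hd] with ρ hρ
  rw [Real.norm_eq_abs, ← one_mul (nearMoment s g ρ)]
  exact abs_levyI1_le hs hg fun z hz => hincr (by simpa using hz.trans_lt hρ.2)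

theorem integrableOn_increment (hs : 0 < s) (hg : IsAngularDensity g)
    {u : EN N → ℝ} (hu : IsContBdd u) {r : ℝ} (hr : 0 < r) (x : EN N) :
    IntegrableOn (fun z => (u (x + z) - u x) * levyKernel N s g z) {z : EN N | r < ‖z‖} := by
  obtain ⟨M, hM⟩ := hu.exists_abs_le
  refine (integrableOn_levyKernel hs hg hr).bdd_mul (c := M + M) ?_ (ae_of_all _ fun z => ?_)
  · exact (((hu.continuous.comp (continuous_const_add x)).sub continuous_const).measurable
      ).aestronglyMeasurable
  · exact (abs_sub _ _).trans (add_le_add (hM _) (hM _))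

theorem abs_levyI2_le (hs : 0 < s) (hg : IsAngularDensity g)
    {u : EN N → ℝ} {r C : ℝ} {x : EN N} (hr : 0 < r)
    (h : ∀ z, r < ‖z‖ → |u (x + z) - u x| ≤ C) :
    |levyI2 N s g u r x| ≤ C * tailMass s g r := by
  rw [tailMass, ← integral_const_mul, ← Real.norm_eq_abs, levyI2]
  refine norm_integral_le_of_norm_le ((integrableOn_levyKernel hs hg hr).const_mul C)
    ((ae_restrict_iff' (measurableSet_lt_norm r)).2 (ae_of_all _ fun z hz => ?_))
  have hk := levyKernel_nonneg hs hg z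
  rw [norm_mul, Real.norm_eq_abs, Real.norm_of_nonneg hk]
  exact mul_le_mul_of_nonneg_right (h z hz) hk

theorem levyI2_le_of_increment_le (hs : 0 < s) (hg : IsAngularDensity g)
    {u w : EN N → ℝ} (hu : IsContBdd u) (hw : IsContBdd w) {R a : ℝ} (hR : 0 < R) {x y : EN N}
    (h : ∀ z, R < ‖z‖ → u (x + z) - u x ≤ w (y + z) - w y + a) :
    levyI2 N s g u R x ≤ levyI2 N s g w R y + a * tailMass s g R := by
  have hwR := integrableOn_increment hs hg hw hR y
  have hkR := (integrableOn_levyKernel hs hg hR).const_mul a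
  rw [levyI2, levyI2, tailMass, ← integral_const_mul, ← integral_add hwR hkR]
  refine setIntegral_mono_on (integrableOn_increment hs hg hu hR x) (hwR.add hkR)
    (measurableSet_lt_norm R) fun z hz => ?_
  rw [← add_mul]
  exact mul_le_mul_of_nonneg_right (h z hz) (levyKernel_nonneg hs hg z)

theorem setIntegral_annulus {f : EN N → ℝ} {ρ R : ℝ} (hρR : ρ ≤ R)
    (hf : IntegrableOn f {z | ρ < ‖z‖}) :
    ∫ z in {z | ρ < ‖z‖} \ {z | R < ‖z‖}, f z
      = (∫ z in {z | ρ < ‖z‖}, f z) - ∫ z in {z | R < ‖z‖}, f z :=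
  setIntegral_sdiff (measurableSet_lt_norm R) hf fun _ hz => hρR.trans_lt hz

theorem levyI2_sub_le_of_increment_le (hs : s ∈ Ioo (0 : ℝ) (1 / 2)) (hg : IsAngularDensity g)
    {u w : EN N → ℝ} (hu : IsContBdd u) (hw : IsContBdd w) {ρ R a C : ℝ} (hρ : 0 < ρ)
    (hρR : ρ ≤ R) (hC : 0 ≤ C) {x y : EN N}
    (h : ∀ z, ρ < ‖z‖ → ‖z‖ ≤ R → u (x + z) - u x ≤ w (y + z) - w y + (a + C * ‖z‖)) :
    levyI2 N s g u ρ x - levyI2 N s g w ρ y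
      ≤ levyI2 N s g u R x - levyI2 N s g w R y
        + (a * (tailMass s g ρ - tailMass s g R) + C * nearMoment s g R) := by
  set annulus : Set (EN N) := {z | ρ < ‖z‖} \ {z | R < ‖z‖}
  have hmeas : MeasurableSet annulus := (measurableSet_lt_norm ρ).diff (measurableSet_lt_norm R)
  have hsub : annulus ⊆ {z | ‖z‖ ≤ R} := fun z hz =>
    (not_lt.1 fun hR => hz.2 hR : ‖z‖ ≤ R)
  have hu' := integrableOn_increment hs.1 hg hu hρ x
  have hw' := integrableOn_increment hs.1 hg hw hρ y
  have hk := integrableOn_levyKernel hs.1 hg hρ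
  have hnear := integrableOn_norm_mul_levyKernel hs hg R
  have hua := hu'.mono_set (sdiff_subset : annulus ⊆ _)
  have hwa := hw'.mono_set (sdiff_subset : annulus ⊆ _)
  have hka := (hk.mono_set (sdiff_subset : annulus ⊆ _)).const_mul a
  have hneara := (hnear.mono_set hsub).const_mul C
  have hmono := setIntegral_mono_on hua (hwa.add (hka.add hneara)) hmeas fun z hz => by
    have := mul_le_mul_of_nonneg_right (h z hz.1 (hsub hz)) (levyKernel_nonneg hs.1 hg z)
    simp only [Pi.add_apply]
    linarith
  have hnear_le : ∫ z in annulus, ‖z‖ * levyKernel N s g z ≤ nearMoment s g R :=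
    setIntegral_mono_set hnear
      (ae_of_all _ fun z => mul_nonneg (norm_nonneg z) (levyKernel_nonneg hs.1 hg z))
      hsub.eventuallyLE
  rw [integral_add' hwa (hka.add hneara), integral_add' hka hneara, integral_const_mul,
    integral_const_mul, setIntegral_annulus hρR hu', setIntegral_annulus hρR hw',
    setIntegral_annulus hρR hk] at hmono
  have := mul_le_mul_of_nonneg_left hnear_le hC
  simp only [levyI2, tailMass]
  linarith

theorem levyI2_le_of_near_far (hs : s ∈ Ioo (0 : ℝ) (1 / 2)) (hg : IsAngularDensity g)
    {u w : EN N → ℝ} (hu : IsContBdd u) (hw : IsContBdd w) {ρ R a C γ : ℝ} (hρ : 0 < ρ)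
    (hρR : ρ ≤ R) (hC : 0 ≤ C) {x y : EN N}
    (hnear : ∀ z, ρ < ‖z‖ → ‖z‖ ≤ R → u (x + z) - u x ≤ a + C * ‖z‖)
    (hfar : ∀ z, R < ‖z‖ → u (x + z) - u x ≤ w (y + z) - w y + (a + γ)) :
    levyI2 N s g u ρ x
      ≤ levyI2 N s g w R y + (a * tailMass s g ρ + C * nearMoment s g R + γ * tailMass s g R) := by
  have h₁ := levyI2_sub_le_of_increment_le hs hg hu isContBdd_zero hρ hρR hC (a := a) (x := x)
    (y := y) fun z hz hzR => by simpa using hnear z hz hzR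
  have h₂ := levyI2_le_of_increment_le hs.1 hg hu hw (hρ.trans_le hρR) hfar
  simp only [levyI2, sub_self, zero_mul, integral_zero] at h₁ h₂ ⊢
  linarith

theorem levyI1_neg (φ : EN N → ℝ) (r : ℝ) (x : EN N) :
    levyI1 N s g (fun x => -φ x) r x = -levyI1 N s g φ r x := by
  rw [levyI1, levyI1, ← integral_neg, show fderiv ℝ (fun x => -φ x) x = -fderiv ℝ φ x from
    fderiv_neg]
  congr with z
  rw [neg_apply]
  ring

theorem levyI2_neg (u : EN N → ℝ) (r : ℝ) (x : EN N) :
    levyI2 N s g (fun x => -u x) r x = -levyI2 N s g u r x := by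
  rw [levyI2, levyI2, ← integral_neg]
  congr with z
  ring

end Operators

/-! ### Viscosity inequalities -/

section Viscosity

variable {N : ℕ} {s : ℝ} {g : EN N → ℝ} {F : ℝ → EN N → ℝ → ℝ → ℝ} {u : ℝ → EN N → ℝ}

/-- The test-function part of the notion of subsolution, for a right-hand side that does not
depend on the gradient. -/
def ViscSub (N : ℕ) (s : ℝ) (g : EN N → ℝ) (F : ℝ → EN N → ℝ → ℝ → ℝ) (u : ℝ → EN N → ℝ) : Prop :=
  ∀ (t₀ : ℝ) (x₀ : EN N), 0 < t₀ →
    ∀ (φ : ℝ → EN N → ℝ), ContDiff ℝ 2 (fun q : ℝ × EN N => φ q.1 q.2) →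
    ∀ τ r : ℝ, 0 < τ → τ < t₀ → 0 < r →
    (∀ t x, t ∈ Ioo (t₀ - τ) (t₀ + τ) → x ∈ ball x₀ r →
      u t x - φ t x ≤ u t₀ x₀ - φ t₀ x₀) →
    deriv (fun t => φ t x₀) t₀ ≤
      F t₀ x₀ (u t₀ x₀) (levyI1 N s g (φ t₀) r x₀ + levyI2 N s g (u t₀) r x₀)

/-- The test-function part of the notion of supersolution, for a right-hand side that does not
depend on the gradient. -/
def ViscSup (N : ℕ) (s : ℝ) (g : EN N → ℝ) (F : ℝ → EN N → ℝ → ℝ → ℝ) (u : ℝ → EN N → ℝ) : Prop :=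
  ∀ (t₀ : ℝ) (x₀ : EN N), 0 < t₀ →
    ∀ (φ : ℝ → EN N → ℝ), ContDiff ℝ 2 (fun q : ℝ × EN N => φ q.1 q.2) →
    ∀ τ r : ℝ, 0 < τ → τ < t₀ → 0 < r →
    (∀ t x, t ∈ Ioo (t₀ - τ) (t₀ + τ) → x ∈ ball x₀ r →
      u t₀ x₀ - φ t₀ x₀ ≤ u t x - φ t x) →
    F t₀ x₀ (u t₀ x₀) (levyI1 N s g (φ t₀) r x₀ + levyI2 N s g (u t₀) r x₀)
      ≤ deriv (fun t => φ t x₀) t₀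

/-- The right-hand side of the equation satisfied by `-u` when `u` solves the equation with
right-hand side `F`. -/
def reflectRHS (F : ℝ → EN N → ℝ → ℝ → ℝ) : ℝ → EN N → ℝ → ℝ → ℝ :=
  fun t x v I => -F t x (-v) (-I)

theorem ViscSub.neg (h : ViscSub N s g F u) :
    ViscSup N s g (reflectRHS F) (fun t x => -u t x) := by
  intro t₀ x₀ ht φ hφ τ r hτ hτt hr hmin
  have := h t₀ x₀ ht (fun t x => -φ t x) hφ.neg τ r hτ hτt hr
    (fun t x ht hx => by linarith [hmin t x ht hx])
  rw [levyI1_neg, deriv.fun_neg] at this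
  rw [reflectRHS, neg_neg, levyI2_neg, neg_add, neg_neg]
  exact neg_le.1 this

theorem ViscSup.neg (h : ViscSup N s g F u) :
    ViscSub N s g (reflectRHS F) (fun t x => -u t x) := by
  intro t₀ x₀ ht φ hφ τ r hτ hτt hr hmax
  have := h t₀ x₀ ht (fun t x => -φ t x) hφ.neg τ r hτ hτt hr
    (fun t x ht hx => by linarith [hmax t x ht hx])
  rw [levyI1_neg, deriv.fun_neg] at this
  rw [reflectRHS, neg_neg, levyI2_neg, neg_add, neg_neg]
  exact le_neg.1 this

theorem exists_time_window {T t₀ : ℝ} (h₀ : 0 < t₀) (hT : t₀ < T) :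
    ∃ τ, 0 < τ ∧ τ < t₀ ∧ Ioo (t₀ - τ) (t₀ + τ) ⊆ Icc 0 T := by
  refine ⟨min t₀ (T - t₀) / 2, ?_, ?_, fun t ht => ⟨?_, ?_⟩⟩ <;>
    rcases min_cases t₀ (T - t₀) with h | h <;> (try have := ht.1) <;> (try have := ht.2) <;>
    linarith

theorem ViscSub.test (h : ViscSub N s g F u)
    {T t₀ : ℝ} {x₀ : EN N} (h₀ : 0 < t₀) (hT : t₀ < T) {φ : ℝ → EN N → ℝ}
    (hφ : ContDiff ℝ 2 (fun q : ℝ × EN N => φ q.1 q.2)) {r : ℝ} (hr : 0 < r)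
    (hmax : ∀ t ∈ Icc 0 T, ∀ x ∈ ball x₀ r, u t x - φ t x ≤ u t₀ x₀ - φ t₀ x₀)
    {D : ℝ} (hD : HasDerivAt (fun t => φ t x₀) D t₀) :
    D ≤ F t₀ x₀ (u t₀ x₀) (levyI1 N s g (φ t₀) r x₀ + levyI2 N s g (u t₀) r x₀) := by
  obtain ⟨τ, hτ, hτt, hsub⟩ := exists_time_window h₀ hT
  rw [← hD.deriv]
  exact h t₀ x₀ h₀ φ hφ τ r hτ hτt hr fun t x ht hx => hmax t (hsub ht) x hx

theorem ViscSup.test (h : ViscSup N s g F u)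
    {T t₀ : ℝ} {x₀ : EN N} (h₀ : 0 < t₀) (hT : t₀ < T) {φ : ℝ → EN N → ℝ}
    (hφ : ContDiff ℝ 2 (fun q : ℝ × EN N => φ q.1 q.2)) {r : ℝ} (hr : 0 < r)
    (hmin : ∀ t ∈ Icc 0 T, ∀ x ∈ ball x₀ r, u t₀ x₀ - φ t₀ x₀ ≤ u t x - φ t x)
    {D : ℝ} (hD : HasDerivAt (fun t => φ t x₀) D t₀) :
    F t₀ x₀ (u t₀ x₀) (levyI1 N s g (φ t₀) r x₀ + levyI2 N s g (u t₀) r x₀) ≤ D := by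
  obtain ⟨τ, hτ, hτt, hsub⟩ := exists_time_window h₀ hT
  rw [← hD.deriv]
  exact h t₀ x₀ h₀ φ hφ τ r hτ hτt hr fun t x ht hx => hmin t (hsub ht) x hx

end Viscosity

section Zoom

variable {N : ℕ} {s : ℝ} {g : EN N → ℝ} {F : ℝ → EN N → ℝ → ℝ → ℝ} {U φ : ℝ → EN N → ℝ}
  {ε n m : ℝ} {k : EN N}

/-- The microscopic zoom `ε^{-2s} U(ε^{2s}(τ + n), ε(y + k)) - m` of `U`. -/
noncomputable def microZoom (s ε n : ℝ) (k : EN N) (m : ℝ) (U : ℝ → EN N → ℝ) : ℝ → EN N → ℝ :=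
  fun τ y => (ε ^ (2 * s))⁻¹ * U (ε ^ (2 * s) * (τ + n)) (ε • (y + k)) - m

/-- The inverse of `microZoom`. -/
noncomputable def microUnzoom (s ε n : ℝ) (k : EN N) (m : ℝ) (φ : ℝ → EN N → ℝ) : ℝ → EN N → ℝ :=
  fun t x => ε ^ (2 * s) * (φ ((ε ^ (2 * s))⁻¹ * t - n) (ε⁻¹ • x - k) + m)

theorem microZoom_microUnzoom (hε : 0 < ε) : microZoom s ε n k m (microUnzoom s ε n k m φ) = φ := by
  have hpos := Real.rpow_pos_of_pos hε (2 * s)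
  ext τ y
  simp [microZoom, microUnzoom, inv_smul_smul₀ hε.ne', inv_mul_cancel_left₀ hpos.ne']

theorem contDiff_microUnzoom (hφ : ContDiff ℝ 2 (fun q : ℝ × EN N => φ q.1 q.2)) :
    ContDiff ℝ 2 (fun q : ℝ × EN N => microUnzoom s ε n k m φ q.1 q.2) := by
  have hdilation : ContDiff ℝ 2 fun q : ℝ × EN N => ((ε ^ (2 * s))⁻¹ * q.1 - n, ε⁻¹ • q.2 - k) := by
    fun_prop
  exact contDiff_const.mul ((hφ.comp hdilation).add contDiff_const)

theorem deriv_microZoom (hε : 0 < ε) (τ : ℝ) (y : EN N) :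
    deriv (fun τ => microZoom s ε n k m U τ y) τ
      = deriv (fun t => U t (ε • (y + k))) (ε ^ (2 * s) * (τ + n)) := by
  have hpos := Real.rpow_pos_of_pos hε (2 * s)
  have hshift := deriv_comp_add_const (fun t => U (ε ^ (2 * s) * t) (ε • (y + k))) n τ
  have hdilate := deriv_comp_mul_left (ε ^ (2 * s)) (fun t => U t (ε • (y + k))) (τ + n)
  simp only [microZoom, deriv_sub_const, deriv_const_mul_field, hshift, hdilate, smul_eq_mul]
  exact inv_mul_cancel_left₀ hpos.ne' _

theorem fderiv_microZoom (τ : ℝ) (y : EN N) :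
    fderiv ℝ (microZoom s ε n k m U τ) y
      = (ε ^ (2 * s))⁻¹ • ε • fderiv ℝ (U (ε ^ (2 * s) * (τ + n))) (ε • (y + k)) := by
  have hshift := fderiv_comp_add_right (𝕜 := ℝ) (x := y)
    (f := fun y => U (ε ^ (2 * s) * (τ + n)) (ε • y)) k
  have hdilate := fderiv_comp_smul (𝕜 := ℝ) (f := U (ε ^ (2 * s) * (τ + n))) (x := y + k) ε
  have hmul := fderiv_const_smul_field (R := ℝ) (ε ^ (2 * s))⁻¹ (𝕜 := ℝ)
    (f := fun y => U (ε ^ (2 * s) * (τ + n)) (ε • (y + k)))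
  rw [← hdilate, ← hshift, ← Pi.smul_apply, ← hmul]
  exact fderiv_sub_const _

theorem levyI1_microZoom (hε : 0 < ε) (τ r : ℝ) (y : EN N) :
    levyI1 N s g (microZoom s ε n k m U τ) r y
      = levyI1 N s g (U (ε ^ (2 * s) * (τ + n))) (ε * r) (ε • (y + k)) := by
  have hpos := Real.rpow_pos_of_pos hε (2 * s)
  set V := U (ε ^ (2 * s) * (τ + n))
  have h := setIntegral_comp_smul_levyKernel (s := s) (g := g) hε {z : EN N | ‖z‖ ≤ r}
    fun Z => V (ε • (y + k) + Z) - V (ε • (y + k)) - fderiv ℝ V (ε • (y + k)) Z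
  rw [smul_setOf_norm_le hε] at h
  rw [levyI1, levyI1, ← mul_right_inj' hpos.ne', ← h, ← integral_const_mul]
  congr with z
  rw [fderiv_microZoom]
  simp only [microZoom, smul_apply, map_smul, smul_eq_mul, add_right_comm y z k, smul_add _ _ z]
  field_simp
  ring

theorem levyI2_microZoom (hε : 0 < ε) (τ r : ℝ) (y : EN N) :
    levyI2 N s g (microZoom s ε n k m U τ) r y
      = levyI2 N s g (U (ε ^ (2 * s) * (τ + n))) (ε * r) (ε • (y + k)) := by
  have hpos := Real.rpow_pos_of_pos hε (2 * s)
  set V := U (ε ^ (2 * s) * (τ + n))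
  have h := setIntegral_comp_smul_levyKernel (s := s) (g := g) hε {z : EN N | r < ‖z‖}
    fun Z => V (ε • (y + k) + Z) - V (ε • (y + k))
  rw [smul_setOf_lt_norm hε] at h
  rw [levyI2, levyI2, ← mul_right_inj' hpos.ne', ← h, ← integral_const_mul]
  congr with z
  simp only [microZoom, add_right_comm y z k, smul_add _ _ z]
  field_simp
  ring

theorem ViscSub.zoom (hε : 0 < ε) (hn : 0 ≤ n) (hU : ViscSub N s g F U) :
    ViscSub N s g (fun τ y v I => F (ε ^ (2 * s) * (τ + n)) (ε • (y + k)) (ε ^ (2 * s) * (v + m)) I)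
      (microZoom s ε n k m U) := by
  intro τ₀ y₀ hτ₀ φ hφ τ r hτ hττ hr hmax
  have hpos : 0 < ε ^ (2 * s) := Real.rpow_pos_of_pos hε _
  set Φ := microUnzoom s ε n k m φ
  have hφΦ : microZoom s ε n k m Φ = φ := microZoom_microUnzoom hε
  have hval : ε ^ (2 * s) * (microZoom s ε n k m U τ₀ y₀ + m)
      = U (ε ^ (2 * s) * (τ₀ + n)) (ε • (y₀ + k)) := by
    rw [microZoom, sub_add_cancel, mul_inv_cancel_left₀ hpos.ne']
  beta_reduce
  rw [← hφΦ, deriv_microZoom hε, levyI1_microZoom hε, levyI2_microZoom hε, hval]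
  refine hU _ _ (by positivity) Φ (contDiff_microUnzoom hφ) (ε ^ (2 * s) * τ) (ε * r)
    (by positivity) (by gcongr; linarith) (by positivity) fun t x ht hx => ?_
  obtain ⟨τ', rfl⟩ : ∃ τ', ε ^ (2 * s) * (τ' + n) = t :=
    ⟨(ε ^ (2 * s))⁻¹ * t - n, by rw [sub_add_cancel, mul_inv_cancel_left₀ hpos.ne']⟩
  obtain ⟨y', rfl⟩ : ∃ y', ε • (y' + k) = x :=
    ⟨ε⁻¹ • x - k, by rw [sub_add_cancel, smul_inv_smul₀ hε.ne']⟩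
  have ht' : τ' ∈ Ioo (τ₀ - τ) (τ₀ + τ) := by
    constructor
    · linarith [lt_of_mul_lt_mul_left (by linarith [ht.1] :
        ε ^ (2 * s) * (τ₀ + n - τ) < ε ^ (2 * s) * (τ' + n)) hpos.le]
    · linarith [lt_of_mul_lt_mul_left (by linarith [ht.2] :
        ε ^ (2 * s) * (τ' + n) < ε ^ (2 * s) * (τ₀ + n + τ)) hpos.le]
  have hy' : y' ∈ ball y₀ r := by
    rw [mem_ball, dist_smul₀, dist_add_right, Real.norm_of_nonneg hε.le] at hx
    exact lt_of_mul_lt_mul_left hx hε.le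
  have h := hmax τ' y' ht' hy'
  rw [← hφΦ] at h
  simp only [microZoom] at h
  refine le_of_mul_le_mul_left (a := (ε ^ (2 * s))⁻¹) ?_ (by positivity)
  linarith

end Zoom

/-! ### Cutoff functions and perturbed maxima -/

section Cutoff

/-- A smooth function with values in `[0,1]`, equal to `1` at the origin and to `0` outside the unit
ball. -/
noncomputable def cutoff (N : ℕ) : EN N → ℝ :=
  (⟨1 / 2, 1, by norm_num, by norm_num⟩ : ContDiffBump (0 : EN N))

variable {N : ℕ}

@[fun_prop]
theorem contDiff_cutoff : ContDiff ℝ 2 (cutoff N) :=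
  ContDiffBump.contDiff _

theorem cutoff_zero : cutoff N 0 = 1 :=
  ContDiffBump.one_of_mem_closedBall _ (by simp)

theorem cutoff_nonneg (x : EN N) : 0 ≤ cutoff N x :=
  ContDiffBump.nonneg _

theorem cutoff_le_one (x : EN N) : cutoff N x ≤ 1 :=
  ContDiffBump.le_one _

theorem cutoff_eq_zero {x : EN N} (hx : 1 ≤ ‖x‖) : cutoff N x = 0 :=
  ContDiffBump.zero_of_le_dist _ (by simpa using hx)

theorem exists_lipschitzWith_cutoff (N : ℕ) : ∃ K, LipschitzWith K (cutoff N) :=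
  ContDiff.lipschitzWith_of_hasCompactSupport (ContDiffBump.hasCompactSupport _) contDiff_cutoff
    two_ne_zero

/-- A Lipschitz constant of `cutoff N`. -/
noncomputable def cutoffLip (N : ℕ) : NNReal :=
  (exists_lipschitzWith_cutoff N).choose

theorem lipschitzWith_cutoff : LipschitzWith (cutoffLip N) (cutoff N) :=
  (exists_lipschitzWith_cutoff N).choose_spec

theorem abs_cutoff_sub_le (x y : EN N) : |cutoff N x - cutoff N y| ≤ cutoffLip N * ‖x - y‖ := by
  rw [← Real.dist_eq, ← dist_eq_norm]
  exact lipschitzWith_cutoff.dist_le_mul x y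

theorem exists_lipschitzWith_smoothTransition : ∃ K, LipschitzWith K Real.smoothTransition := by
  obtain ⟨K, hK⟩ := (Real.smoothTransition.contDiff (n := 1)).contDiffOn.exists_lipschitzOnWith
    one_ne_zero (convex_Icc (0 : ℝ) 1) isCompact_Icc
  have hproj := hK.to_restrict.comp (LipschitzWith.projIcc (zero_le_one' ℝ))
  have heq : (Icc 0 1).domRestrict Real.smoothTransition ∘ projIcc 0 1 zero_le_one
      = Real.smoothTransition := funext fun _ => Real.smoothTransition.projIcc
  exact ⟨K * 1, heq ▸ hproj⟩

/-- A Lipschitz constant of `Real.smoothTransition`. -/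
noncomputable def transitionLip : NNReal :=
  exists_lipschitzWith_smoothTransition.choose

theorem abs_smoothTransition_sub_le (a b : ℝ) :
    |Real.smoothTransition a - Real.smoothTransition b| ≤ transitionLip * |a - b| := by
  rw [← Real.dist_eq, ← Real.dist_eq]
  exact exists_lipschitzWith_smoothTransition.choose_spec.dist_le_mul a b

theorem hasDerivAt_smoothTransition_sub (T t : ℝ) :
    HasDerivAt (fun t => Real.smoothTransition (t - T)) (deriv Real.smoothTransition (t - T)) t :=
  (Real.smoothTransition.contDiff.differentiable one_ne_zero _).hasDerivAt.comp_sub_const t T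

end Cutoff

/-- Adding a small bump `γ θ p` centred at an almost-maximum point `p` makes the supremum of `Ψ`
attained. -/
theorem exists_max_perturbed {X : Type*} [TopologicalSpace X] {K : Set X} {Ψ : X → ℝ}
    (hΨ : ContinuousOn Ψ K) (hb : BddAbove (Ψ '' K)) {θ : X → X → ℝ}
    (hθc : ∀ p, Continuous (θ p)) (hθ1 : ∀ p q, θ p q ≤ 1)
    (hθ : ∀ p, θ p p = 1) {γ : ℝ} (hγ : 0 < γ) {p₁ : X} (hp₁ : p₁ ∈ K)
    (hC : ∀ p ∈ K, ∃ C, IsCompact C ∧ C ⊆ K ∧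
      ∀ q ∈ K, q ∉ C → θ p q = 0 ∨ Ψ q + γ < Ψ p₁) :
    ∃ p ∈ K, ∃ q ∈ K, (∀ q' ∈ K, Ψ q' + γ * θ p q' ≤ Ψ q + γ * θ p q) ∧
      Ψ p₁ ≤ Ψ q + γ * θ p q := by
  have hle : ∀ p ∈ K, Ψ p ≤ sSup (Ψ '' K) := fun p hp => le_csSup hb ⟨p, hp, rfl⟩
  obtain ⟨p, hp, hp₁p, hsup⟩ : ∃ p ∈ K, Ψ p₁ ≤ Ψ p ∧ sSup (Ψ '' K) ≤ Ψ p + γ / 2 := by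
    obtain ⟨_, ⟨p, hp, rfl⟩, h⟩ := exists_lt_of_lt_csSup (⟨_, p₁, hp₁, rfl⟩ : (Ψ '' K).Nonempty)
      (show sSup (Ψ '' K) - γ / 2 < sSup (Ψ '' K) by linarith)
    rcases le_total (Ψ p₁) (Ψ p) with h₁ | h₁
    · exact ⟨p, hp, h₁, by linarith⟩
    · exact ⟨p₁, hp₁, le_rfl, by linarith⟩
  obtain ⟨C, hCc, hCK, hCo⟩ := hC p hp
  have hpC : p ∈ C := by
    by_contra h
    rcases hCo p hp h with h | h
    · exact one_ne_zero ((hθ p).symm.trans h)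
    · linarith
  obtain ⟨q, hq, hmax⟩ := hCc.exists_isMaxOn ⟨p, hpC⟩
    ((hΨ.mono hCK).add ((hθc p).continuousOn.const_mul γ))
  have hpq : Ψ p + γ ≤ Ψ q + γ * θ p q := by simpa [hθ] using hmax hpC
  refine ⟨p, hp, q, hCK hq, fun q' hq' => ?_, by linarith⟩
  by_cases h : q' ∈ C
  · exact hmax h
  · rcases hCo q' hq' h with h | h
    · rw [h]; linarith [hle q' hq']
    · nlinarith [hθ1 p q']

/-! ### A linear-in-time barrier -/

section Barrier

variable {N : ℕ} {s : ℝ} {g : EN N → ℝ} {u : ℝ → EN N → ℝ}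

/-- Continuity on `[0,∞) × ℝ^N` and boundedness on `[0,T] × ℝ^N` for every `T`. -/
structure IsContLocBdd (N : ℕ) (u : ℝ → EN N → ℝ) : Prop where
  continuousOn : ContinuousOn (fun q : ℝ × EN N => u q.1 q.2) (Ici 0 ×ˢ univ)
  exists_abs_le : ∀ T, ∃ M, ∀ t ∈ Icc (0 : ℝ) T, ∀ x, |u t x| ≤ M

theorem IsContLocBdd.neg (h : IsContLocBdd N u) : IsContLocBdd N (fun t x => -u t x) :=
  ⟨h.continuousOn.neg, fun T => by simpa using h.exists_abs_le T⟩

theorem IsContLocBdd.slice (h : IsContLocBdd N u) {t : ℝ} (ht : 0 ≤ t) : IsContBdd (u t) where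
  continuous := continuousOn_univ.1 <| h.continuousOn.comp (f := fun x : EN N => (t, x))
    (by fun_prop) fun _ _ => ⟨ht, trivial⟩
  exists_abs_le := (h.exists_abs_le t).imp fun _ hM => hM t ⟨ht, le_rfl⟩

theorem IsContLocBdd.continuousOn_Icc_prod (h : IsContLocBdd N u) (T : ℝ) (A : Set (EN N)) :
    ContinuousOn (fun q : ℝ × EN N => u q.1 q.2) (Icc 0 T ×ˢ A) :=
  h.continuousOn.mono (prod_mono Icc_subset_Ici_self (subset_univ _))

theorem exists_touching_below (hu : IsContLocBdd N u) {ψ : ℝ → EN N → ℝ}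
    (hψ : Continuous fun q : ℝ × EN N => ψ q.1 q.2) {T M : ℝ}
    (hM : ∀ t ∈ Icc 0 T, ∀ x, ψ t x ≤ M) (h₀ : ∀ x, ψ 0 x ≤ u 0 x) (hT : ∀ x, ψ T x ≤ u T x)
    {t₁ : ℝ} {x₁ : EN N} (ht₁ : t₁ ∈ Icc 0 T) {γ : ℝ} (hγ : 0 < γ)
    (hγlt : γ < ψ t₁ x₁ - u t₁ x₁) :
    ∃ p x₀ : EN N, ∃ t₀ ∈ Ioo 0 T, ∀ t ∈ Icc 0 T, ∀ x,
      u t₀ x₀ - (ψ t₀ x₀ + γ * cutoff N (x₀ - p)) ≤ u t x - (ψ t x + γ * cutoff N (x - p)) := by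
  obtain ⟨M', hM'⟩ := hu.exists_abs_le T
  have hχ : Continuous (cutoff N) := contDiff_cutoff.continuous
  obtain ⟨p, -, ⟨t₀, x₀⟩, ⟨ht₀, -⟩, hmax, hge⟩ := exists_max_perturbed
    (Ψ := fun q : ℝ × EN N => ψ q.1 q.2 - u q.1 q.2) (K := Icc 0 T ×ˢ univ)
    (θ := fun p q => cutoff N (q.2 - p.2)) (p₁ := (t₁, x₁))
    (hψ.continuousOn.sub (hu.continuousOn_Icc_prod T univ))
    ⟨M + M', by
      rintro _ ⟨⟨t, x⟩, ⟨ht, -⟩, rfl⟩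
      linarith [hM t ht x, (abs_le.1 (hM' t ht x)).1]⟩
    (fun p => by fun_prop) (fun p q => cutoff_le_one _) (fun p => by simp [cutoff_zero]) hγ
    ⟨ht₁, trivial⟩ (by
      rintro ⟨t, x⟩ -
      refine ⟨Icc 0 T ×ˢ closedBall x 1, isCompact_Icc.prod (isCompact_closedBall _ _),
        prod_mono le_rfl (subset_univ _), fun ⟨t', x'⟩ ⟨ht', _⟩ hout => Or.inl ?_⟩
      refine cutoff_eq_zero (le_of_not_ge fun hle => hout ⟨ht', ?_⟩)
      rwa [mem_closedBall, dist_eq_norm])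
  have hpos : ψ t₀ x₀ - u t₀ x₀ > 0 := by
    have := mul_le_mul_of_nonneg_left (cutoff_le_one (x₀ - p.2)) hγ.le
    dsimp only at hge
    linarith
  have hne₀ : (0 : ℝ) ≠ t₀ := by rintro rfl; linarith [h₀ x₀]
  have hneT : t₀ ≠ T := by rintro rfl; linarith [hT x₀]
  refine ⟨p.2, x₀, t₀, ⟨ht₀.1.lt_of_ne hne₀, ht₀.2.lt_of_ne hneT⟩, fun t ht x => ?_⟩
  have := hmax (t, x) ⟨ht, trivial⟩
  dsimp only at this
  linarith

theorem ViscSup.le_deriv_of_touching (hs : s ∈ Ioo (0 : ℝ) (1 / 2)) (hg : IsAngularDensity g)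
    {F : ℝ → EN N → ℝ → ℝ → ℝ} {C : ℝ} (hF : ∀ t x v I, I - C ≤ F t x v I)
    (hu : ViscSup N s g F u) (hreg : IsContLocBdd N u) {T t₀ : ℝ} {x₀ : EN N} (ht₀ : t₀ ∈ Ioo 0 T)
    {φ : ℝ → EN N → ℝ} (hφ : ContDiff ℝ 2 fun q : ℝ × EN N => φ q.1 q.2)
    (hmin : ∀ t ∈ Icc 0 T, ∀ x, u t₀ x₀ - φ t₀ x₀ ≤ u t x - φ t x)
    {Λ : NNReal} (hΛ : LipschitzWith Λ (φ t₀)) {B : ℝ}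
    (hB : ∀ x, φ t₀ x₀ - B ≤ φ t₀ x) {D : ℝ} (hD : HasDerivAt (fun t => φ t x₀) D t₀) :
    -(C + 2 * Λ * nearMoment s g 1 + B * tailMass s g 1) ≤ D := by
  have hnear : |levyI1 N s g (φ t₀) 1 x₀| ≤ 2 * Λ * nearMoment s g 1 :=
    abs_levyI1_le hs hg fun z _ => by
      have hincr := hΛ.dist_le_mul (x₀ + z) x₀
      have hlin := (fderiv ℝ (φ t₀) x₀).le_of_opNorm_le (norm_fderiv_le_of_lipschitz ℝ hΛ) z
      rw [Real.dist_eq, dist_eq_norm, add_sub_cancel_left] at hincr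
      have := abs_sub (φ t₀ (x₀ + z) - φ t₀ x₀) (fderiv ℝ (φ t₀) x₀ z)
      rw [Real.norm_eq_abs] at hlin
      linarith
  have hfar : -levyI2 N s g (u t₀) 1 x₀ ≤ B * tailMass s g 1 := by
    have := levyI2_le_of_increment_le (y := x₀) hs.1 hg (hreg.neg.slice ht₀.1.le) isContBdd_zero
      one_pos
      fun z _ => show -u t₀ (x₀ + z) - -u t₀ x₀ ≤ (0 : ℝ) - 0 + B by
        linarith [hmin t₀ (Ioo_subset_Icc_self ht₀) (x₀ + z), hB (x₀ + z)]
    have hzero : levyI2 N s g (fun _ => 0) 1 x₀ = 0 := by simp [levyI2]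
    rwa [levyI2_neg, hzero, zero_add] at this
  have htest := hu.test ht₀.1 ht₀.2 hφ one_pos (fun t ht x _ => hmin t ht x) hD
  have := hF t₀ x₀ (u t₀ x₀) (levyI1 N s g (φ t₀) 1 x₀ + levyI2 N s g (u t₀) 1 x₀)
  linarith [(abs_le.1 hnear).1]

/-- The lower barrier `u₀ - k t`, bent downwards by the amount `A` after time `t₁`. -/
noncomputable def bentBarrier (u₀ : EN N → ℝ) (k A t₁ : ℝ) : ℝ → EN N → ℝ :=
  fun t x => u₀ x - k * t - A * Real.smoothTransition (t - t₁)

variable {u₀ : EN N → ℝ} {k A t₁ M₀ : ℝ} {Λ : NNReal}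

theorem contDiff_bentBarrier (hu₀ : ContDiff ℝ 2 u₀) :
    ContDiff ℝ 2 fun q : ℝ × EN N => bentBarrier u₀ k A t₁ q.1 q.2 := by
  have : ContDiff ℝ 2 Real.smoothTransition := Real.smoothTransition.contDiff
  unfold bentBarrier
  fun_prop

theorem hasDerivAt_bentBarrier (t : ℝ) (x : EN N) :
    HasDerivAt (fun t => bentBarrier u₀ k A t₁ t x)
      (-k - A * deriv Real.smoothTransition (t - t₁)) t := by
  have := (((hasDerivAt_id' t).const_mul k).const_sub (u₀ x)).sub
    ((hasDerivAt_smoothTransition_sub t₁ t).const_mul A)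
  rwa [mul_one] at this

theorem lipschitzWith_bentBarrier_add_cutoff (hΛ : LipschitzWith Λ u₀) (γ : NNReal) (t : ℝ)
    (p : EN N) :
    LipschitzWith (Λ + γ * cutoffLip N)
      fun x => bentBarrier u₀ k A t₁ t x + γ * cutoff N (x - p) :=
  .of_dist_le_mul fun x y => by
    have hxy := hΛ.dist_le_mul x y
    have hχ := mul_le_mul_of_nonneg_left (abs_cutoff_sub_le (x - p) (y - p)) γ.coe_nonneg
    rw [sub_sub_sub_cancel_right] at hχ
    rw [Real.dist_eq, dist_eq_norm] at *
    rw [show bentBarrier u₀ k A t₁ t x + γ * cutoff N (x - p)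
        - (bentBarrier u₀ k A t₁ t y + γ * cutoff N (y - p))
      = u₀ x - u₀ y + γ * (cutoff N (x - p) - cutoff N (y - p)) by simp only [bentBarrier]; ring]
    refine (abs_add_le _ _).trans ?_
    rw [abs_mul, abs_of_nonneg γ.coe_nonneg]
    push_cast
    linarith

theorem ViscSup.slope_le_of_bentBarrier (hs : s ∈ Ioo (0 : ℝ) (1 / 2)) (hg : IsAngularDensity g)
    {F : ℝ → EN N → ℝ → ℝ → ℝ} {C : ℝ} (hF : ∀ t x v I, I - C ≤ F t x v I)
    (hu : ViscSup N s g F u) (hreg : IsContLocBdd N u) (hu₀ : ContDiff ℝ 2 u₀)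
    (hM₀ : ∀ x, |u₀ x| ≤ M₀) (hΛ : LipschitzWith Λ u₀) (hA : 0 ≤ A) {γ : NNReal} {p x₀ : EN N}
    {T t₀ : ℝ} (ht₀ : t₀ ∈ Ioo 0 T)
    (hmin : ∀ t ∈ Icc 0 T, ∀ x,
      u t₀ x₀ - (bentBarrier u₀ k A t₁ t₀ x₀ + γ * cutoff N (x₀ - p))
        ≤ u t x - (bentBarrier u₀ k A t₁ t x + γ * cutoff N (x - p))) :
    k ≤ C + 2 * (Λ + γ * cutoffLip N) * nearMoment s g 1 + (2 * M₀ + γ) * tailMass s g 1 := by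
  have hφ : ContDiff ℝ 2 fun q : ℝ × EN N =>
      bentBarrier u₀ k A t₁ q.1 q.2 + γ * cutoff N (q.2 - p) := by
    have := contDiff_bentBarrier (k := k) (A := A) (t₁ := t₁) hu₀
    fun_prop
  have hslope := hu.le_deriv_of_touching hs hg hF hreg ht₀
    (φ := fun t x => bentBarrier u₀ k A t₁ t x + γ * cutoff N (x - p)) hφ hmin
    (lipschitzWith_bentBarrier_add_cutoff hΛ γ t₀ p) (B := 2 * M₀ + γ)
    (fun x => by
      have := mul_nonneg γ.coe_nonneg (cutoff_nonneg (x - p))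
      have := mul_le_mul_of_nonneg_left (cutoff_le_one (x₀ - p)) γ.coe_nonneg
      simp only [bentBarrier]
      linarith [(abs_le.1 (hM₀ x)).1, (abs_le.1 (hM₀ x₀)).2])
    ((hasDerivAt_bentBarrier t₀ x₀).add_const _)
  have := mul_nonneg hA (Real.smoothTransition.monotone.deriv_nonneg (x := t₀ - t₁))
  push_cast at hslope
  linarith

theorem exists_bentBarrier_touching (hreg : IsContLocBdd N u) (hu₀ : ContDiff ℝ 2 u₀)
    (hM₀ : ∀ x, |u₀ x| ≤ M₀) (hinit : ∀ x, u₀ x ≤ u 0 x) (ht₁ : 0 ≤ t₁) {x₁ : EN N} {γ : ℝ}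
    (hγ : 0 < γ) (hγlt : γ < u₀ x₁ - k * t₁ - u t₁ x₁) :
    ∃ A, 0 ≤ A ∧ ∃ p x₀ : EN N, ∃ t₀ ∈ Ioo 0 (t₁ + 1), ∀ t ∈ Icc 0 (t₁ + 1), ∀ x,
      u t₀ x₀ - (bentBarrier u₀ k A t₁ t₀ x₀ + γ * cutoff N (x₀ - p))
        ≤ u t x - (bentBarrier u₀ k A t₁ t x + γ * cutoff N (x - p)) := by
  obtain ⟨M, hM⟩ := hreg.exists_abs_le (t₁ + 1)
  have hkt : ∀ t ∈ Icc 0 (t₁ + 1), -(k * t) ≤ |k| * (t₁ + 1) := fun t ht => by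
    rw [← neg_mul]
    exact mul_le_mul (neg_le_abs k) ht.2 ht.1 (abs_nonneg k)
  have hA : 0 ≤ M₀ + M + |k| * (t₁ + 1) := by
    have := (abs_nonneg _).trans (hM₀ x₁)
    have := (abs_nonneg _).trans (hM t₁ ⟨ht₁, by linarith⟩ x₁)
    positivity
  refine ⟨_, hA, exists_touching_below hreg (contDiff_bentBarrier hu₀).continuous
    (M := M₀ + |k| * (t₁ + 1)) (fun t ht x => ?_) (fun x => ?_) (fun x => ?_)
    (t₁ := t₁) (x₁ := x₁) ⟨ht₁, by linarith⟩ hγ ?_⟩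
  · have := mul_nonneg hA (Real.smoothTransition.nonneg (t - t₁))
    rw [bentBarrier]
    linarith [hkt t ht, (abs_le.1 (hM₀ x)).2]
  · simpa [bentBarrier, Real.smoothTransition.zero_of_nonpos (neg_nonpos.2 ht₁)] using hinit x
  · have := (abs_le.1 (hM (t₁ + 1) ⟨by linarith, le_rfl⟩ x)).1
    rw [bentBarrier, add_sub_cancel_left, Real.smoothTransition.one]
    linarith [hkt (t₁ + 1) ⟨by linarith, le_rfl⟩, (abs_le.1 (hM₀ x)).2]
  · rwa [bentBarrier, sub_self, Real.smoothTransition.zero, mul_zero, sub_zero]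

theorem ViscSup.ge_linear_barrier (hs : s ∈ Ioo (0 : ℝ) (1 / 2)) (hg : IsAngularDensity g)
    {F : ℝ → EN N → ℝ → ℝ → ℝ} {C : ℝ} (hF : ∀ t x v I, I - C ≤ F t x v I)
    (hu : ViscSup N s g F u) (hreg : IsContLocBdd N u) (hu₀ : ContDiff ℝ 2 u₀)
    (hM₀ : ∀ x, |u₀ x| ≤ M₀) (hΛ : LipschitzWith Λ u₀) (hinit : ∀ x, u₀ x ≤ u 0 x)
    (ht₁ : 0 ≤ t₁) (x₁ : EN N) :
    u₀ x₁ - (C + 2 * Λ * nearMoment s g 1 + 2 * M₀ * tailMass s g 1) * t₁ ≤ u t₁ x₁ := by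
  by_contra! hlt
  set k₀ := C + 2 * Λ * nearMoment s g 1 + 2 * M₀ * tailMass s g 1
  set d := 2 * cutoffLip N * nearMoment s g 1 + tailMass s g 1
  obtain ⟨γ, hγ, hγlt⟩ := exists_pos_mul_lt (sub_pos.2 hlt) ((d + 1) * t₁ + 1)
  lift γ to NNReal using hγ.le
  obtain ⟨A, hA, p, x₀, t₀, ht₀, hmin⟩ := exists_bentBarrier_touching (k := k₀ + γ * (d + 1))
    (x₁ := x₁) hreg hu₀ hM₀ hinit ht₁ hγ (by linarith)
  have := hu.slope_le_of_bentBarrier hs hg hF hreg hu₀ hM₀ hΛ hA ht₀ hmin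
  linarith

end Barrier

/-! ### Doubling of variables and comparison for the cell problem -/

/-- If `G ≤ 0` on the diagonal and `G` vanishes somewhere on it, then the penalized functions
`G - n d` have maximum points converging to a diagonal zero of `G`. -/
theorem exists_max_sub_penalty {X : Type*} [TopologicalSpace X] [FirstCountableTopology X]
    {Q : Set X} (hQ : IsCompact Q) {G d : X × X → ℝ} (hG : ContinuousOn G (Q ×ˢ Q))
    (hd : Continuous d) (hd0 : ∀ p, 0 ≤ d p) (hdiag : ∀ q, d (q, q) = 0)
    (hdeq : ∀ q q', d (q, q') = 0 → q = q')
    (hle : ∀ q ∈ Q, G (q, q) ≤ 0) {q₁ : X} (hq₁ : q₁ ∈ Q) (hG₁ : G (q₁, q₁) = 0) :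
    ∃ q₀ ∈ Q, G (q₀, q₀) = 0 ∧ ∀ P : X × X → Prop, (∀ᶠ p in 𝓝[Q ×ˢ Q] (q₀, q₀), P p) →
      ∃ n : ℝ, 0 ≤ n ∧ ∃ p ∈ Q ×ˢ Q, P p ∧
        (∀ p' ∈ Q ×ˢ Q, G p' - n * d p' ≤ G p - n * d p) ∧ 0 ≤ G p - n * d p := by
  have hc : IsCompact (Q ×ˢ Q) := hQ.prod hQ
  have hmax : ∀ n : ℕ, ∃ p ∈ Q ×ˢ Q, ∀ p' ∈ Q ×ˢ Q, G p' - n * d p' ≤ G p - n * d p := fun n =>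
    hc.exists_isMaxOn ⟨(q₁, q₁), hq₁, hq₁⟩ (hG.sub (hd.continuousOn.const_mul (n : ℝ)))
  choose p hp hpmax using hmax
  have hpos : ∀ n, 0 ≤ G (p n) - n * d (p n) := fun n => by
    simpa [hG₁, hdiag] using hpmax n (q₁, q₁) ⟨hq₁, hq₁⟩
  obtain ⟨a, ha, ψ, hψ, hlim⟩ := hc.tendsto_subseq hp
  have hlimw : Tendsto (p ∘ ψ) atTop (𝓝[Q ×ˢ Q] a) :=
    tendsto_nhdsWithin_iff.2 ⟨hlim, Eventually.of_forall fun n => hp _⟩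
  have hGlim : Tendsto (fun n => G (p (ψ n))) atTop (𝓝 (G a)) := (hG a ha).tendsto.comp hlimw
  have hdlim : Tendsto (fun n => d (p (ψ n))) atTop (𝓝 (d a)) := (hd.tendsto a).comp hlim
  have hψt : Tendsto (fun n => ((ψ n : ℕ) : ℝ)) atTop atTop :=
    tendsto_natCast_atTop_atTop.comp hψ.tendsto_atTop
  have hda : d a = 0 := by
    by_contra hne
    have hpen : Tendsto (fun n => (ψ n : ℝ) * d (p (ψ n))) atTop atTop :=
      hψt.atTop_mul_pos ((hd0 a).lt_of_ne' hne) hdlim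
    exact not_tendsto_atTop_of_tendsto_nhds hGlim
      (tendsto_atTop_mono (fun n => by linarith [hpos (ψ n)]) hpen)
  obtain ⟨q₀, q₀'⟩ := a
  obtain rfl := hdeq q₀ q₀' hda
  have hGa : 0 ≤ G (q₀, q₀) := ge_of_tendsto' hGlim fun n => by
    have := mul_nonneg (Nat.cast_nonneg (α := ℝ) (ψ n)) (hd0 (p (ψ n)))
    linarith [hpos (ψ n)]
  refine ⟨q₀, ha.1, le_antisymm (hle q₀ ha.1) hGa, fun P hP => ?_⟩
  obtain ⟨n, hn⟩ := (hlimw.eventually hP).exists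
  exact ⟨ψ n, Nat.cast_nonneg _, p (ψ n), hp _, hn, hpmax _, hpos _⟩

section Cell

variable {N : ℕ} {s : ℝ} {g : EN N → ℝ}

theorem differentiableAt_slice {φ : ℝ → EN N → ℝ}
    (hφ : ContDiff ℝ 2 fun q : ℝ × EN N => φ q.1 q.2) (t : ℝ) (x : EN N) :
    DifferentiableAt ℝ (φ t) x :=
  (hφ.comp (f := fun x : EN N => (t, x)) (by fun_prop)).differentiable two_ne_zero x

theorem ViscSub.eventually_test (hs : s ∈ Ioo (0 : ℝ) (1 / 2)) (hg : IsAngularDensity g)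
    {G : ℝ → EN N → ℝ → ℝ} {u : ℝ → EN N → ℝ}
    (hu : ViscSub N s g (fun t x v I => I + G t x v) u) {T t₀ : ℝ} {x₀ : EN N}
    (ht₀ : t₀ ∈ Ioo 0 T) {φ : ℝ → EN N → ℝ} (hφ : ContDiff ℝ 2 fun q : ℝ × EN N => φ q.1 q.2)
    {r : ℝ} (hr : 0 < r)
    (hmax : ∀ t ∈ Icc 0 T, ∀ x ∈ ball x₀ r, u t x - φ t x ≤ u t₀ x₀ - φ t₀ x₀)
    {D : ℝ} (hD : HasDerivAt (fun t => φ t x₀) D t₀) {e : ℝ} (he : 0 < e) :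
    ∀ᶠ ρ in 𝓝[>] 0, D ≤ levyI2 N s g (u t₀) ρ x₀ + G t₀ x₀ (u t₀ x₀) + e := by
  have hnear := tendsto_levyI1_zero hs hg (differentiableAt_slice hφ t₀ x₀)
  filter_upwards [hnear.eventually_lt_const he, Ioo_mem_nhdsGT hr] with ρ hI hρ
  have := hu.test ht₀.1 ht₀.2 hφ hρ.1
    (fun t ht x hx => hmax t ht x (ball_subset_ball hρ.2.le hx)) hD
  linarith

theorem ViscSup.eventually_test (hs : s ∈ Ioo (0 : ℝ) (1 / 2)) (hg : IsAngularDensity g)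
    {G : ℝ → EN N → ℝ → ℝ} {u : ℝ → EN N → ℝ}
    (hu : ViscSup N s g (fun t x v I => I + G t x v) u) {T t₀ : ℝ} {x₀ : EN N}
    (ht₀ : t₀ ∈ Ioo 0 T) {φ : ℝ → EN N → ℝ} (hφ : ContDiff ℝ 2 fun q : ℝ × EN N => φ q.1 q.2)
    {r : ℝ} (hr : 0 < r)
    (hmin : ∀ t ∈ Icc 0 T, ∀ x ∈ ball x₀ r, u t₀ x₀ - φ t₀ x₀ ≤ u t x - φ t x)
    {D : ℝ} (hD : HasDerivAt (fun t => φ t x₀) D t₀) {e : ℝ} (he : 0 < e) :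
    ∀ᶠ ρ in 𝓝[>] 0, levyI2 N s g (u t₀) ρ x₀ + G t₀ x₀ (u t₀ x₀) ≤ D + e := by
  have hnear := tendsto_levyI1_zero hs hg (differentiableAt_slice hφ t₀ x₀)
  filter_upwards [hnear.eventually_const_lt (neg_lt_zero.2 he), Ioo_mem_nhdsGT hr] with ρ hI hρ
  have := hu.test ht₀.1 ht₀.2 hφ hρ.1
    (fun t ht x hx => hmin t ht x (ball_subset_ball hρ.2.le hx)) hD
  linarith

/-- The squared distance in space-time used to penalize the doubling of variables. -/
noncomputable def sqDist (p q : ℝ × EN N) : ℝ :=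
  (p.1 - q.1) ^ 2 + ‖p.2 - q.2‖ ^ 2

theorem sqDist_nonneg (p q : ℝ × EN N) : 0 ≤ sqDist p q := by
  unfold sqDist
  positivity

theorem sqDist_self (p : ℝ × EN N) : sqDist p p = 0 := by
  simp [sqDist]

theorem sqDist_comm (p q : ℝ × EN N) : sqDist p q = sqDist q p := by
  rw [sqDist, sqDist, norm_sub_rev, ← neg_sub, neg_sq]

theorem sqDist_add_right (t t' : ℝ) (x x' z : EN N) :
    sqDist (t, x + z) (t', x' + z) = sqDist (t, x) (t', x') := by
  simp only [sqDist, add_sub_add_right_eq_sub]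

theorem eq_of_sqDist_eq_zero {p q : ℝ × EN N} (h : sqDist p q = 0) : p = q := by
  obtain ⟨ht, hx⟩ := (add_eq_zero_iff_of_nonneg (sq_nonneg _) (sq_nonneg _)).1 h
  exact Prod.ext (sub_eq_zero.1 (sq_eq_zero_iff.1 ht))
    (sub_eq_zero.1 (norm_eq_zero.1 (sq_eq_zero_iff.1 hx)))

theorem contDiff_sqDist (q : ℝ × EN N) : ContDiff ℝ 2 fun p : ℝ × EN N => sqDist p q := by
  have : ContDiff ℝ 2 fun p : ℝ × EN N => ‖p.2 - q.2‖ ^ 2 := ContDiff.norm_sq ℝ (by fun_prop)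
  unfold sqDist
  fun_prop

theorem continuous_sqDist : Continuous fun p : (ℝ × EN N) × (ℝ × EN N) => sqDist p.1 p.2 := by
  unfold sqDist
  fun_prop

theorem hasDerivAt_sqDist (t : ℝ) (x : EN N) (q : ℝ × EN N) :
    HasDerivAt (fun t => sqDist (t, x) q) (2 * (t - q.1)) t := by
  simpa [sqDist] using (((hasDerivAt_id' t).sub_const q.1).pow 2).add_const (‖x - q.2‖ ^ 2)

/-- `v - w - b - n·sqDist` attains its maximum over two copies of the cylinder
`[0,T] × closedBall y₀ (2r)` at a pair of points `p`, `q` of the interior `(0,T) × ball y₀ r`. -/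
structure IsDoubledContact (v w b : ℝ → EN N → ℝ) (n T : ℝ) (y₀ : EN N) (r : ℝ)
    (p q : ℝ × EN N) : Prop where
  fst_mem : p ∈ Ioo 0 T ×ˢ ball y₀ r
  snd_mem : q ∈ Ioo 0 T ×ˢ ball y₀ r
  isMax : ∀ p' ∈ Icc 0 T ×ˢ closedBall y₀ (2 * r), ∀ q' ∈ Icc 0 T ×ˢ closedBall y₀ (2 * r),
    v p'.1 p'.2 - w q'.1 q'.2 - b p'.1 p'.2 - n * sqDist p' q'
      ≤ v p.1 p.2 - w q.1 q.2 - b p.1 p.2 - n * sqDist p q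

theorem add_mem_closedBall_two_mul {y₀ y z : EN N} {r : ℝ} (hy : y ∈ ball y₀ r) (hz : ‖z‖ ≤ r) :
    y + z ∈ closedBall y₀ (2 * r) := by
  rw [mem_ball_iff_norm] at hy
  rw [mem_closedBall_iff_norm, add_sub_right_comm]
  linarith [norm_add_le (y - y₀) z]

theorem ball_subset_closedBall_two_mul {y₀ y : EN N} {r : ℝ} (hy : y ∈ ball y₀ r) :
    ball y r ⊆ closedBall y₀ (2 * r) := fun x hx => by
  simpa using add_mem_closedBall_two_mul hy (mem_ball_iff_norm.1 hx).le

namespace IsDoubledContact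

variable {v w b : ℝ → EN N → ℝ} {n T r : ℝ} {y₀ : EN N} {p q : ℝ × EN N}

theorem mem_Icc_prod {a : ℝ × EN N} (ha : a ∈ Ioo 0 T ×ˢ ball y₀ r) :
    a ∈ Icc 0 T ×ˢ closedBall y₀ (2 * r) :=
  ⟨Ioo_subset_Icc_self ha.1, ball_subset_closedBall_two_mul ha.2
    (mem_ball_self (dist_nonneg.trans_lt ha.2))⟩

theorem eventually_subsolution_test (h : IsDoubledContact v w b n T y₀ r p q)
    (hs : s ∈ Ioo (0 : ℝ) (1 / 2)) (hg : IsAngularDensity g) {G : ℝ → EN N → ℝ → ℝ}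
    (hv : ViscSub N s g (fun t x v I => I + G t x v) v)
    (hb : ContDiff ℝ 2 fun a : ℝ × EN N => b a.1 a.2) {D : ℝ}
    (hD : HasDerivAt (fun t => b t p.2) D p.1) {e : ℝ} (he : 0 < e) :
    ∀ᶠ ρ in 𝓝[>] 0,
      D + n * (2 * (p.1 - q.1)) ≤ levyI2 N s g (v p.1) ρ p.2 + G p.1 p.2 (v p.1 p.2) + e := by
  have : ContDiff ℝ 2 fun a : ℝ × EN N => sqDist a q := contDiff_sqDist q
  refine hv.eventually_test hs hg h.fst_mem.1 (φ := fun t x => b t x + n * sqDist (t, x) q)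
    (by fun_prop) (dist_nonneg.trans_lt h.fst_mem.2) (fun t ht x hx => ?_)
    (hD.add ((hasDerivAt_sqDist p.1 p.2 q).const_mul n)) he
  have := h.isMax (t, x) ⟨ht, ball_subset_closedBall_two_mul h.fst_mem.2 hx⟩ q
    (mem_Icc_prod h.snd_mem)
  dsimp only [Prod.mk.eta] at this ⊢
  linarith

theorem eventually_supersolution_test (h : IsDoubledContact v w b n T y₀ r p q)
    (hs : s ∈ Ioo (0 : ℝ) (1 / 2)) (hg : IsAngularDensity g) {G : ℝ → EN N → ℝ → ℝ}
    (hw : ViscSup N s g (fun t x v I => I + G t x v) w) {e : ℝ} (he : 0 < e) :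
    ∀ᶠ ρ in 𝓝[>] 0,
      levyI2 N s g (w q.1) ρ q.2 + G q.1 q.2 (w q.1 q.2) ≤ n * (2 * (p.1 - q.1)) + e := by
  have : ContDiff ℝ 2 fun a : ℝ × EN N => sqDist a p := contDiff_sqDist p
  refine hw.eventually_test hs hg h.snd_mem.1 (φ := fun t x => -(n * sqDist (t, x) p))
    (by fun_prop) (dist_nonneg.trans_lt h.snd_mem.2) (fun t ht x hx => ?_)
    (((hasDerivAt_sqDist q.1 q.2 p).const_mul n).neg.congr_deriv (by ring)) he
  have := h.isMax p (mem_Icc_prod h.fst_mem) (t, x)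
    ⟨ht, ball_subset_closedBall_two_mul h.snd_mem.2 hx⟩
  rw [sqDist_comm p q, sqDist_comm p (t, x)] at this
  dsimp only [Prod.mk.eta] at this ⊢
  linarith

/-- Moving both points by the same vector leaves the penalization unchanged. -/
theorem increment_le (h : IsDoubledContact v w b n T y₀ r p q) {z : EN N} (hz : ‖z‖ ≤ r) :
    v p.1 (p.2 + z) - v p.1 p.2
      ≤ w q.1 (q.2 + z) - w q.1 q.2 + (b p.1 (p.2 + z) - b p.1 p.2) := by
  have := h.isMax (p.1, p.2 + z)
    ⟨Ioo_subset_Icc_self h.fst_mem.1, add_mem_closedBall_two_mul h.fst_mem.2 hz⟩ (q.1, q.2 + z)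
    ⟨Ioo_subset_Icc_self h.snd_mem.1, add_mem_closedBall_two_mul h.snd_mem.2 hz⟩
  rw [sqDist_add_right] at this
  dsimp only [Prod.mk.eta] at this
  linarith

end IsDoubledContact

/-- The right-hand side of the cell problem with `p = 0`, forcing `L` and `W' = f`. -/
def cellRHS (f : ℝ → ℝ) (σ : ℝ → EN N → ℝ) (L : ℝ) : ℝ → EN N → ℝ → ℝ → ℝ :=
  fun τ y v I => I + (L - f v + σ τ y)

/-- The exponential growth `K b ≤ ∂ₜ b` of the weight absorbs the Lipschitz reaction term. -/
theorem IsDoubledContact.forcing_le (hs : s ∈ Ioo (0 : ℝ) (1 / 2)) (hg : IsAngularDensity g)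
    {f : ℝ → ℝ} {K : NNReal} (hf : LipschitzWith K f) {σ v w b : ℝ → EN N → ℝ} {L : ℝ}
    (hv : ViscSub N s g (cellRHS f σ 0) v) (hvr : IsContLocBdd N v)
    (hw : ViscSup N s g (cellRHS f σ L) w) (hwr : IsContLocBdd N w)
    (hb : ContDiff ℝ 2 fun a : ℝ × EN N => b a.1 a.2) {n T r : ℝ} {y₀ : EN N} {p q : ℝ × EN N}
    (h : IsDoubledContact v w b n T y₀ r p q) {D B : ℝ}
    (hD : HasDerivAt (fun t => b t p.2) D p.1) (hKb : K * b p.1 p.2 ≤ D) (hB : 0 ≤ B)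
    (hbB : ∀ z, b p.1 (p.2 + z) ≤ b p.1 p.2 + B * ‖z‖) (hvw : w q.1 q.2 ≤ v p.1 p.2)
    {e : ℝ} (he : 0 < e) :
    L ≤ levyI2 N s g (v p.1) r p.2 - levyI2 N s g (w q.1) r q.2 + B * nearMoment s g r
      + K * (v p.1 p.2 - w q.1 q.2 - b p.1 p.2) + |σ p.1 p.2 - σ q.1 q.2| + 2 * e := by
  have hr : 0 < r := dist_nonneg.trans_lt h.fst_mem.2
  obtain ⟨ρ, hsub, hsup, hρ⟩ := ((h.eventually_subsolution_test hs hg hv hb hD he).and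
    ((h.eventually_supersolution_test hs hg hw he).and (Ioc_mem_nhdsGT hr))).exists
  have hlevy := levyI2_sub_le_of_increment_le (a := 0) hs hg (hvr.slice h.fst_mem.1.1.le)
    (hwr.slice h.snd_mem.1.1.le) hρ.1 hρ.2 hB fun z _ hz => by
      linarith [h.increment_le hz, hbB z]
  have hreaction : f (w q.1 q.2) - f (v p.1 p.2) ≤ K * (v p.1 p.2 - w q.1 q.2) := by
    have := hf.dist_le_mul (w q.1 q.2) (v p.1 p.2)
    rw [Real.dist_eq, dist_comm, Real.dist_eq, abs_of_nonneg (sub_nonneg.2 hvw)] at this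
    exact (le_abs_self _).trans this
  linarith [le_abs_self (σ p.1 p.2 - σ q.1 q.2)]

theorem exists_isDoubledContact {v w b σ : ℝ → EN N → ℝ} (hvr : IsContLocBdd N v)
    (hwr : IsContLocBdd N w) (hb : Continuous fun a : ℝ × EN N => b a.1 a.2)
    (hσ : Continuous fun a : ℝ × EN N => σ a.1 a.2) {T r d : ℝ} {y₀ : EN N}
    (hle : ∀ a ∈ Icc 0 T ×ˢ closedBall y₀ (2 * r), v a.1 a.2 - w a.1 a.2 ≤ b a.1 a.2)
    (hex : ∃ a ∈ Icc 0 T ×ˢ closedBall y₀ (2 * r), v a.1 a.2 - w a.1 a.2 = b a.1 a.2)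
    (hint : ∀ a ∈ Icc 0 T ×ˢ closedBall y₀ (2 * r), v a.1 a.2 - w a.1 a.2 = b a.1 a.2 →
      a ∈ Ioo 0 T ×ˢ ball y₀ r ∧ -d < v a.1 a.2) {e : ℝ} (he : 0 < e) :
    ∃ n p q, IsDoubledContact v w b n T y₀ r p q ∧ -d < v p.1 p.2 ∧
      |σ p.1 p.2 - σ q.1 q.2| < e ∧ 0 ≤ v p.1 p.2 - w q.1 q.2 - b p.1 p.2 ∧
      v p.1 p.2 - w q.1 q.2 - b p.1 p.2 < e := by
  set Q := Icc 0 T ×ˢ closedBall y₀ (2 * r)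
  have hvQ : ContinuousOn (fun m : (ℝ × EN N) × (ℝ × EN N) => v m.1.1 m.1.2) (Q ×ˢ Q) :=
    (hvr.continuousOn_Icc_prod T _).comp continuousOn_fst fun m hm => hm.1
  have hwQ : ContinuousOn (fun m : (ℝ × EN N) × (ℝ × EN N) => w m.2.1 m.2.2) (Q ×ˢ Q) :=
    (hwr.continuousOn_Icc_prod T _).comp continuousOn_snd fun m hm => hm.2
  have hGQ : ContinuousOn (fun m : (ℝ × EN N) × (ℝ × EN N) =>
      v m.1.1 m.1.2 - w m.2.1 m.2.2 - b m.1.1 m.1.2) (Q ×ˢ Q) :=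
    (hvQ.sub hwQ).sub (hb.comp continuous_fst).continuousOn
  have hσQ : Continuous fun m : (ℝ × EN N) × (ℝ × EN N) => |σ m.1.1 m.1.2 - σ m.2.1 m.2.2| :=
    ((hσ.comp continuous_fst).sub (hσ.comp continuous_snd)).abs
  obtain ⟨q₁, hq₁, heq₁⟩ := hex
  obtain ⟨a, ha, heq, hpen⟩ := exists_max_sub_penalty
    (isCompact_Icc.prod (isCompact_closedBall _ _)) hGQ continuous_sqDist
    (fun m => sqDist_nonneg _ _) sqDist_self (fun _ _ => eq_of_sqDist_eq_zero)
    (fun a ha => sub_nonpos.2 (hle a ha)) hq₁ (sub_eq_zero.2 heq₁)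
  obtain ⟨haint, hvd⟩ := hint a ha (sub_eq_zero.1 heq)
  have hopen : IsOpen (Ioo 0 T ×ˢ ball y₀ r) := isOpen_Ioo.prod isOpen_ball
  have hdiag : (a, a) ∈ Q ×ˢ Q := ⟨ha, ha⟩
  have hnear : ∀ᶠ m in 𝓝[Q ×ˢ Q] (a, a), m ∈ (Ioo 0 T ×ˢ ball y₀ r) ×ˢ (Ioo 0 T ×ˢ ball y₀ r) :=
    mem_nhdsWithin_of_mem_nhds ((hopen.prod hopen).mem_nhds ⟨haint, haint⟩)
  obtain ⟨n, hn, ⟨p, q⟩, -, ⟨⟨hp, hq⟩, hvp, hσp, hGp⟩, hmax, hge⟩ := hpen _ <|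
    hnear.and <|
    ((hvQ _ hdiag).eventually (Ioi_mem_nhds hvd)).and <|
    (hσQ.continuousWithinAt.eventually (Iio_mem_nhds (by simpa using he))).and
    ((hGQ _ hdiag).eventually (Iio_mem_nhds (heq.trans_lt he)))
  refine ⟨n, p, q, ⟨hp, hq, fun p' hp' q' hq' => hmax (p', q') ⟨hp', hq'⟩⟩, hvp, hσp, ?_, hGp⟩
  exact hge.trans (sub_le_self _ (mul_nonneg hn (sqDist_nonneg p q)))

/-- If `u` is positive at a zero of the weight `P ≥ 0`, then for some `Θ > 0` the function
`m (Θ + P)` touches `u` from above. -/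
theorem exists_touching_weight {X : Type*} [TopologicalSpace X] {Q : Set X} (hQ : IsCompact Q)
    {u m P : X → ℝ} (hu : ContinuousOn u Q) (hm : Continuous m) (hm0 : ∀ x, 0 < m x)
    (hP : Continuous P) {x₁ : X} (hx₁ : x₁ ∈ Q) (hPx₁ : P x₁ = 0) (hux₁ : 0 < u x₁) :
    ∃ Θ > 0, (∀ x ∈ Q, u x ≤ m x * (Θ + P x)) ∧ ∃ x ∈ Q, u x = m x * (Θ + P x) := by
  obtain ⟨x₂, hx₂, hmax⟩ := hQ.exists_isMaxOn ⟨x₁, hx₁⟩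
    ((hu.div hm.continuousOn fun x _ => (hm0 x).ne').sub hP.continuousOn)
  refine ⟨u x₂ / m x₂ - P x₂, ?_, fun x hx => ?_, x₂, hx₂, ?_⟩
  · have hle : u x₁ / m x₁ - P x₁ ≤ u x₂ / m x₂ - P x₂ := hmax hx₁
    rw [hPx₁, sub_zero] at hle
    exact (div_pos hux₁ (hm0 x₁)).trans_le hle
  · have hle : u x / m x - P x ≤ u x₂ / m x₂ - P x₂ := hmax hx
    rw [mul_comm, ← div_le_iff₀ (hm0 x)]
    linarith
  · rw [sub_add_cancel, mul_div_cancel₀ _ (hm0 x₂).ne']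

/-- The weight confining maximum points to `{t < T + 1, ‖y - y₀‖ < r}`: it vanishes at `y₀` up to
time `T` and is at least `A` outside this set. -/
noncomputable def confinement (A T : ℝ) (y₀ : EN N) (r : ℝ) (t : ℝ) (y : EN N) : ℝ :=
  A * (1 - cutoff N (r⁻¹ • (y - y₀))) + A * Real.smoothTransition (t - T)

section Confinement

variable {A T r t : ℝ} {y₀ y : EN N}

theorem contDiff_confinement :
    ContDiff ℝ 2 fun a : ℝ × EN N => confinement A T y₀ r a.1 a.2 := by
  have := contDiff_cutoff (N := N)
  have : ContDiff ℝ 2 Real.smoothTransition := Real.smoothTransition.contDiff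
  unfold confinement
  fun_prop

theorem confinement_nonneg (hA : 0 ≤ A) : 0 ≤ confinement A T y₀ r t y :=
  add_nonneg (mul_nonneg hA (sub_nonneg.2 (cutoff_le_one _)))
    (mul_nonneg hA (Real.smoothTransition.nonneg _))

theorem confinement_center (ht : t ≤ T) : confinement A T y₀ r t y₀ = 0 := by
  simp [confinement, cutoff_zero, Real.smoothTransition.zero_of_nonpos (sub_nonpos.2 ht)]

theorem lt_of_confinement_lt (hA : 0 ≤ A) (h : confinement A T y₀ r t y < A) : t < T + 1 := by
  by_contra! ht
  have := mul_nonneg hA (sub_nonneg.2 (cutoff_le_one (r⁻¹ • (y - y₀))))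
  rw [confinement, Real.smoothTransition.one_of_one_le (by linarith)] at h
  linarith

theorem mem_ball_of_confinement_lt (hA : 0 ≤ A) (hr : 0 < r) (h : confinement A T y₀ r t y < A) :
    y ∈ ball y₀ r := by
  by_contra! hy
  have := mul_nonneg hA (Real.smoothTransition.nonneg (t - T))
  rw [mem_ball_iff_norm, not_lt] at hy
  rw [confinement, cutoff_eq_zero] at h
  · linarith
  · rwa [norm_smul, norm_inv, Real.norm_of_nonneg hr.le, inv_mul_eq_div, le_div_iff₀ hr, one_mul]

theorem exists_hasDerivAt_confinement (hA : 0 ≤ A) :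
    ∃ D, 0 ≤ D ∧ HasDerivAt (fun t => confinement A T y₀ r t y) D t :=
  ⟨_, mul_nonneg hA (Real.smoothTransition.monotone.deriv_nonneg),
    ((hasDerivAt_smoothTransition_sub T t).const_mul A).const_add _⟩

theorem confinement_add_le (hA : 0 ≤ A) (hr : 0 < r) (z : EN N) :
    confinement A T y₀ r t (y + z) ≤ confinement A T y₀ r t y + A * cutoffLip N * r⁻¹ * ‖z‖ := by
  have h := abs_cutoff_sub_le (r⁻¹ • (y - y₀)) (r⁻¹ • (y + z - y₀))
  rw [← smul_sub, sub_sub_sub_cancel_right, sub_add_cancel_left, norm_smul, norm_neg, norm_inv,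
    Real.norm_of_nonneg hr.le] at h
  have := mul_le_mul_of_nonneg_left ((le_abs_self _).trans h) hA
  simp only [confinement]
  linarith

end Confinement

/-- A subsolution `v` of the unforced cell problem on the cylinder `[0,T] × closedBall y₀ (2r)`
which is nonpositive initially, at most `D`, and whose jumps longer than `r` contribute at most `L`
to the equation at points where `-d ≤ v`. -/
structure IsLocalCellSub (s : ℝ) (g : EN N → ℝ) (f : ℝ → ℝ) (σ : ℝ → EN N → ℝ)
    (T D d L r : ℝ) (y₀ : EN N) (v : ℝ → EN N → ℝ) : Prop where
  isContLocBdd : IsContLocBdd N v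
  viscSub : ViscSub N s g (cellRHS f σ 0) v
  initial : ∀ y ∈ closedBall y₀ (2 * r), v 0 y ≤ 0
  le_bound : ∀ t ∈ Icc 0 T, ∀ y ∈ closedBall y₀ (2 * r), v t y ≤ D
  far : ∀ t ∈ Ioc 0 T, ∀ y ∈ closedBall y₀ r, -d ≤ v t y → levyI2 N s g (v t) r y ≤ L

section Comparison

variable {f : ℝ → ℝ} {K : NNReal} {σ v w : ℝ → EN N → ℝ} {T D d L δ r : ℝ} {y₀ : EN N}

/-- The weight whose contact with `v - w` is studied in the comparison proof. -/
noncomputable def cellWeight (K A Θ T : ℝ) (y₀ : EN N) (r : ℝ) (t : ℝ) (y : EN N) : ℝ :=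
  Real.exp (K * t) * (Θ + confinement A T y₀ r t y)

theorem exists_hasDerivAt_cellWeight {A Θ : ℝ} (hA : 0 ≤ A) (t : ℝ) (y : EN N) :
    ∃ D', K * cellWeight K A Θ T y₀ r t y ≤ D' ∧
      HasDerivAt (fun t => cellWeight K A Θ T y₀ r t y) D' t := by
  obtain ⟨P', hP'0, hP'⟩ := exists_hasDerivAt_confinement (T := T) (t := t) (y := y) (y₀ := y₀)
    (r := r) hA
  refine ⟨_, ?_, (((hasDerivAt_id' t).const_mul (K : ℝ)).exp).mul (hP'.const_add Θ)⟩
  have := mul_nonneg (Real.exp_nonneg (K * t)) hP'0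
  simp only [cellWeight]
  linarith

theorem cellWeight_add_le {A Θ : ℝ} (hA : 0 ≤ A) (hr : 0 < r) {t : ℝ} (ht : t ≤ T + 1)
    (y z : EN N) :
    cellWeight K A Θ T y₀ r t (y + z) ≤ cellWeight K A Θ T y₀ r t y
      + Real.exp (K * (T + 1)) * (A * cutoffLip N * r⁻¹) * ‖z‖ := by
  have hexp : Real.exp (K * t) ≤ Real.exp (K * (T + 1)) := by gcongr
  have hP := confinement_add_le (T := T) (t := t) (y₀ := y₀) (y := y) hA hr z
  calc cellWeight K A Θ T y₀ r t (y + z)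
      ≤ Real.exp (K * t) * (Θ + (confinement A T y₀ r t y + A * cutoffLip N * r⁻¹ * ‖z‖)) := by
        unfold cellWeight
        gcongr
    _ = cellWeight K A Θ T y₀ r t y + Real.exp (K * t) * (A * cutoffLip N * r⁻¹ * ‖z‖) := by
        rw [cellWeight]
        ring
    _ ≤ _ := by
        rw [mul_assoc (Real.exp (K * (T + 1)))]
        gcongr

theorem IsLocalCellSub.mem_interior_of_contact
    (hv : IsLocalCellSub s g f σ (T + 1) D d (L - δ) r y₀ v) (hr : 0 < r)
    (hw₀ : ∀ y, 0 ≤ w 0 y) (hwd : ∀ t ∈ Icc 0 (T + 1), ∀ y, |w t y| ≤ d) {A Θ : ℝ} (hA : 0 ≤ A)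
    (hDA : D + d ≤ A) (hΘ : 0 < Θ) {a : ℝ × EN N}
    (ha : a ∈ Icc 0 (T + 1) ×ˢ closedBall y₀ (2 * r))
    (heq : v a.1 a.2 - w a.1 a.2 = cellWeight K A Θ T y₀ r a.1 a.2) :
    a ∈ Ioo 0 (T + 1) ×ˢ ball y₀ r ∧ -d < v a.1 a.2 := by
  obtain ⟨t, y⟩ := a
  have hP := confinement_nonneg (T := T) (r := r) (t := t) (y₀ := y₀) (y := y) hA
  have hge : Θ + confinement A T y₀ r t y ≤ v t y - w t y := by
    rw [heq]
    exact le_mul_of_one_le_left (by positivity)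
      (Real.one_le_exp (mul_nonneg K.coe_nonneg ha.1.1))
  have hwdt := abs_le.1 (hwd t ha.1 y)
  have hPA : confinement A T y₀ r t y < A := by linarith [hv.le_bound t ha.1 y ha.2]
  have hne : (0 : ℝ) ≠ t := by
    rintro rfl
    linarith [hv.initial y ha.2, hw₀ y]
  exact ⟨⟨⟨ha.1.1.lt_of_ne hne, lt_of_confinement_lt hA hPA⟩,
    mem_ball_of_confinement_lt hA hr hPA⟩, by dsimp only at *; linarith⟩

theorem IsLocalCellSub.le_of_isDoubledContact (hs : s ∈ Ioo (0 : ℝ) (1 / 2))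
    (hg : IsAngularDensity g) (hf : LipschitzWith K f) (hw : ViscSup N s g (cellRHS f σ L) w)
    (hwr : IsContLocBdd N w) (hwd : ∀ t ∈ Icc 0 (T + 1), ∀ y, |w t y| ≤ d)
    (hv : IsLocalCellSub s g f σ (T + 1) D d (L - δ) r y₀ v) {A Θ : ℝ} (hA : 0 ≤ A) (hΘ : 0 ≤ Θ)
    {n : ℝ} {p q : ℝ × EN N} {e : ℝ} (he : 0 < e)
    (h : IsDoubledContact v w (cellWeight K A Θ T y₀ r) n (T + 1) y₀ r p q)
    (hvd : -d ≤ v p.1 p.2) (hσ : |σ p.1 p.2 - σ q.1 q.2| ≤ e)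
    (hge : 0 ≤ v p.1 p.2 - w q.1 q.2 - cellWeight K A Θ T y₀ r p.1 p.2)
    (hle : v p.1 p.2 - w q.1 q.2 - cellWeight K A Θ T y₀ r p.1 p.2 ≤ e) :
    δ ≤ 2 * d * tailMass s g r
      + Real.exp (K * (T + 1)) * (A * cutoffLip N * r⁻¹) * nearMoment s g r + (K + 3) * e := by
  have hr : 0 < r := dist_nonneg.trans_lt h.fst_mem.2
  obtain ⟨D', hKD', hD'⟩ := exists_hasDerivAt_cellWeight (K := K) (Θ := Θ) (T := T) (y₀ := y₀)
    (r := r) hA p.1 p.2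
  have hweight : 0 ≤ cellWeight K A Θ T y₀ r p.1 p.2 :=
    mul_nonneg (Real.exp_nonneg _) (add_nonneg hΘ (confinement_nonneg hA))
  have hcontact := h.forcing_le hs hg hf hv.viscSub hv.isContLocBdd hw hwr
    (by
      have := contDiff_confinement (N := N) (A := A) (T := T) (y₀ := y₀) (r := r)
      unfold cellWeight
      fun_prop)
    hD' hKD' (by positivity) (cellWeight_add_le hA hr h.fst_mem.1.2.le p.2) (by linarith) he
  have hvfar := hv.far p.1 (Ioo_subset_Ioc_self h.fst_mem.1) p.2
    (ball_subset_closedBall h.fst_mem.2) hvd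
  have hwq := hwd q.1 (Ioo_subset_Icc_self h.snd_mem.1)
  have hwfar := abs_levyI2_le hs.1 hg (u := w q.1) (x := q.2) (C := 2 * d) hr fun z _ => by
    linarith [abs_sub (w q.1 (q.2 + z)) (w q.1 q.2), hwq (q.2 + z), hwq q.2]
  linarith [(abs_le.1 hwfar).1, mul_le_mul_of_nonneg_left hle K.coe_nonneg]

/-- Comparison at the centre of a ball so large that the confining weight is nearly invisible to
the Lévy operator. -/
theorem IsLocalCellSub.le_of_small (hs : s ∈ Ioo (0 : ℝ) (1 / 2)) (hg : IsAngularDensity g)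
    (hf : LipschitzWith K f) (hσ : Continuous fun a : ℝ × EN N => σ a.1 a.2)
    (hw : ViscSup N s g (cellRHS f σ L) w) (hwr : IsContLocBdd N w) (hw₀ : ∀ y, 0 ≤ w 0 y)
    (hwd : ∀ t ∈ Icc 0 (T + 1), ∀ y, |w t y| ≤ d)
    (hv : IsLocalCellSub s g f σ (T + 1) D d (L - δ) r y₀ v) (hr : 0 < r) {A : ℝ} (hA : 0 ≤ A)
    (hDA : D + d ≤ A)
    (hsmall : 2 * d * tailMass s g r
      + Real.exp (K * (T + 1)) * (A * cutoffLip N * r⁻¹) * nearMoment s g r < δ)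
    {t : ℝ} (ht : t ∈ Icc 0 T) : v t y₀ ≤ w t y₀ := by
  by_contra! hlt
  have hP : Continuous fun a : ℝ × EN N => confinement A T y₀ r a.1 a.2 :=
    contDiff_confinement.continuous
  have hmem : (t, y₀) ∈ Icc 0 (T + 1) ×ˢ closedBall y₀ (2 * r) :=
    ⟨⟨ht.1, by linarith [ht.2]⟩, mem_closedBall_self (by positivity)⟩
  obtain ⟨Θ, hΘ, hle, hex⟩ := exists_touching_weight (m := fun a => Real.exp (K * a.1))
    (isCompact_Icc.prod (isCompact_closedBall _ _))
    ((hv.isContLocBdd.continuousOn_Icc_prod _ _).sub (hwr.continuousOn_Icc_prod _ _))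
    (by fun_prop) (fun a => Real.exp_pos _) hP hmem (confinement_center ht.2) (sub_pos.2 hlt)
  set S := 2 * d * tailMass s g r
    + Real.exp (K * (T + 1)) * (A * cutoffLip N * r⁻¹) * nearMoment s g r
  have hK3 : (0 : ℝ) < K + 3 := by positivity
  obtain ⟨e, he, heδ⟩ : ∃ e > 0, S + (K + 3) * e < δ := by
    refine ⟨(δ - S) / 2 / (K + 3), by have := sub_pos.2 hsmall; positivity, ?_⟩
    rw [mul_div_cancel₀ _ hK3.ne']
    linarith
  obtain ⟨n, p, q, h, hvd, hσe, hge, hlt⟩ := exists_isDoubledContact hv.isContLocBdd hwr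
    (b := cellWeight K A Θ T y₀ r) (by unfold cellWeight; fun_prop) hσ hle hex
    (fun a ha heq => hv.mem_interior_of_contact hr hw₀ hwd hA hDA hΘ ha heq) he
  exact heδ.not_ge (hv.le_of_isDoubledContact hs hg hf hw hwr hwd hA hΘ.le he h hvd.le hσe.le
    hge hlt.le)

theorem cell_comparison (hs : s ∈ Ioo (0 : ℝ) (1 / 2)) (hg : IsAngularDensity g)
    (hf : LipschitzWith K f) (hσ : Continuous fun a : ℝ × EN N => σ a.1 a.2)
    (hw : ViscSup N s g (cellRHS f σ L) w) (hwr : IsContLocBdd N w) (hw₀ : ∀ y, 0 ≤ w 0 y)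
    (hwd : ∀ t ∈ Icc 0 (T + 1), ∀ y, |w t y| ≤ d) (D : ℝ) (hδ : 0 < δ) :
    ∃ r₀ > 0, ∀ r ≥ r₀, ∀ y₀ v, IsLocalCellSub s g f σ (T + 1) D d (L - δ) r y₀ v →
      ∀ t ∈ Icc 0 T, v t y₀ ≤ w t y₀ := by
  set A := max 0 (D + d)
  set E := Real.exp (K * (T + 1))
  have hlim : Tendsto (fun r => 2 * d * tailMass s g r + E * (A * cutoffLip N * r⁻¹)
      * nearMoment s g r) atTop (𝓝 0) := by
    have := ((tendsto_tailMass_atTop (g := g) hs.1).const_mul (2 * d)).add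
      ((tendsto_inv_mul_nearMoment_atTop (g := g) hs.1).const_mul (E * (A * cutoffLip N)))
    rw [mul_zero, mul_zero, add_zero] at this
    exact this.congr fun r => by ring
  obtain ⟨r₁, hr₁⟩ := eventually_atTop.1 (hlim.eventually_lt_const hδ)
  refine ⟨max r₁ 1, by positivity, fun r hr y₀ v hv t ht => ?_⟩
  exact hv.le_of_small hs hg hf hσ hw hwr hw₀ hwd (lt_of_lt_of_le (by positivity) hr)
    (le_max_left _ _) (le_max_right _ _) (hr₁ r ((le_max_left _ _).trans hr)) ht

end Comparison

end Cell

/-! ### From the macroscopic to the microscopic scale -/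

section Micro

variable {N : ℕ} {s : ℝ} {g : EN N → ℝ}

/-- The vector of `ℝ^N` with prescribed integer coordinates, written as in `H3`. -/
noncomputable def intVec (N : ℕ) (k : Fin N → ℤ) : EN N :=
  (WithLp.equiv 2 (Fin N → ℝ)).symm (fun j => (k j : ℝ))

theorem exists_norm_sub_intVec_le (x : EN N) : ∃ k, ‖x - intVec N k‖ ≤ √N := by
  refine ⟨fun j => ⌊x j⌋, ?_⟩
  rw [EuclideanSpace.norm_eq]
  refine Real.sqrt_le_sqrt ?_
  calc ∑ i, ‖(x - intVec N fun j => ⌊x j⌋) i‖ ^ 2 = ∑ i, Int.fract (x i) ^ 2 := by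
        simp [intVec]
    _ ≤ ∑ _i : Fin N, 1 := Finset.sum_le_sum fun i _ =>
        pow_le_one₀ (Int.fract_nonneg _) (Int.fract_lt_one _).le
    _ = N := by simp

/-- A continuous periodic medium: reaction `f = W'` and forcing `σ`. -/
structure IsMedium (N : ℕ) (K : NNReal) (f : ℝ → ℝ) (σ : ℝ → EN N → ℝ) : Prop where
  lipschitz : LipschitzWith K f
  periodic : Function.Periodic f 1
  continuous : Continuous fun q : ℝ × EN N => σ q.1 q.2
  periodic_time : ∀ x, Function.Periodic (fun t => σ t x) 1
  periodic_space : ∀ k t x, σ t (x + intVec N k) = σ t x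

theorem IsMedium.reflect {K : NNReal} {f : ℝ → ℝ} {σ : ℝ → EN N → ℝ} (h : IsMedium N K f σ) :
    IsMedium N K (fun v => -f (-v)) fun t x => -σ t x where
  lipschitz := by
    have := (h.lipschitz.comp LipschitzWith.id.neg).neg
    rwa [mul_one] at this
  periodic v := by
    change -f (-(v + 1)) = -f (-v)
    rw [neg_add, ← sub_eq_add_neg, h.periodic.sub_eq]
  continuous := h.continuous.neg
  periodic_time x t := congrArg Neg.neg (h.periodic_time x t)
  periodic_space k t x := congrArg Neg.neg (h.periodic_space k t x)

/-- The right-hand side of the oscillating problem at scale `ε`. -/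
noncomputable def oscRHS (s : ℝ) (f : ℝ → ℝ) (σ : ℝ → EN N → ℝ) (ε : ℝ) :
    ℝ → EN N → ℝ → ℝ → ℝ :=
  fun t x v I => I - f (v / ε ^ (2 * s)) + σ (t / ε ^ (2 * s)) (ε⁻¹ • x)

theorem ViscSub.cell_of_osc {K : NNReal} {f : ℝ → ℝ} {σ U : ℝ → EN N → ℝ} (hM : IsMedium N K f σ)
    {ε : ℝ} (hε : 0 < ε) (hU : ViscSub N s g (oscRHS s f σ ε) U) (n : ℕ) (k : Fin N → ℤ) (m : ℤ) :
    ViscSub N s g (cellRHS f σ 0) (microZoom s ε n (intVec N k) m U) := by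
  have hpos : ε ^ (2 * s) ≠ 0 := (Real.rpow_pos_of_pos hε _).ne'
  convert hU.zoom hε n.cast_nonneg using 1
  ext τ y v I
  have hf : f (v + m) = f v := by simpa using hM.periodic.int_mul m v
  have hσ : σ (τ + n) y = σ τ y := by simpa using (hM.periodic_time y).nat_mul n τ
  rw [oscRHS, cellRHS, mul_div_cancel_left₀ _ hpos, mul_div_cancel_left₀ _ hpos,
    inv_smul_smul₀ hε.ne', hf, hM.periodic_space, hσ]
  ring

theorem IsContLocBdd.microZoom {U : ℝ → EN N → ℝ} (hU : IsContLocBdd N U) {n ε : ℝ} (hε : 0 < ε)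
    (hn : 0 ≤ n) (k : EN N) (m : ℝ) : IsContLocBdd N (microZoom s ε n k m U) := by
  have hpos := Real.rpow_pos_of_pos hε (2 * s)
  refine ⟨?_, fun T => ?_⟩
  · have : ContinuousOn (fun q : ℝ × EN N => U (ε ^ (2 * s) * (q.1 + n)) (ε • (q.2 + k)))
        (Ici 0 ×ˢ univ) :=
      hU.continuousOn.comp (f := fun q : ℝ × EN N => (ε ^ (2 * s) * (q.1 + n), ε • (q.2 + k)))
        (by fun_prop) fun q hq => ⟨mul_nonneg hpos.le (add_nonneg hq.1 hn), trivial⟩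
    exact (continuousOn_const.mul this).sub continuousOn_const
  · obtain ⟨M, hM⟩ := hU.exists_abs_le (ε ^ (2 * s) * (T + n))
    refine ⟨(ε ^ (2 * s))⁻¹ * M + |m|, fun t ht x => ?_⟩
    have htime : ε ^ (2 * s) * (t + n) ∈ Icc 0 (ε ^ (2 * s) * (T + n)) :=
      ⟨mul_nonneg hpos.le (add_nonneg ht.1 hn), by have := ht.2; gcongr⟩
    refine (abs_sub _ _).trans ?_
    rw [abs_mul, abs_of_pos (inv_pos.2 hpos)]
    gcongr
    exact hM _ htime _

/-- `ε` is so small that a microscopic cylinder of duration `S` and radius `2R` is small on the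
macroscopic scale, with error `C` times its size. The third condition uses `2s < 1`. -/
structure IsMicroScale (s C S R r τ₀ ε : ℝ) : Prop where
  pos : 0 < ε
  duration_le : ε ^ (2 * s) * S ≤ τ₀
  radius_le : ε * R ≤ r
  radius_le_time : ε * (2 * R) ≤ ε ^ (2 * s)
  error_le : C * ((ε ^ (2 * s) * S) ^ 2 + ε * (2 * R)) ≤ ε ^ (2 * s)

theorem tendsto_rpow_nhdsGT_zero {a : ℝ} (ha : 0 < a) :
    Tendsto (fun ε : ℝ => ε ^ a) (𝓝[>] 0) (𝓝 0) := by
  have := (Real.continuousAt_rpow_const 0 a (Or.inr ha.le)).tendsto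
  rw [Real.zero_rpow ha.ne'] at this
  exact this.mono_left nhdsWithin_le_nhds

theorem eventually_isMicroScale (hs : s ∈ Ioo (0 : ℝ) (1 / 2)) (C S R : ℝ) {r τ₀ : ℝ} (hr : 0 < r)
    (hτ₀ : 0 < τ₀) : ∀ᶠ ε in 𝓝[>] 0, IsMicroScale s C S R r τ₀ ε := by
  have htime := tendsto_rpow_nhdsGT_zero (a := 2 * s) (by linarith [hs.1])
  have hgap := tendsto_rpow_nhdsGT_zero (a := 1 - 2 * s) (by linarith [hs.2])
  have hdur := htime.mul_const S
  have hrad : Tendsto (fun ε : ℝ => ε * R) (𝓝[>] 0) (𝓝 0) :=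
    ((continuous_mul_const R).tendsto' 0 0 (zero_mul R)).mono_left nhdsWithin_le_nhds
  have hrad' := hgap.mul_const (2 * R)
  have herr := ((htime.mul_const (S ^ 2)).add hrad').const_mul C
  simp only [zero_mul, mul_zero, add_zero] at hdur hrad' herr
  filter_upwards [self_mem_nhdsWithin, hdur.eventually_le_const hτ₀, hrad.eventually_le_const hr,
    hrad'.eventually_le_const one_pos, herr.eventually_le_const one_pos] with ε hε h₁ h₂ h₃ h₄
  have hpos : 0 < ε ^ (2 * s) := Real.rpow_pos_of_pos hε _
  have hsplit : ε ^ (1 - 2 * s) * ε ^ (2 * s) = ε := by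
    rw [← Real.rpow_add hε, sub_add_cancel, Real.rpow_one]
  refine ⟨hε, h₁, h₂, ?_, ?_⟩
  · calc ε * (2 * R) = ε ^ (1 - 2 * s) * (2 * R) * ε ^ (2 * s) := by
          rw [mul_right_comm, hsplit]
      _ ≤ ε ^ (2 * s) := mul_le_of_le_one_left hpos.le h₃
  · calc C * ((ε ^ (2 * s) * S) ^ 2 + ε * (2 * R))
        = C * (ε ^ (2 * s) * S ^ 2 + ε ^ (1 - 2 * s) * (2 * R)) * ε ^ (2 * s) := by
          nth_rewrite 2 [← hsplit]
          ring
      _ ≤ ε ^ (2 * s) := mul_le_of_le_one_left hpos.le h₄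

/-- The microscopic coordinates `(τ₁, y₀)` represent the macroscopic point `(t₁, x₁)`. -/
structure IsZoomFrame (s ε n : ℝ) (k : EN N) (t₁ : ℝ) (x₁ : EN N) (τ₁ : ℝ) (y₀ : EN N) :
    Prop where
  time_eq : ε ^ (2 * s) * (τ₁ + n) = t₁
  space_eq : ε • (y₀ + k) = x₁

/-- Integer translations bring any contact point into a bounded region. -/
theorem exists_isZoomFrame {ε : ℝ} (hε : 0 < ε) {t₁ S : ℝ} (ht₁ : ε ^ (2 * s) * S ≤ t₁)
    (x₁ : EN N) :
    ∃ (n : ℕ) (k : Fin N → ℤ), ∃ τ₁ ∈ Icc S (S + 1), ∃ y₀ : EN N, ‖y₀‖ ≤ √N ∧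
      IsZoomFrame s ε n (intVec N k) t₁ x₁ τ₁ y₀ := by
  have hpos := Real.rpow_pos_of_pos hε (2 * s)
  obtain ⟨k, hk⟩ := exists_norm_sub_intVec_le (ε⁻¹ • x₁)
  have hS : 0 ≤ t₁ / ε ^ (2 * s) - S := by
    rwa [sub_nonneg, le_div_iff₀ hpos, mul_comm]
  refine ⟨⌊t₁ / ε ^ (2 * s) - S⌋₊, k, t₁ / ε ^ (2 * s) - ⌊t₁ / ε ^ (2 * s) - S⌋₊,
    ⟨?_, ?_⟩, ε⁻¹ • x₁ - intVec N k, hk, ?_, ?_⟩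
  · linarith [Nat.floor_le hS]
  · linarith [Nat.lt_floor_add_one (t₁ / ε ^ (2 * s) - S)]
  · rw [sub_add_cancel, mul_div_cancel₀ _ hpos.ne']
  · rw [sub_add_cancel, smul_inv_smul₀ hε.ne']

section ZoomFrame

variable {ε n m : ℝ} {k : EN N} {t₁ τ₁ : ℝ} {x₁ y₀ : EN N}

theorem IsZoomFrame.time (h : IsZoomFrame s ε n k t₁ x₁ τ₁ y₀) (τ : ℝ) :
    ε ^ (2 * s) * (τ + n) = t₁ + ε ^ (2 * s) * (τ - τ₁) := by
  rw [← h.time_eq]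
  ring

theorem IsZoomFrame.space (h : IsZoomFrame s ε n k t₁ x₁ τ₁ y₀) (y : EN N) :
    ε • (y + k) = x₁ + ε • (y - y₀) := by
  rw [← h.space_eq, ← smul_add]
  congr 1
  abel

theorem IsZoomFrame.microZoom_sub (h : IsZoomFrame s ε n k t₁ x₁ τ₁ y₀) (hε : 0 < ε)
    (U : ℝ → EN N → ℝ) (τ : ℝ) (y : EN N) :
    ε ^ (2 * s) * (microZoom s ε n k m U τ y - microZoom s ε n k m U τ₁ y₀)
      = U (t₁ + ε ^ (2 * s) * (τ - τ₁)) (x₁ + ε • (y - y₀)) - U t₁ x₁ := by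
  have hpos := (Real.rpow_pos_of_pos hε (2 * s)).ne'
  simp only [microZoom, h.time, h.space, sub_self, mul_zero, smul_zero, add_zero]
  rw [sub_sub_sub_cancel_right, ← mul_sub, mul_inv_cancel_left₀ hpos]

theorem IsZoomFrame.time_mem_Icc (h : IsZoomFrame s ε n k t₁ x₁ τ₁ y₀) (hε : 0 < ε) (hn : 0 ≤ n)
    {S T : ℝ} (hT : t₁ + ε ^ (2 * s) * S ≤ T) (hτ₁ : 0 ≤ τ₁) {τ : ℝ} (hτ : τ ∈ Icc 0 S) :
    t₁ + ε ^ (2 * s) * (τ - τ₁) ∈ Icc 0 T := by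
  have hpos := (Real.rpow_pos_of_pos hε (2 * s)).le
  constructor
  · rw [← h.time]
    exact mul_nonneg hpos (add_nonneg hτ.1 hn)
  · have : ε ^ (2 * s) * (τ - τ₁) ≤ ε ^ (2 * s) * S := by
      gcongr
      linarith [hτ.2]
    linarith

end ZoomFrame

/-- Up to the error `C` times the distance, `U` is touched from above at `(t₁, x₁)`: at earlier
times by a function of slope `b` in time, and far away by the translate of `u` with base point
`x₂`, up to an additional error `γ`. -/
structure IsTouchedAbove (U : ℝ → EN N → ℝ) (T t₁ b C γ r : ℝ) (x₁ x₂ : EN N) (u : EN N → ℝ) :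
    Prop where
  backward : ∀ t ∈ Icc 0 t₁, ∀ q, ‖q‖ ≤ 1 →
    U t (x₁ + q) - U t₁ x₁ ≤ (t - t₁) * b + C * ((t - t₁) ^ 2 + ‖q‖)
  near : ∀ t ∈ Icc 0 T, ∀ q, ‖q‖ ≤ 1 → U t (x₁ + q) - U t₁ x₁ ≤ C * (|t - t₁| + ‖q‖)
  far : ∀ t ∈ Icc 0 T, ∀ q, ‖q‖ ≤ 1 → ∀ Z, r < ‖Z‖ →
    U t (x₁ + q + Z) - U t₁ x₁ ≤ u (x₂ + Z) - u x₂ + (C * (|t - t₁| + ‖q‖) + γ)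

section TouchedZoom

variable {ε n m : ℝ} {k : EN N} {t₁ τ₁ : ℝ} {x₁ y₀ : EN N} {U : ℝ → EN N → ℝ}
  {T b C γ r τ₀ S R : ℝ} {x₂ : EN N} {u : EN N → ℝ}

theorem norm_smul_sub_le {ε ϱ : ℝ} (hε : 0 ≤ ε) {y y₀ : EN N} (hy : y ∈ closedBall y₀ ϱ) :
    ‖ε • (y - y₀)‖ ≤ ε * ϱ := by
  rw [norm_smul, Real.norm_of_nonneg hε]
  exact mul_le_mul_of_nonneg_left (mem_closedBall_iff_norm.1 hy) hε

theorem abs_rpow_mul_sub_le {ε : ℝ} (hε : 0 ≤ ε) {τ τ₁ S : ℝ} (hτ : τ ∈ Icc 0 S)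
    (hτ₁ : τ₁ ∈ Icc 0 S) : |ε ^ (2 * s) * (τ - τ₁)| ≤ ε ^ (2 * s) * S := by
  have hpos := Real.rpow_nonneg hε (2 * s)
  rw [abs_mul, abs_of_nonneg hpos]
  exact mul_le_mul_of_nonneg_left
    (abs_le.2 ⟨by linarith [hτ.1, hτ₁.2], by linarith [hτ.2, hτ₁.1]⟩) hpos

theorem IsTouchedAbove.zoom_initial_le (hU : IsTouchedAbove U T t₁ b C γ r x₁ x₂ u)
    (h : IsZoomFrame s ε n k t₁ x₁ τ₁ y₀) (hε : IsMicroScale s C S R r τ₀ ε) (hn : 0 ≤ n)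
    (hr : r ≤ 1 / 2) (hC : 0 ≤ C) (hτ₁ : τ₁ ∈ Icc 0 S) {y : EN N} (hy : y ∈ closedBall y₀ (2 * R)) :
    microZoom s ε n k m U 0 y - microZoom s ε n k m U τ₁ y₀ ≤ 1 - b * τ₁ := by
  have hpos := Real.rpow_pos_of_pos hε.pos (2 * s)
  have hq := norm_smul_sub_le hε.pos.le hy
  have hq₁ : ‖ε • (y - y₀)‖ ≤ 1 := by linarith [hε.radius_le]
  have htime : t₁ + ε ^ (2 * s) * (0 - τ₁) ∈ Icc 0 t₁ := by
    refine ⟨?_, by nlinarith [hτ₁.1]⟩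
    rw [← h.time]
    exact mul_nonneg hpos.le (by linarith)
  have hsq : (ε ^ (2 * s) * (0 - τ₁)) ^ 2 ≤ (ε ^ (2 * s) * S) ^ 2 :=
    sq_le_sq' (abs_le.1 (abs_rpow_mul_sub_le hε.pos.le ⟨le_rfl, hτ₁.1.trans hτ₁.2⟩ hτ₁)).1
      (abs_le.1 (abs_rpow_mul_sub_le hε.pos.le ⟨le_rfl, hτ₁.1.trans hτ₁.2⟩ hτ₁)).2
  refine le_of_mul_le_mul_left ?_ hpos
  calc ε ^ (2 * s) * (microZoom s ε n k m U 0 y - microZoom s ε n k m U τ₁ y₀)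
      = U (t₁ + ε ^ (2 * s) * (0 - τ₁)) (x₁ + ε • (y - y₀)) - U t₁ x₁ := h.microZoom_sub hε.pos ..
    _ ≤ ε ^ (2 * s) * (0 - τ₁) * b + C * ((ε ^ (2 * s) * (0 - τ₁)) ^ 2 + ‖ε • (y - y₀)‖) := by
        simpa only [add_sub_cancel_left] using hU.backward _ htime _ hq₁
    _ ≤ ε ^ (2 * s) * (0 - τ₁) * b + C * ((ε ^ (2 * s) * S) ^ 2 + ε * (2 * R)) := by gcongr
    _ ≤ ε ^ (2 * s) * (1 - b * τ₁) := by linarith [hε.error_le]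

theorem IsTouchedAbove.zoom_le (hU : IsTouchedAbove U T t₁ b C γ r x₁ x₂ u)
    (h : IsZoomFrame s ε n k t₁ x₁ τ₁ y₀) (hε : IsMicroScale s C S R r τ₀ ε) (hn : 0 ≤ n)
    (hT : t₁ + τ₀ ≤ T) (hr : r ≤ 1 / 2) (hC : 0 ≤ C) (hτ₁ : τ₁ ∈ Icc 0 S) {τ : ℝ}
    (hτ : τ ∈ Icc 0 S) {y : EN N} (hy : y ∈ closedBall y₀ (2 * R)) :
    microZoom s ε n k m U τ y - microZoom s ε n k m U τ₁ y₀ ≤ C * (S + 1) := by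
  have hq := norm_smul_sub_le hε.pos.le hy
  have hq₁ : ‖ε • (y - y₀)‖ ≤ 1 := by linarith [hε.radius_le]
  have htime := h.time_mem_Icc hε.pos hn (hT.trans' (by linarith [hε.duration_le])) hτ₁.1 hτ
  refine le_of_mul_le_mul_left ?_ (Real.rpow_pos_of_pos hε.pos (2 * s))
  calc ε ^ (2 * s) * (microZoom s ε n k m U τ y - microZoom s ε n k m U τ₁ y₀)
      = U (t₁ + ε ^ (2 * s) * (τ - τ₁)) (x₁ + ε • (y - y₀)) - U t₁ x₁ := h.microZoom_sub hε.pos ..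
    _ ≤ C * (|ε ^ (2 * s) * (τ - τ₁)| + ‖ε • (y - y₀)‖) := by
        simpa only [add_sub_cancel_left] using hU.near _ htime _ hq₁
    _ ≤ C * (ε ^ (2 * s) * S + ε ^ (2 * s)) := by
        gcongr
        exacts [abs_rpow_mul_sub_le hε.pos.le hτ hτ₁, hq.trans hε.radius_le_time]
    _ = ε ^ (2 * s) * (C * (S + 1)) := by ring

theorem IsTouchedAbove.levyI2_zoom_le (hs : s ∈ Ioo (0 : ℝ) (1 / 2)) (hg : IsAngularDensity g)
    (hU : IsTouchedAbove U T t₁ b C γ r x₁ x₂ u) (hUr : IsContLocBdd N U) (hu : IsContBdd u)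
    (h : IsZoomFrame s ε n k t₁ x₁ τ₁ y₀) (hε : IsMicroScale s C S R r τ₀ ε) (hn : 0 ≤ n)
    (hT : t₁ + τ₀ ≤ T) (hr : r ≤ 1 / 2) (hC : 0 ≤ C) (hR : 0 < R) (hτ₁ : τ₁ ∈ Icc 0 S) {τ : ℝ}
    (hτ : τ ∈ Icc 0 S) {y : EN N} (hy : y ∈ closedBall y₀ R) {d : ℝ}
    (hd : microZoom s ε n k m U τ₁ y₀ - microZoom s ε n k m U τ y ≤ d) :
    levyI2 N s g (microZoom s ε n k m U τ) R y ≤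
      levyI2 N s g u r x₂ + C * nearMoment s g r + γ * tailMass s g r
        + (d + C * (S + 1)) * tailMass s g R := by
  have hpos := Real.rpow_pos_of_pos hε.pos (2 * s)
  have hq := norm_smul_sub_le hε.pos.le hy
  have hqr : ‖ε • (y - y₀)‖ ≤ r := hq.trans hε.radius_le
  have htime := h.time_mem_Icc hε.pos hn (hT.trans' (by linarith [hε.duration_le])) hτ₁.1 hτ
  set t := t₁ + ε ^ (2 * s) * (τ - τ₁) with ht
  set x := x₁ + ε • (y - y₀) with hx
  have hbase : U t₁ x₁ - U t x ≤ ε ^ (2 * s) * d := by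
    have := mul_le_mul_of_nonneg_left hd hpos.le
    linarith [h.microZoom_sub (m := m) hε.pos U τ y, h.microZoom_sub (m := m) hε.pos U τ₁ y₀]
  have herr : C * (|t - t₁| + ‖ε • (y - y₀)‖) ≤ ε ^ (2 * s) * (C * (S + 1)) := by
    have hτS := abs_rpow_mul_sub_le (s := s) hε.pos.le hτ hτ₁
    rw [ht, add_sub_cancel_left]
    calc C * (|ε ^ (2 * s) * (τ - τ₁)| + ‖ε • (y - y₀)‖)
        ≤ C * (ε ^ (2 * s) * S + ε ^ (2 * s)) := by
          gcongr
          have := mul_pos hε.pos hR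
          linarith [hε.radius_le_time]
      _ = ε ^ (2 * s) * (C * (S + 1)) := by ring
  rw [levyI2_microZoom hε.pos, h.time, h.space, ← ht, ← hx]
  have hsplit := levyI2_le_of_near_far hs hg (hUr.slice htime.1) hu (mul_pos hε.pos hR)
    hε.radius_le hC (a := ε ^ (2 * s) * (d + C * (S + 1))) (γ := γ) (x := x) (y := x₂)
    (fun z _ hz => by
      have hnorm := norm_add_le (ε • (y - y₀)) z
      have := hU.near t htime (ε • (y - y₀) + z) (by linarith)
      rw [← add_assoc, ← hx] at this
      have := mul_le_mul_of_nonneg_left hnorm hC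
      linarith)
    fun z hz => by linarith [hU.far t htime (ε • (y - y₀)) (by linarith) z hz]
  have := tailMass_eq_rpow_mul (s := s) (g := g) hε.pos R
  have : ε ^ (2 * s) * (d + C * (S + 1)) * tailMass s g (ε * R)
      = (d + C * (S + 1)) * tailMass s g R := by rw [this]; ring
  linarith

theorem exists_int_microZoom_mem_Icc (s ε n : ℝ) (k : EN N) (U : ℝ → EN N → ℝ) (τ : ℝ) (y : EN N)
    (a : ℝ) : ∃ m : ℤ, microZoom s ε n k m U τ y ∈ Icc (a - 1) a := by
  refine ⟨⌈(ε ^ (2 * s))⁻¹ * U (ε ^ (2 * s) * (τ + n)) (ε • (y + k)) - a⌉, ?_, ?_⟩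
  · rw [microZoom]
    linarith [Int.ceil_lt_add_one
      ((ε ^ (2 * s))⁻¹ * U (ε ^ (2 * s) * (τ + n)) (ε • (y + k)) - a)]
  · rw [microZoom]
    linarith [Int.le_ceil ((ε ^ (2 * s))⁻¹ * U (ε ^ (2 * s) * (τ + n)) (ε • (y + k)) - a)]

theorem IsTouchedAbove.isLocalCellSub (hs : s ∈ Ioo (0 : ℝ) (1 / 2)) (hg : IsAngularDensity g)
    (hU : IsTouchedAbove U T t₁ b C γ r x₁ x₂ u) (hUr : IsContLocBdd N U) (hu : IsContBdd u)
    (h : IsZoomFrame s ε n k t₁ x₁ τ₁ y₀) (hε : IsMicroScale s C S R r τ₀ ε) (hn : 0 ≤ n)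
    (hT : t₁ + τ₀ ≤ T) (hr : r ≤ 1 / 2) (hC : 0 ≤ C) (hR : 0 < R) (hτ₁ : τ₁ ∈ Icc 0 S)
    {f : ℝ → ℝ} {σ : ℝ → EN N → ℝ}
    (hv : ViscSub N s g (cellRHS f σ 0) (microZoom s ε n k m U))
    (hv₁ : microZoom s ε n k m U τ₁ y₀ ≤ b * τ₁ - 1) {B d L : ℝ} (hB : b * τ₁ ≤ B)
    (hL : levyI2 N s g u r x₂ + C * nearMoment s g r + γ * tailMass s g r
      + (B + d + C * (S + 1)) * tailMass s g R ≤ L) :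
    IsLocalCellSub s g f σ S (B + C * (S + 1)) d L R y₀ (microZoom s ε n k m U) where
  isContLocBdd := hUr.microZoom hε.pos hn k m
  viscSub := hv
  initial y hy := by linarith [hU.zoom_initial_le (m := m) h hε hn hr hC hτ₁ hy]
  le_bound τ hτ y hy := by linarith [hU.zoom_le (m := m) h hε hn hT hr hC hτ₁ hτ hy]
  far τ hτ y hy hlow :=
    (hU.levyI2_zoom_le hs hg hUr hu h hε hn hT hr hC hR hτ₁ (Ioc_subset_Icc_self hτ) hy
      (by linarith)).trans hL

end TouchedZoom

theorem SlopeLim.exists_le_mul {w : ℝ → EN N → ℝ} {lam : ℝ} (hw : SlopeLim N w lam) {κ : ℝ}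
    (hκ : 0 < κ) (ϱ : ℝ) : ∃ T > 0, ∀ τ ≥ T, ∀ y, ‖y‖ ≤ ϱ → w τ y + 2 ≤ (lam + κ) * τ := by
  obtain ⟨T, hT⟩ := hw (κ / 2) (half_pos hκ) (max ϱ 1) (by positivity)
  refine ⟨max T (4 / κ), by positivity, fun τ hτ y hy => ?_⟩
  have hτpos : 0 < τ := lt_of_lt_of_le (by positivity) hτ
  have hslope := (abs_le.1 (hT τ ((le_max_left _ _).trans hτ) y (hy.trans (le_max_left _ _)))).2
  have hw₁ : w τ y ≤ (lam + κ / 2) * τ := by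
    rw [← div_le_iff₀ hτpos]
    linarith
  have hgap : 4 ≤ κ * τ := by
    rw [← div_le_iff₀' hκ]
    exact (le_max_right _ _).trans hτ
  linarith

/-- The slope in time at a contact point is at most the effective Hamiltonian: after zooming in,
the subsolution is compared with the corrector `w` for a time so long that `w` has reached its
asymptotic slope. All constants are uniform in the subsolution and in the contact point. -/
theorem IsMedium.eventually_slope_le (hs : s ∈ Ioo (0 : ℝ) (1 / 2)) (hg : IsAngularDensity g)
    {K : NNReal} {f : ℝ → ℝ} {σ w : ℝ → EN N → ℝ} (hM : IsMedium N K f σ) {L lam : ℝ}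
    (hw : ViscSup N s g (cellRHS f σ L) w) (hwr : IsContLocBdd N w) (hw₀ : ∀ y, 0 ≤ w 0 y)
    (hslope : SlopeLim N w lam) {κ δ r C τ₀ : ℝ} (hκ : 0 < κ) (hδ : 0 < δ)
    (hr : r ∈ Ioc 0 (1 / 2)) (hC : 0 ≤ C) (hτ₀ : 0 < τ₀) (β γ : ℝ) :
    ∀ᶠ ε in 𝓝[>] 0, ∀ (U : ℝ → EN N → ℝ) (T t₁ b : ℝ) (x₁ x₂ : EN N) (u : EN N → ℝ),
      IsContLocBdd N U → ViscSub N s g (oscRHS s f σ ε) U → IsContBdd u → τ₀ ≤ t₁ → t₁ + τ₀ ≤ T →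
      |b| ≤ β → IsTouchedAbove U T t₁ b C γ r x₁ x₂ u →
      levyI2 N s g u r x₂ + C * nearMoment s g r + γ * tailMass s g r ≤ L - 2 * δ →
      b ≤ lam + κ := by
  obtain ⟨Tm, hTm, hwT⟩ := hslope.exists_le_mul hκ √N
  obtain ⟨d, hd⟩ := hwr.exists_abs_le (Tm + 1 + 1)
  set B := |β| * (Tm + 1)
  set S := Tm + 1 + 1
  obtain ⟨r₀, hr₀, hcomp⟩ := cell_comparison (T := Tm + 1) hs hg hM.lipschitz hM.continuous hw hwr
    hw₀ hd (B + C * (S + 1)) hδ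
  obtain ⟨R, hR, hRδ⟩ : ∃ R ≥ r₀, (B + d + C * (S + 1)) * tailMass s g R ≤ δ := by
    have := (tendsto_tailMass_atTop (g := g) hs.1).const_mul (B + d + C * (S + 1))
    rw [mul_zero] at this
    exact ((eventually_ge_atTop r₀).and (this.eventually_le_const hδ)).exists
  filter_upwards [eventually_isMicroScale hs C S R hr.1 hτ₀] with ε hε
    U T t₁ b x₁ x₂ u hUr hU hu ht₁ hT hb htouch hL
  have hpos := Real.rpow_pos_of_pos hε.pos (2 * s)
  obtain ⟨n, k, τ₁, hτ₁, y₀, hy₀, hframe⟩ := exists_isZoomFrame (s := s) (S := Tm) hε.pos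
    (show ε ^ (2 * s) * Tm ≤ t₁ by linarith [hε.duration_le]) x₁
  obtain ⟨m, hm⟩ := exists_int_microZoom_mem_Icc s ε n (intVec N k) U τ₁ y₀ (b * τ₁ - 1)
  have hτpos : 0 < τ₁ := hTm.trans_le hτ₁.1
  have hbB : b * τ₁ ≤ B := by
    have hbβ : b ≤ |β| := (le_abs_self b).trans (hb.trans (le_abs_self β))
    calc b * τ₁ ≤ |β| * τ₁ := by gcongr
      _ ≤ |β| * (Tm + 1) := by have := hτ₁.2; gcongr
  have hlocal := htouch.isLocalCellSub hs hg hUr hu hframe hε n.cast_nonneg hT hr.2 hC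
    (hr₀.trans_le hR) ⟨hτpos.le, hτ₁.2.trans (by linarith)⟩ (hU.cell_of_osc hM hε.pos n k m)
    hm.2 (d := d) (L := L - δ) hbB (by linarith)
  have hvw := hcomp R hR y₀ _ hlocal τ₁ ⟨hτpos.le, hτ₁.2⟩
  refine le_of_mul_le_mul_right ?_ hτpos
  linarith [hwT τ₁ hτ₁.1 y₀ hy₀, hm.1]

end Micro

/-! ### The macroscopic doubling of variables -/

/-- A penalization of slope `κ` in time, which in addition rises by `A` between the times `T` and
`T + 1`. -/
noncomputable def timePenalty (κ A T t : ℝ) : ℝ :=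
  κ * t + A * Real.smoothTransition (t - T)

section TimePenalty

variable {κ A T t t' : ℝ}

theorem continuous_timePenalty : Continuous (timePenalty κ A T) := by
  have : Continuous Real.smoothTransition := Real.smoothTransition.continuous
  unfold timePenalty
  fun_prop

theorem timePenalty_nonneg (hκ : 0 ≤ κ) (hA : 0 ≤ A) (ht : 0 ≤ t) : 0 ≤ timePenalty κ A T t :=
  add_nonneg (mul_nonneg hκ ht) (mul_nonneg hA (Real.smoothTransition.nonneg _))

theorem timePenalty_of_le (ht : t ≤ T) : timePenalty κ A T t = κ * t := by
  rw [timePenalty, Real.smoothTransition.zero_of_nonpos (sub_nonpos.2 ht), mul_zero, add_zero]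

theorem le_timePenalty (hκ : 0 ≤ κ) (ht₀ : 0 ≤ t) (ht : T + 1 ≤ t) : A ≤ timePenalty κ A T t := by
  rw [timePenalty, Real.smoothTransition.one_of_one_le (by linarith), mul_one]
  exact le_add_of_nonneg_left (mul_nonneg hκ ht₀)

theorem timePenalty_sub_le_of_le (hA : 0 ≤ A) (ht : t' ≤ t) :
    timePenalty κ A T t' - timePenalty κ A T t ≤ (t' - t) * κ := by
  have := mul_le_mul_of_nonneg_left
    (Real.smoothTransition.monotone (sub_le_sub_right ht T)) hA
  unfold timePenalty
  linarith

theorem timePenalty_sub_le (hκ : 0 ≤ κ) (hA : 0 ≤ A) :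
    timePenalty κ A T t' - timePenalty κ A T t ≤ (κ + A * transitionLip) * |t' - t| := by
  have hlip := (le_abs_self _).trans (abs_smoothTransition_sub_le (t' - T) (t - T))
  rw [sub_sub_sub_cancel_right] at hlip
  have := mul_le_mul_of_nonneg_left hlip hA
  have := mul_le_mul_of_nonneg_left (le_abs_self (t' - t)) hκ
  unfold timePenalty
  linarith

end TimePenalty

section Doubled

variable {N : ℕ} {s : ℝ} {g : EN N → ℝ} {U V : ℝ → EN N → ℝ} {P : ℝ → ℝ} {c γ d M T η κ A : ℝ}
  {xh : EN N} {p q : ℝ × EN N}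

/-- The difference `U - V` with doubled variables, penalized by the squared distance of the two
points and by the time of the first one. -/
noncomputable def doubledGap (U V : ℝ → EN N → ℝ) (P : ℝ → ℝ) (c : ℝ) (p q : ℝ × EN N) : ℝ :=
  U p.1 p.2 - V q.1 q.2 - c * sqDist p q - P p.1

/-- `(p, q)` maximizes `doubledGap`, increased by a bump of height `γ` centred at `xh`, over times
in `[0,T]`. -/
structure IsDoubledMax (U V : ℝ → EN N → ℝ) (P : ℝ → ℝ) (c γ T : ℝ) (xh : EN N)
    (p q : ℝ × EN N) : Prop where
  fst_mem : p.1 ∈ Icc 0 T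
  snd_mem : q.1 ∈ Icc 0 T
  le : ∀ p' q' : ℝ × EN N, p'.1 ∈ Icc 0 T → q'.1 ∈ Icc 0 T →
    doubledGap U V P c p' q' + γ * cutoff N (p'.2 - xh)
      ≤ doubledGap U V P c p q + γ * cutoff N (p.2 - xh)

theorem continuousOn_doubledGap (hU : IsContLocBdd N U) (hV : IsContLocBdd N V)
    (hP : Continuous P) (c T : ℝ) :
    ContinuousOn (fun z : (ℝ × EN N) × (ℝ × EN N) => doubledGap U V P c z.1 z.2)
      ((Icc 0 T ×ˢ univ) ×ˢ (Icc 0 T ×ˢ univ)) :=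
  (((((hU.continuousOn_Icc_prod T univ).comp continuousOn_fst fun _ hz => hz.1).sub
    ((hV.continuousOn_Icc_prod T univ).comp continuousOn_snd fun _ hz => hz.2)).sub
    (continuous_sqDist.const_mul c).continuousOn).sub
    (hP.comp continuous_fst.fst).continuousOn)

theorem norm_sub_le_of_mul_sqDist_le (hc : 0 < c) (hd : 0 ≤ d) (h : c * sqDist p q ≤ c * d ^ 2) :
    |p.1 - q.1| ≤ d ∧ ‖p.2 - q.2‖ ≤ d := by
  have hsq := le_of_mul_le_mul_left h hc
  unfold sqDist at hsq
  exact ⟨abs_le_of_sq_le_sq (by linarith [sq_nonneg ‖p.2 - q.2‖]) hd,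
    le_of_sq_le_sq (by linarith [sq_nonneg (p.1 - q.1)]) hd⟩

theorem exists_isDoubledMax (hU : IsContLocBdd N U) (hV : IsContLocBdd N V) (hP : Continuous P)
    (hP₀ : ∀ t ∈ Icc 0 T, 0 ≤ P t)
    (hM : ∀ t ∈ Icc 0 T, ∀ t' ∈ Icc 0 T, ∀ x x', U t x - V t' x' ≤ M) (hc : 0 < c)
    (hd : 0 ≤ d) (hcd : M + 1 ≤ c * d ^ 2) (hγ : γ ∈ Ioo 0 1) {p₁ : ℝ × EN N}
    (hp₁ : p₁.1 ∈ Icc 0 T) (hpos : 0 ≤ doubledGap U V P c p₁ p₁) :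
    ∃ xh p q, IsDoubledMax U V P c γ T xh p q ∧
      doubledGap U V P c p₁ p₁ ≤ doubledGap U V P c p q + γ := by
  have hle : ∀ p q : ℝ × EN N, p.1 ∈ Icc 0 T → q.1 ∈ Icc 0 T →
      doubledGap U V P c p q ≤ M - c * sqDist p q := fun p q hp hq => by
    unfold doubledGap
    linarith [hM p.1 hp q.1 hq p.2 q.2, hP₀ p.1 hp]
  have hχ : Continuous (cutoff N) := contDiff_cutoff.continuous
  obtain ⟨a, -, ⟨p, q⟩, ⟨⟨hp, -⟩, ⟨hq, -⟩⟩, hmax, hge⟩ := exists_max_perturbed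
    (θ := fun a z : (ℝ × EN N) × (ℝ × EN N) => cutoff N (z.1.2 - a.1.2)) (p₁ := (p₁, p₁))
    (continuousOn_doubledGap hU hV hP c T)
    ⟨M, by
      rintro _ ⟨⟨p, q⟩, ⟨⟨hp, -⟩, ⟨hq, -⟩⟩, rfl⟩
      exact (hle p q hp hq).trans (sub_le_self M (mul_nonneg hc.le (sqDist_nonneg p q)))⟩
    (fun a => by fun_prop) (fun a z => cutoff_le_one _) (fun a => by simp [cutoff_zero]) hγ.1
    ⟨⟨hp₁, trivial⟩, hp₁, trivial⟩ (by
      refine fun a _ => ⟨(Icc 0 T ×ˢ closedBall a.1.2 1) ×ˢ (Icc 0 T ×ˢ closedBall a.1.2 (1 + d)),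
        (isCompact_Icc.prod (isCompact_closedBall _ _)).prod
          (isCompact_Icc.prod (isCompact_closedBall _ _)),
        by gcongr <;> exact subset_univ _, ?_⟩
      rintro ⟨p, q⟩ ⟨⟨hp, -⟩, ⟨hq, -⟩⟩ hout
      refine or_iff_not_imp_left.2 fun hχ₀ => ?_
      have hpa : ‖p.2 - a.1.2‖ ≤ 1 := (not_le.1 fun h => hχ₀ (cutoff_eq_zero h)).le
      have hfar : c * d ^ 2 ≤ c * sqDist p q := le_of_not_ge fun h => by
        refine hout ⟨⟨hp, mem_closedBall_iff_norm.2 hpa⟩, hq, mem_closedBall_iff_norm.2 ?_⟩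
        have hqp := (norm_sub_le_of_mul_sqDist_le hc hd h).2
        rw [norm_sub_rev] at hqp
        linarith [norm_sub_le_norm_sub_add_norm_sub q.2 p.2 a.1.2]
      linarith [hle p q hp hq, hγ.2])
  have := mul_le_mul_of_nonneg_left (cutoff_le_one (p.2 - a.1.2)) hγ.1.le
  dsimp only at hge
  exact ⟨a.1.2, p, q, ⟨hp, hq, fun p' q' hp' hq' =>
    hmax (p', q') ⟨⟨hp', trivial⟩, hq', trivial⟩⟩, by linarith⟩

/-- The conditions on the parameters of the doubling: the penalization in time costs at most `η/2`
up to time `T` and exceeds the bound `M` of the gap after time `T + 1`, the two points are at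
distance at most `d`, and a gap of `η/4` takes at least the time `τ₀` to build up when both
functions move at most at speed `k` away from a `Λ`-Lipschitz initial datum. -/
structure IsDoublingScale (Λ k M η T κ A τ₀ d c : ℝ) : Prop where
  slope_pos : 0 < κ
  slope_mul_le : κ * T ≤ η / 2
  le_height : M ≤ A
  height_nonneg : 0 ≤ A
  start_pos : 0 < τ₀
  start_le : τ₀ ≤ 1
  dist_pos : 0 < d
  dist_le : d ≤ τ₀ / 2
  weight_pos : 0 < c
  le_weight : M + 1 ≤ c * d ^ 2
  speed_le : Λ * d + k * (2 * τ₀ + d) ≤ η / 4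

theorem exists_isDoublingScale {Λ k : ℝ} (hΛ : 0 ≤ Λ) (hk : 0 ≤ k) (hM : 0 ≤ M) (hη : 0 < η)
    (hT : 0 < T) : ∃ κ A τ₀ d c, IsDoublingScale Λ k M η T κ A τ₀ d c := by
  obtain ⟨τ, hτ, hτη⟩ := exists_pos_mul_lt (by positivity : 0 < η / 4) (Λ + 3 * k)
  have hτ₀ : 0 < min 1 τ := by positivity
  have hspeed : (Λ + 3 * k) * min 1 τ ≤ η / 4 :=
    (mul_le_mul_of_nonneg_left (min_le_right 1 τ) (by positivity)).trans hτη.le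
  refine ⟨η / (2 * T), M, min 1 τ, min 1 τ / 2, (M + 1) / (min 1 τ / 2) ^ 2,
    { slope_pos := by positivity
      slope_mul_le := le_of_eq (by field_simp)
      le_height := le_rfl
      height_nonneg := hM
      start_pos := hτ₀
      start_le := min_le_left 1 τ
      dist_pos := half_pos hτ₀
      dist_le := le_rfl
      weight_pos := by positivity
      le_weight := le_of_eq (by field_simp)
      speed_le := by linarith [mul_nonneg hΛ hτ₀.le, mul_nonneg hk hτ₀.le] }⟩

/-- The two points of the doubling are away from the initial and the final time and close to each
other. -/
structure IsLocalized (T τ₀ d : ℝ) (p q : ℝ × EN N) : Prop where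
  start_le : τ₀ ≤ p.1
  le_end : p.1 ≤ T + 1
  abs_sub_le : |p.1 - q.1| ≤ d
  norm_sub_le : ‖p.2 - q.2‖ ≤ d

theorem IsDoublingScale.isLocalized {Λ : NNReal} {k τ₀ : ℝ}
    (h : IsDoublingScale Λ k M η T κ A τ₀ d c) (hη : 0 < η) (hk : 0 ≤ k) {u₀ : EN N → ℝ}
    (hu₀ : LipschitzWith Λ u₀) (hU : ∀ t, 0 ≤ t → ∀ x, U t x ≤ u₀ x + k * t)
    (hV : ∀ t, 0 ≤ t → ∀ x, u₀ x - k * t ≤ V t x) (hp : 0 ≤ p.1) (hq : 0 ≤ q.1)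
    (hM : U p.1 p.2 - V q.1 q.2 ≤ M)
    (hgap : η / 4 < doubledGap U V (timePenalty κ A T) c p q) : IsLocalized T τ₀ d p q := by
  have hP := timePenalty_nonneg (T := T) h.slope_pos.le h.height_nonneg hp
  have hdist := mul_nonneg h.weight_pos.le (sqDist_nonneg p q)
  unfold doubledGap at hgap
  obtain ⟨htime, hspace⟩ := norm_sub_le_of_mul_sqDist_le (p := p) (q := q) h.weight_pos
    h.dist_pos.le (by linarith [h.le_weight])
  refine ⟨?_, ?_, htime, hspace⟩
  · by_contra! hlt
    have hu := (le_abs_self _).trans (hu₀.dist_le_mul p.2 q.2)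
    rw [dist_eq_norm] at hu
    have := mul_le_mul_of_nonneg_left hspace Λ.coe_nonneg
    have : k * (p.1 + q.1) ≤ k * (2 * τ₀ + d) :=
      mul_le_mul_of_nonneg_left (by linarith [(abs_le.1 htime).1]) hk
    linarith [hU p.1 hp p.2, hV q.1 hq q.2, h.speed_le]
  · by_contra! hlt
    linarith [le_timePenalty (A := A) h.slope_pos.le hp hlt.le, h.le_height]

theorem norm_add_sq_sub_le {a z : EN N} (ha : ‖a‖ ≤ 1 / 2) (hz : ‖z‖ ≤ 1) :
    ‖a + z‖ ^ 2 - ‖a‖ ^ 2 ≤ 2 * ‖z‖ := by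
  have : ‖a + z‖ ^ 2 ≤ (‖a‖ + ‖z‖) ^ 2 := by gcongr; exact norm_add_le a z
  nlinarith [norm_nonneg a, norm_nonneg z]

theorem sqDist_sub_eq (t : ℝ) (z : EN N) :
    sqDist (t, p.2 + z) q - sqDist p q
      = (t - p.1) * (2 * (p.1 - q.1)) + (t - p.1) ^ 2
        + (‖p.2 - q.2 + z‖ ^ 2 - ‖p.2 - q.2‖ ^ 2) := by
  rw [sqDist, sqDist, add_sub_right_comm p.2 z q.2]
  ring

theorem sqDist_sub_le (hp : p.1 ∈ Icc 0 T) (htime : |p.1 - q.1| ≤ 1 / 2)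
    (hspace : ‖p.2 - q.2‖ ≤ 1 / 2) {t : ℝ} (ht : t ∈ Icc 0 T) {z : EN N} (hz : ‖z‖ ≤ 1) :
    sqDist (t, p.2 + z) q - sqDist p q ≤ (T + 1) * |t - p.1| + 2 * ‖z‖ := by
  have hfactor : |2 * (p.1 - q.1) + (t - p.1)| ≤ T + 1 := by
    rw [abs_le] at *
    constructor <;> linarith [ht.1, ht.2, hp.1, hp.2]
  have := mul_le_mul_of_nonneg_right hfactor (abs_nonneg (t - p.1))
  rw [← abs_mul] at this
  have := (le_abs_self _).trans this
  rw [sqDist_sub_eq]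
  linarith [norm_add_sq_sub_le hspace hz]

/-- The constant in the contact conditions satisfied by `U` at a maximum of the doubling. -/
noncomputable def touchConst (N : ℕ) (κ A c T : ℝ) : ℝ :=
  c * (T + 3) + cutoffLip N + κ + A * transitionLip

theorem touchConst_nonneg (hκ : 0 ≤ κ) (hA : 0 ≤ A) (hc : 0 ≤ c) (hT : 0 ≤ T) :
    0 ≤ touchConst N κ A c T := by
  unfold touchConst
  positivity

theorem IsDoubledMax.fst_le (h : IsDoubledMax U V P c γ T xh p q) (hγ : γ ∈ Ioo 0 1) {t : ℝ}
    (ht : t ∈ Icc 0 T) (z : EN N) :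
    U t (p.2 + z) - U p.1 p.2 ≤ c * (sqDist (t, p.2 + z) q - sqDist p q) + (P t - P p.1)
      + cutoffLip N * ‖z‖ := by
  have hmax := h.le (t, p.2 + z) q ht h.snd_mem
  have hlip := (le_abs_self _).trans (abs_cutoff_sub_le (p.2 - xh) (p.2 + z - xh))
  rw [sub_sub_sub_cancel_right, sub_add_cancel_left, norm_neg] at hlip
  have := mul_le_mul_of_nonneg_left hlip hγ.1.le
  have := mul_le_of_le_one_left (by positivity : 0 ≤ cutoffLip N * ‖z‖) hγ.2.le
  simp only [doubledGap] at hmax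
  linarith

theorem IsDoubledMax.fst_translate_le (h : IsDoubledMax U V P c γ T xh p q) (hγ : 0 ≤ γ) {t : ℝ}
    (ht : t ∈ Icc 0 T) (z Z : EN N) :
    U t (p.2 + z + Z) - U p.1 p.2 ≤ V q.1 (q.2 + Z) - V q.1 q.2
      + c * (sqDist (t, p.2 + z) q - sqDist p q) + (P t - P p.1) + γ := by
  have hmax := h.le (t, p.2 + z + Z) (q.1, q.2 + Z) ht h.snd_mem
  have := mul_le_mul_of_nonneg_left (cutoff_le_one (p.2 - xh)) hγ
  have := mul_nonneg hγ (cutoff_nonneg (p.2 + z + Z - xh))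
  simp only [doubledGap, sqDist_add_right] at hmax
  linarith

theorem IsDoubledMax.isTouchedAbove (h : IsDoubledMax U V (timePenalty κ A T) c γ (T + 2) xh p q)
    (hT : 0 ≤ T) (hκ : 0 ≤ κ) (hA : 0 ≤ A) (hc : 0 ≤ c) (hγ : γ ∈ Ioo 0 1)
    (htime : |p.1 - q.1| ≤ 1 / 2) (hspace : ‖p.2 - q.2‖ ≤ 1 / 2) (r : ℝ) :
    IsTouchedAbove U (T + 2) p.1 (2 * c * (p.1 - q.1) + κ) (touchConst N κ A c T) γ r p.2 q.2
      (V q.1) := by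
  have : (0 : ℝ) ≤ cutoffLip N := (cutoffLip N).coe_nonneg
  have : 0 ≤ κ + A * transitionLip := by positivity
  have : 0 ≤ c * T := by positivity
  have hdist : ∀ t ∈ Icc 0 (T + 2), ∀ z : EN N, ‖z‖ ≤ 1 →
      c * (sqDist (t, p.2 + z) q - sqDist p q)
        + (timePenalty κ A T t - timePenalty κ A T p.1)
      ≤ (touchConst N κ A c T - cutoffLip N) * (|t - p.1| + ‖z‖) := fun t ht z hz => by
    have hd := mul_le_mul_of_nonneg_left (sqDist_sub_le h.fst_mem htime hspace ht hz) hc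
    have := timePenalty_sub_le (T := T) (t' := t) (t := p.1) hκ hA
    have : 0 ≤ (c * (T + 1) + (κ + A * transitionLip)) * ‖z‖ := by positivity
    unfold touchConst
    linarith
  refine ⟨fun t ht z hz => ?_, fun t ht z hz => ?_, fun t ht z hz Z _ => ?_⟩
  · have hmax := h.fst_le hγ ⟨ht.1, ht.2.trans h.fst_mem.2⟩ z
    rw [sqDist_sub_eq] at hmax
    have := timePenalty_sub_le_of_le (κ := κ) (T := T) hA ht.2
    have := mul_le_mul_of_nonneg_left (norm_add_sq_sub_le hspace hz) hc
    have : 0 ≤ (c * (T + 2) + (cutoffLip N + (κ + A * transitionLip))) * (t - p.1) ^ 2 := by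
      positivity
    have : 0 ≤ (c * (T + 1) + (κ + A * transitionLip)) * ‖z‖ := by positivity
    unfold touchConst
    linarith
  · have : 0 ≤ cutoffLip N * |t - p.1| := by positivity
    linarith [h.fst_le hγ ht z, hdist t ht z hz]
  · have : 0 ≤ cutoffLip N * (|t - p.1| + ‖z‖) := by positivity
    linarith [h.fst_translate_le hγ.1.le ht z Z, hdist t ht z hz]

theorem abs_levyI1_neg_mul_sqDist_le (hs : s ∈ Ioo (0 : ℝ) (1 / 2)) (hg : IsAngularDensity g)
    (hc : 0 ≤ c) {r : ℝ} (hr : r ≤ 1) (p : ℝ × EN N) (t : ℝ) (x : EN N) :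
    |levyI1 N s g (fun y => -(c * sqDist (t, y) p)) r x| ≤ c * nearMoment s g r := by
  refine abs_levyI1_le hs hg fun z hz => ?_
  have hsq : HasFDerivAt (fun y : EN N => ‖y - p.2‖ ^ 2) (2 • innerSL ℝ (x - p.2)) x := by
    simpa using ((hasFDerivAt_id x).sub_const p.2).norm_sq
  have hD : HasFDerivAt (fun y : EN N => -(c * sqDist (t, y) p))
      (-(c • 2 • innerSL ℝ (x - p.2))) x :=
    ((hsq.const_add ((t - p.1) ^ 2)).const_mul c).neg
  have hexpand : -(c * sqDist (t, x + z) p) - -(c * sqDist (t, x) p)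
      - (-(c • 2 • innerSL ℝ (x - p.2))) z = -(c * ‖z‖ ^ 2) := by
    have := norm_add_sq_real (x - p.2) z
    rw [sub_add_eq_add_sub] at this
    simp only [sqDist, this, neg_apply, smul_apply, innerSL_apply_apply, smul_eq_mul, nsmul_eq_mul]
    push_cast
    ring
  rw [hD.fderiv, hexpand, abs_neg, abs_of_nonneg (by positivity), pow_two]
  have := mul_le_of_le_one_left (norm_nonneg z) (hz.trans hr)
  gcongr

theorem IsDoubledMax.snd_min (h : IsDoubledMax U V P c γ T xh p q) {t : ℝ} (ht : t ∈ Icc 0 T)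
    (x : EN N) : V q.1 q.2 - -(c * sqDist q p) ≤ V t x - -(c * sqDist (t, x) p) := by
  have := h.le p (t, x) h.fst_mem ht
  simp only [doubledGap, sqDist_comm p] at this
  linarith

theorem IsDoubledMax.neg_le_levyI2 (h : IsDoubledMax U V P c γ T xh p q)
    (hs : s ∈ Ioo (0 : ℝ) (1 / 2)) (hg : IsAngularDensity g) (hV : IsContLocBdd N V)
    (hM : ∀ t ∈ Icc 0 T, ∀ x, |V t x| ≤ M) (hc : 0 ≤ c) (hspace : ‖p.2 - q.2‖ ≤ 1 / 2) {r : ℝ}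
    (hr : r ∈ Ioc 0 1) :
    -(2 * M * tailMass s g 1 + 2 * c * nearMoment s g 1) ≤ levyI2 N s g (V q.1) r q.2 := by
  have hle := levyI2_le_of_near_far hs hg (hV.neg.slice h.snd_mem.1) isContBdd_zero (ρ := r)
    (R := 1) (a := 0) (C := 2 * c) (γ := 2 * M) (x := q.2) (y := q.2) hr.1 hr.2 (by positivity)
    (fun z _ hz => by
      have hmin := h.snd_min h.snd_mem (q.2 + z)
      have hincr := sqDist_sub_eq (p := q) (q := p) q.1 z
      have := norm_add_sq_sub_le (norm_sub_rev p.2 q.2 ▸ hspace) hz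
      rw [sub_self, zero_mul, zero_pow two_ne_zero, zero_add, zero_add] at hincr
      have : c * (sqDist (q.1, q.2 + z) p - sqDist q p) ≤ c * (2 * ‖z‖) := by
        rw [hincr]
        gcongr
      linarith)
    (fun z _ => by
      linarith [(abs_le.1 (hM q.1 h.snd_mem (q.2 + z))).1, (abs_le.1 (hM q.1 h.snd_mem q.2)).2])
  have hzero : levyI2 N s g (fun _ => 0) 1 q.2 = 0 := by simp [levyI2]
  rw [levyI2_neg, hzero] at hle
  linarith

theorem IsDoubledMax.exists_effective_le (h : IsDoubledMax U V P c γ T xh p q)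
    (hs : s ∈ Ioo (0 : ℝ) (1 / 2)) (hg : IsAngularDensity g) {H : ℝ → ℝ}
    (hV : ViscSup N s g (fun _ _ _ I => H I) V) (hc : 0 ≤ c) (hq : q.1 ∈ Ioo 0 T) {r : ℝ}
    (hr : r ∈ Ioc 0 1) :
    ∃ l, H l ≤ 2 * c * (p.1 - q.1) ∧ |l - levyI2 N s g (V q.1) r q.2| ≤ c * nearMoment s g r := by
  have hφ : ContDiff ℝ 2 fun z : ℝ × EN N => -(c * sqDist (z.1, z.2) p) :=
    ((contDiff_sqDist p).const_smul c).neg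
  have hD : HasDerivAt (fun t => -(c * sqDist (t, q.2) p)) (2 * c * (p.1 - q.1)) q.1 :=
    (((hasDerivAt_sqDist q.1 q.2 p).const_mul c).neg).congr_deriv (by ring)
  refine ⟨_, hV.test hq.1 hq.2 (φ := fun t x => -(c * sqDist (t, x) p)) hφ hr.1
    (fun t ht x _ => h.snd_min ht x) hD, ?_⟩
  rw [add_sub_cancel_right]
  exact abs_levyI1_neg_mul_sqDist_le hs hg hc hr.2 p q.1 q.2

end Doubled

/-! ### One-sided convergence -/

section OneSided

variable {N : ℕ} {s : ℝ} {g : EN N → ℝ} {f : ℝ → ℝ} {σ : ℝ → EN N → ℝ} {H : ℝ → ℝ} {C : ℝ}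

/-- A supersolution of the cell problem with forcing `L` that is nonnegative initially and grows
with asymptotic slope `lam`. -/
structure IsSuperCorrector (s : ℝ) (g : EN N → ℝ) (f : ℝ → ℝ) (σ : ℝ → EN N → ℝ) (L lam : ℝ)
    (w : ℝ → EN N → ℝ) : Prop where
  viscSup : ViscSup N s g (cellRHS f σ L) w
  isContLocBdd : IsContLocBdd N w
  initial_nonneg : ∀ y, 0 ≤ w 0 y
  slopeLim : SlopeLim N w lam

theorem IsSuperCorrector.sub_le_slope {w : ℝ → EN N → ℝ} {L lam : ℝ}
    (hw : IsSuperCorrector s g f σ L lam w) (hs : s ∈ Ioo (0 : ℝ) (1 / 2))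
    (hg : IsAngularDensity g) (hC : ∀ v t x, |σ t x - f v| ≤ C) : L - C ≤ lam := by
  have hgrowth : ∀ τ, 0 ≤ τ → (L - C) * τ ≤ w τ 0 := fun τ hτ => by
    have := hw.viscSup.ge_linear_barrier (C := C - L) (u₀ := fun _ => 0) (M₀ := 0) (Λ := 0) hs hg
      (fun t x v I => by
        have := (abs_le.1 (hC v t x)).1
        unfold cellRHS
        linarith)
      hw.isContLocBdd contDiff_const (by simp) (.const 0) hw.initial_nonneg hτ 0
    simp only [NNReal.coe_zero, mul_zero, zero_mul, add_zero] at this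
    linarith
  refine le_of_forall_pos_le_add fun e he => ?_
  obtain ⟨T, hT⟩ := hw.slopeLim e he 1 one_pos
  have hpos : 0 < max T 1 := lt_max_of_lt_right one_pos
  have hslope := (abs_le.1 (hT (max T 1) (le_max_left T 1) 0 (by simp))).2
  have := (le_div_iff₀ hpos).2 (hgrowth (max T 1) hpos.le)
  linarith

theorem ViscSub.le_linear_barrier {F : ℝ → EN N → ℝ → ℝ → ℝ} {u : ℝ → EN N → ℝ} {u₀ : EN N → ℝ}
    {M₀ t : ℝ} {Λ : NNReal} (hu : ViscSub N s g F u) (hs : s ∈ Ioo (0 : ℝ) (1 / 2))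
    (hg : IsAngularDensity g) (hF : ∀ t x v I, F t x v I ≤ I + C) (hreg : IsContLocBdd N u)
    (hu₀ : ContDiff ℝ 2 u₀) (hM₀ : ∀ x, |u₀ x| ≤ M₀) (hΛ : LipschitzWith Λ u₀)
    (hinit : ∀ x, u 0 x ≤ u₀ x) (ht : 0 ≤ t) (x : EN N) :
    u t x ≤ u₀ x + (C + 2 * Λ * nearMoment s g 1 + 2 * M₀ * tailMass s g 1) * t := by
  have := hu.neg.ge_linear_barrier (u₀ := fun x => -u₀ x) hs hg (C := C)
    (fun t x v I => by
      unfold reflectRHS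
      linarith [hF t x (-v) (-I)])
    hreg.neg hu₀.neg (by simpa using hM₀) hΛ.neg (fun x => neg_le_neg (hinit x)) ht x
  linarith

/-- The scales of the one-sided comparison: forcings vary by `δ`, the nonlocal operator is split
at radius `r`, and the bump has height `γ`. -/
structure IsFineScale (s : ℝ) (g : EN N → ℝ) (H : ℝ → ℝ) (Λ e B η δ r γ : ℝ) : Prop where
  step_mem : δ ∈ Ioc 0 1
  radius_mem : r ∈ Ioc 0 (1 / 2)
  height_mem : γ ∈ Ioo 0 1
  height_lt : γ < η / 4
  modulus : ∀ a ∈ Icc (-Λ) Λ, ∀ b ∈ Icc a (a + 4 * δ), H b ≤ H a + e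
  near_le : B * nearMoment s g r ≤ δ / 2
  far_le : γ * tailMass s g r ≤ δ / 2

theorem exists_modulus (hH : Continuous H) (Λ : ℝ) {e : ℝ} (he : 0 < e) :
    ∃ δ ∈ Ioc 0 1, ∀ a ∈ Icc (-Λ) Λ, ∀ b ∈ Icc a (a + 4 * δ), H b ≤ H a + e := by
  obtain ⟨δ, hδ, h⟩ := Metric.uniformContinuousOn_iff.1
    ((isCompact_Icc (a := -Λ) (b := Λ + 4)).uniformContinuousOn_of_continuous hH.continuousOn) e he
  have h₁ := min_le_left 1 (δ / 8)
  have h₂ := min_le_right 1 (δ / 8)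
  refine ⟨min 1 (δ / 8), ⟨by positivity, h₁⟩, fun a ha b hb => ?_⟩
  have hdist := h b ⟨ha.1.trans hb.1, by linarith [hb.2, ha.2]⟩ a ⟨ha.1, by linarith [ha.2]⟩ (by
    rw [Real.dist_eq, abs_of_nonneg (sub_nonneg.2 hb.1)]
    linarith [hb.2])
  rw [Real.dist_eq] at hdist
  linarith [(abs_lt.1 hdist).2]

theorem exists_isFineScale (hs : s < 1 / 2) (hH : Continuous H) (Λ B : ℝ) {e η : ℝ} (he : 0 < e)
    (hη : 0 < η) : ∃ δ r γ, IsFineScale s g H Λ e B η δ r γ := by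
  obtain ⟨δ, hδ, hmod⟩ := exists_modulus hH Λ he
  have hnear := (tendsto_nearMoment_zero (g := g) hs).const_mul B
  rw [mul_zero] at hnear
  obtain ⟨r, hnear_le, hr⟩ := ((hnear.eventually_le_const (half_pos hδ.1)).and
    (Ioc_mem_nhdsGT one_half_pos)).exists
  have hfar : Tendsto (fun γ => γ * tailMass s g r) (𝓝[>] 0) (𝓝 0) := by
    simpa using (tendsto_nhdsWithin_of_tendsto_nhds (tendsto_id (x := 𝓝 (0 : ℝ)))).mul_const
      (tailMass s g r)
  obtain ⟨γ, ⟨hfar_le, hγ⟩, hγ_lt⟩ := (((hfar.eventually_le_const (half_pos hδ.1)).and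
    (Ioo_mem_nhdsGT one_pos)).and (Ioo_mem_nhdsGT (show 0 < η / 4 by positivity))).exists
  exact ⟨δ, r, γ, hδ, hr, hγ, hγ_lt.2, hmod, hnear_le, hfar_le⟩

theorem exists_mem_grid {δ Λ l : ℝ} (hδ : 0 < δ) (hl : l ∈ Icc (-Λ) Λ) :
    ∃ k ∈ Finset.Icc (⌈-Λ / δ⌉ + 3) (⌈Λ / δ⌉ + 3), l + 3 * δ ≤ k * δ ∧ k * δ ≤ l + 4 * δ := by
  have hdiv : l / δ * δ = l := div_mul_cancel₀ l hδ.ne'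
  refine ⟨⌈l / δ⌉ + 3, Finset.mem_Icc.2 ⟨?_, ?_⟩, ?_, ?_⟩
  · exact add_le_add_left (Int.ceil_mono (div_le_div_of_nonneg_right hl.1 hδ.le)) 3
  · exact add_le_add_left (Int.ceil_mono (div_le_div_of_nonneg_right hl.2 hδ.le)) 3
  · have := mul_le_mul_of_nonneg_right (Int.le_ceil (l / δ)) hδ.le
    push_cast
    linarith
  · have := mul_le_mul_of_nonneg_right (Int.ceil_lt_add_one (l / δ)).le hδ.le
    push_cast
    linarith

section Doubled

variable {U V : ℝ → EN N → ℝ} {κ A c T M η γ τ₀ d B e δ r : ℝ} {xh : EN N} {p q : ℝ × EN N}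

theorem IsDoublingScale.exists_isDoubledMax {L : NNReal} {k : ℝ}
    (h : IsDoublingScale L k M η T κ A τ₀ d c) (hη : 0 < η) (hk : 0 ≤ k) {u₀ : EN N → ℝ}
    (hu₀ : LipschitzWith L u₀) (hUr : IsContLocBdd N U) (hVr : IsContLocBdd N V)
    (hU : ∀ t, 0 ≤ t → ∀ x, U t x ≤ u₀ x + k * t) (hV : ∀ t, 0 ≤ t → ∀ x, u₀ x - k * t ≤ V t x)
    (hM : ∀ t ∈ Icc 0 (T + 2), ∀ t' ∈ Icc 0 (T + 2), ∀ x x', U t x - V t' x' ≤ M)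
    (hγ : γ ∈ Ioo 0 1) (hγη : γ < η / 4) {t₁ : ℝ} (ht₁ : t₁ ∈ Icc 0 T) {x₁ : EN N}
    (hgap : η < U t₁ x₁ - V t₁ x₁) :
    ∃ xh p q, IsDoubledMax U V (timePenalty κ A T) c γ (T + 2) xh p q ∧
      IsLocalized T τ₀ d p q := by
  have hstart : η / 2 ≤ doubledGap U V (timePenalty κ A T) c (t₁, x₁) (t₁, x₁) := by
    have := mul_le_mul_of_nonneg_left ht₁.2 h.slope_pos.le
    rw [doubledGap, sqDist_self, timePenalty_of_le ht₁.2]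
    linarith [h.slope_mul_le]
  obtain ⟨xh, p, q, hmax, hle⟩ := _root_.exists_isDoubledMax hUr hVr continuous_timePenalty
    (fun t ht => timePenalty_nonneg h.slope_pos.le h.height_nonneg ht.1) hM h.weight_pos
    h.dist_pos.le h.le_weight hγ (p₁ := (t₁, x₁)) ⟨ht₁.1, by linarith [ht₁.2]⟩ (by linarith)
  exact ⟨xh, p, q, hmax, h.isLocalized hη hk hu₀ hU hV hmax.fst_mem.1 hmax.snd_mem.1
    (hM _ hmax.fst_mem _ hmax.snd_mem _ _) (by linarith)⟩

/-- A bound for the values of the nonlocal operator at the maximum points of the doubling. -/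
noncomputable def levyRange (s : ℝ) (g : EN N → ℝ) (M c C : ℝ) : ℝ :=
  2 * M * tailMass s g 1 + 2 * c * nearMoment s g 1 + c + C + 1

theorem IsDoubledMax.exists_grid_forcing {P : ℝ → ℝ} (h : IsDoubledMax U V P c γ T xh p q)
    (hs : s ∈ Ioo (0 : ℝ) (1 / 2)) (hg : IsAngularDensity g) (hVr : IsContLocBdd N V)
    (hV : ViscSup N s g (fun _ _ _ I => H I) V) (hM : ∀ t ∈ Icc 0 T, ∀ x, |V t x| ≤ M)
    (hc : 0 ≤ c) (hC : 0 ≤ C) (hHC : ∀ l, l - C ≤ H l) (hq : q.1 ∈ Ioo 0 T)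
    (htime : |p.1 - q.1| ≤ 1 / 2) (hspace : ‖p.2 - q.2‖ ≤ 1 / 2) (hB : 0 ≤ B)
    (hfine : IsFineScale s g H (levyRange s g M c C) e (B + c) η δ r γ) :
    ∃ k ∈ Finset.Icc (⌈-levyRange s g M c C / δ⌉ + 3) (⌈levyRange s g M c C / δ⌉ + 3),
      levyI2 N s g (V q.1) r q.2 + B * nearMoment s g r + γ * tailMass s g r ≤ k * δ - 2 * δ ∧
      H (k * δ) ≤ 2 * c * (p.1 - q.1) + e := by
  have hr : r ∈ Ioc 0 1 := ⟨hfine.radius_mem.1, hfine.radius_mem.2.trans (by norm_num)⟩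
  obtain ⟨l, hl, hdiff⟩ := h.exists_effective_le hs hg hV hc hq hr
  have hlow := h.neg_le_levyI2 hs hg hVr hM hc hspace hr
  have hM₀ : 0 ≤ M := (abs_nonneg _).trans (hM q.1 h.snd_mem q.2)
  have hBr := mul_nonneg hB (nearMoment_nonneg hs.1 hg r)
  have hnear := hfine.near_le
  have hfar := hfine.far_le
  have hslope : 2 * c * (p.1 - q.1) ≤ c := by nlinarith [(abs_le.1 htime).2]
  have hrange : l ∈ Icc (-levyRange s g M c C) (levyRange s g M c C) := by
    have := mul_nonneg hM₀ (tailMass_nonneg hs.1 hg 1)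
    have := mul_nonneg hc (nearMoment_nonneg hs.1 hg 1)
    unfold levyRange
    constructor <;> linarith [(abs_le.1 hdiff).1, hfine.step_mem.2, hHC l]
  obtain ⟨k, hk, hlow_k, hup_k⟩ := exists_mem_grid hfine.step_mem.1 hrange
  refine ⟨k, hk, by linarith [(abs_le.1 hdiff).1], ?_⟩
  linarith [hfine.modulus l hrange (k * δ) ⟨by linarith [hfine.step_mem.1], hup_k⟩]

end Doubled

/-- A family of subsolutions of the oscillating problems that rise above `u₀` at speed at most
`k`. -/
structure IsOscSubFamily (s : ℝ) (g : EN N → ℝ) (f : ℝ → ℝ) (σ : ℝ → EN N → ℝ) (u₀ : EN N → ℝ)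
    (k : ℝ) (U : ℝ → ℝ → EN N → ℝ) : Prop where
  viscSub : ∀ ε, 0 < ε → ViscSub N s g (oscRHS s f σ ε) (U ε)
  isContLocBdd : ∀ ε, 0 < ε → IsContLocBdd N (U ε)
  le_add : ∀ ε, 0 < ε → ∀ t, 0 ≤ t → ∀ x, U ε t x ≤ u₀ x + k * t

/-- A supersolution of the effective problem that sinks below `u₀` at speed at most `k`. -/
structure IsEffectiveSup (s : ℝ) (g : EN N → ℝ) (H : ℝ → ℝ) (u₀ : EN N → ℝ) (k : ℝ)
    (V : ℝ → EN N → ℝ) : Prop where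
  viscSup : ViscSup N s g (fun _ _ _ I => H I) V
  isContLocBdd : IsContLocBdd N V
  sub_le : ∀ t, 0 ≤ t → ∀ x, u₀ x - k * t ≤ V t x

variable {K Λ : NNReal} {u₀ : EN N → ℝ} {U : ℝ → ℝ → EN N → ℝ} {V : ℝ → EN N → ℝ}
  {k κ A c T M M' η γ τ₀ d δ r : ℝ}

theorem IsMedium.eventually_sub_le_of_scales (hs : s ∈ Ioo (0 : ℝ) (1 / 2))
    (hg : IsAngularDensity g) (hmed : IsMedium N K f σ)
    (hcell : ∀ L, ∃ w, IsSuperCorrector s g f σ L (H L) w) (hU : IsOscSubFamily s g f σ u₀ k U)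
    (hV : IsEffectiveSup s g H u₀ k V) (hC : 0 ≤ C) (hHC : ∀ l, l - C ≤ H l)
    (hΛ : LipschitzWith Λ u₀) (hk : 0 ≤ k) (hη : 0 < η) (hT : 0 < T)
    (hVM : ∀ t ∈ Icc 0 (T + 2), ∀ x, |V t x| ≤ M)
    (hgap : ∀ ε, 0 < ε → ∀ t ∈ Icc 0 (T + 2), ∀ t' ∈ Icc 0 (T + 2), ∀ x x',
      U ε t x - V t' x' ≤ M')
    (hscale : IsDoublingScale Λ k M' η T κ A τ₀ d c)
    (hfine : IsFineScale s g H (levyRange s g M c C) (κ / 4) (touchConst N κ A c T + c) η δ r γ) :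
    ∀ᶠ ε in 𝓝[>] 0, ∀ t ∈ Icc 0 T, ∀ x, U ε t x - V t x ≤ η := by
  have hκ := hscale.slope_pos
  have hc := hscale.weight_pos.le
  have hB : 0 ≤ touchConst N κ A c T := touchConst_nonneg hκ.le hscale.height_nonneg hc hT.le
  have hgrid := (eventually_all_finset (Finset.Icc (⌈-levyRange s g M c C / δ⌉ + 3)
    (⌈levyRange s g M c C / δ⌉ + 3))).2 fun k _ => by
      obtain ⟨w, hw⟩ := hcell (k * δ)
      exact hmed.eventually_slope_le hs hg hw.viscSup hw.isContLocBdd hw.initial_nonneg hw.slopeLim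
        (show 0 < κ / 2 by positivity) hfine.step_mem.1 hfine.radius_mem hB hscale.start_pos
        (c + κ) γ
  filter_upwards [hgrid, self_mem_nhdsWithin] with ε hslope (hε : 0 < ε) t₁ ht₁ x₁
  by_contra! hlt
  have hUε := hU.isContLocBdd ε hε
  obtain ⟨xh, p, q, hmax, hloc⟩ := hscale.exists_isDoubledMax hη hk hΛ hUε hV.isContLocBdd
    (hU.le_add ε hε) hV.sub_le (hgap ε hε) hfine.height_mem hfine.height_lt ht₁ hlt
  have hτ₀ := hscale.start_le
  have hd : d ≤ 1 / 2 := by linarith [hscale.dist_le]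
  have htime := hloc.abs_sub_le.trans hd
  have hspace := hloc.norm_sub_le.trans hd
  obtain ⟨htime₁, htime₂⟩ := abs_le.1 htime
  have hend := hloc.le_end
  obtain ⟨j, hj, hforce, hHj⟩ := hmax.exists_grid_forcing hs hg hV.isContLocBdd hV.viscSup hVM hc
    hC hHC ⟨by linarith [(abs_le.1 hloc.abs_sub_le).2, hscale.dist_le, hloc.start_le,
      hscale.start_pos], by linarith⟩ htime hspace hB hfine
  have := hslope j hj (U ε) (T + 2) p.1 (2 * c * (p.1 - q.1) + κ) p.2 q.2 (V q.1) hUε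
    (hU.viscSub ε hε) (hV.isContLocBdd.slice hmax.snd_mem.1) hloc.start_le (by linarith)
    (by rw [abs_le]; constructor <;> nlinarith)
    (hmax.isTouchedAbove hT.le hκ.le hscale.height_nonneg hc hfine.height_mem htime hspace r) hforce
  linarith

theorem IsMedium.eventually_sub_le_of_barriers (hs : s ∈ Ioo (0 : ℝ) (1 / 2))
    (hg : IsAngularDensity g) (hmed : IsMedium N K f σ) (hH : Continuous H)
    (hcell : ∀ L, ∃ w, IsSuperCorrector s g f σ L (H L) w) (hU : IsOscSubFamily s g f σ u₀ k U)
    (hV : IsEffectiveSup s g H u₀ k V) (hC : 0 ≤ C) (hHC : ∀ l, l - C ≤ H l)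
    {M₀ : ℝ} (hM₀ : ∀ x, |u₀ x| ≤ M₀) (hΛ : LipschitzWith Λ u₀) (hk : 0 ≤ k) (hη : 0 < η)
    (hT : 0 < T) : ∀ᶠ ε in 𝓝[>] 0, ∀ t ∈ Icc 0 T, ∀ x, U ε t x - V t x ≤ η := by
  obtain ⟨M, hVM⟩ := hV.isContLocBdd.exists_abs_le (T + 2)
  have hM₀_nonneg : 0 ≤ M₀ := (abs_nonneg _).trans (hM₀ 0)
  have hM_nonneg : 0 ≤ M := (abs_nonneg _).trans (hVM 0 ⟨le_rfl, by linarith⟩ 0)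
  have hgap : ∀ ε, 0 < ε → ∀ t ∈ Icc 0 (T + 2), ∀ t' ∈ Icc 0 (T + 2), ∀ x x',
      U ε t x - V t' x' ≤ M₀ + k * (T + 2) + M := fun ε hε t ht t' ht' x x' => by
    linarith [hU.le_add ε hε t ht.1 x, (abs_le.1 (hM₀ x)).2, (abs_le.1 (hVM t' ht' x')).1,
      mul_le_mul_of_nonneg_left ht.2 hk]
  obtain ⟨κ, A, τ₀, d, c, hscale⟩ := exists_isDoublingScale (M := M₀ + k * (T + 2) + M)
    Λ.coe_nonneg hk (by positivity) hη hT
  have hκ := hscale.slope_pos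
  obtain ⟨δ, r, γ, hfine⟩ := exists_isFineScale (g := g) hs.2 hH (levyRange s g M c C)
    (touchConst N κ A c T + c) (show 0 < κ / 4 by positivity) hη
  exact hmed.eventually_sub_le_of_scales hs hg hcell hU hV hC hHC hΛ hk hη hT hVM hgap hscale hfine

theorem IsMedium.eventually_sub_le (hs : s ∈ Ioo (0 : ℝ) (1 / 2)) (hg : IsAngularDensity g)
    (hmed : IsMedium N K f σ) (hC : ∀ v t x, |σ t x - f v| ≤ C) (hH : Continuous H)
    (hcell : ∀ L, ∃ w, IsSuperCorrector s g f σ L (H L) w) (hu₀ : ContDiff ℝ 2 u₀) {M₀ : ℝ}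
    (hM₀ : ∀ x, |u₀ x| ≤ M₀) (hΛ : LipschitzWith Λ u₀)
    (hU : ∀ ε, 0 < ε → ViscSub N s g (oscRHS s f σ ε) (U ε))
    (hUr : ∀ ε, 0 < ε → IsContLocBdd N (U ε)) (hU₀ : ∀ ε, 0 < ε → ∀ x, U ε 0 x ≤ u₀ x)
    (hV : ViscSup N s g (fun _ _ _ I => H I) V) (hVr : IsContLocBdd N V)
    (hV₀ : ∀ x, u₀ x ≤ V 0 x) (hη : 0 < η) (hT : 0 < T) :
    ∀ᶠ ε in 𝓝[>] 0, ∀ t ∈ Icc 0 T, ∀ x, U ε t x - V t x ≤ η := by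
  have hC_nonneg : 0 ≤ C := (abs_nonneg _).trans (hC 0 0 0)
  have hM₀_nonneg : 0 ≤ M₀ := (abs_nonneg _).trans (hM₀ 0)
  have hHC : ∀ l, l - C ≤ H l := fun l => by
    obtain ⟨w, hw⟩ := hcell l
    exact hw.sub_le_slope hs hg hC
  have hoscC : ∀ ε t x v I, oscRHS s f σ ε t x v I ≤ I + C := fun ε t x v I => by
    have := (abs_le.1 (hC (v / ε ^ (2 * s)) (t / ε ^ (2 * s)) (ε⁻¹ • x))).2
    unfold oscRHS
    linarith
  have hnear := nearMoment_nonneg hs.1 hg 1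
  have htail := tailMass_nonneg hs.1 hg 1
  exact hmed.eventually_sub_le_of_barriers
    (k := C + 2 * Λ * nearMoment s g 1 + 2 * M₀ * tailMass s g 1) hs hg hH hcell
    ⟨hU, hUr, fun ε hε t ht x => (hU ε hε).le_linear_barrier hs hg (hoscC ε) (hUr ε hε) hu₀ hM₀ hΛ
      (hU₀ ε hε) ht x⟩
    ⟨hV, hVr, fun t ht x => hV.ge_linear_barrier hs hg (fun _ _ _ I => hHC I) hVr hu₀ hM₀ hΛ hV₀
      ht x⟩
    hC_nonneg hHC hM₀ hΛ (by positivity) hη hT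

end OneSided

/-! ### Two-sided convergence -/

section Solutions

variable {N : ℕ} {s : ℝ} {g : EN N → ℝ} {F : ℝ → EN N → ℝ → (EN N →L[ℝ] ℝ) → ℝ → ℝ}
  {G : ℝ → EN N → ℝ → ℝ → ℝ} {u₀ : EN N → ℝ} {u : ℝ → EN N → ℝ}

theorem IsSubsol.viscSub (h : IsSubsol N s g (fun t x v _ I => G t x v I) u₀ u) :
    ViscSub N s g G u := fun t₀ x₀ ht φ hφ τ r hτ hτt hr hmax =>
  sub_nonpos.1 (h.2.2.2 t₀ x₀ ht φ hφ τ r hτ hτt hr hmax)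

theorem IsSupersol.viscSup (h : IsSupersol N s g (fun t x v _ I => G t x v I) u₀ u) :
    ViscSup N s g G u := fun t₀ x₀ ht φ hφ τ r hτ hτt hr hmin =>
  sub_nonneg.1 (h.2.2.2 t₀ x₀ ht φ hφ τ r hτ hτt hr hmin)

theorem IsSol.initial_eq (h : IsSol N s g F u₀ u) (x : EN N) : u 0 x = u₀ x :=
  le_antisymm (h.2.1.2.2.1 x) (h.2.2.2.2.1 x)

theorem IsSol.isContLocBdd (h : IsSol N s g F u₀ u) {M₀ : ℝ} (hM₀ : ∀ x, |u₀ x| ≤ M₀) :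
    IsContLocBdd N u where
  continuousOn := h.1
  exists_abs_le T := by
    obtain ⟨M, hM⟩ := h.2.1.2.1 (max T 1) (lt_max_of_lt_right one_pos)
    refine ⟨max M M₀, fun t ht x => ?_⟩
    rcases ht.1.eq_or_lt with rfl | hpos
    · exact h.initial_eq x ▸ (hM₀ x).trans (le_max_right _ _)
    · exact (hM t ⟨hpos, ht.2.trans (le_max_left _ _)⟩ x).trans (le_max_left _ _)

end Solutions

section Medium

variable {N : ℕ} {K : NNReal} {f : ℝ → ℝ} {σ : ℝ → EN N → ℝ}

theorem IsMedium.exists_abs_reaction_le (h : IsMedium N K f σ) : ∃ C, ∀ v, |f v| ≤ C := by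
  obtain ⟨C, hC⟩ := (h.periodic.isBounded_of_continuous one_ne_zero
    h.lipschitz.continuous).exists_norm_le
  exact ⟨C, fun v => hC _ (mem_range_self v)⟩

theorem IsMedium.exists_abs_forcing_le (h : IsMedium N K f σ) : ∃ C, ∀ t x, |σ t x| ≤ C := by
  obtain ⟨C, hC⟩ := ((isCompact_Icc (a := (0 : ℝ)) (b := 1)).prod
    (isCompact_closedBall (0 : EN N) √N)).exists_bound_of_continuousOn h.continuous.continuousOn
  refine ⟨C, fun t x => ?_⟩
  obtain ⟨k, hk⟩ := exists_norm_sub_intVec_le x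
  obtain ⟨t', ht', htt'⟩ := (h.periodic_time (x - intVec N k)).exists_mem_Ico₀ one_pos t
  rw [← sub_add_cancel x (intVec N k), h.periodic_space, htt']
  exact hC (t', x - intVec N k) ⟨⟨ht'.1, ht'.2.le⟩, by simpa using hk⟩

theorem IsMedium.exists_abs_sub_le (h : IsMedium N K f σ) : ∃ C, ∀ v t x, |σ t x - f v| ≤ C := by
  obtain ⟨Cf, hCf⟩ := h.exists_abs_reaction_le
  obtain ⟨Cσ, hCσ⟩ := h.exists_abs_forcing_le
  exact ⟨Cσ + Cf, fun v t x => (abs_sub _ _).trans (add_le_add (hCσ t x) (hCf v))⟩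

theorem H2.exists_isMedium {W : ℝ → ℝ} (hW : H2 W) (hσ : H3 N σ) :
    ∃ K, IsMedium N K (deriv W) σ := by
  obtain ⟨-, ⟨K, hWK⟩, hW1⟩ := hW
  obtain ⟨⟨Kσ, hσK⟩, hσ1, hσk⟩ := hσ
  refine ⟨K, hWK, fun v => ?_, hσK.continuous, fun x t => hσ1 t x, hσk⟩
  rw [← deriv_comp_add_const W 1 v, funext hW1]

theorem cellF_zero_eq (W : ℝ → ℝ) (σ : ℝ → EN N → ℝ) (L : ℝ) :
    cellF N W σ 0 L = fun τ y v _ I => cellRHS (deriv W) σ L τ y v I := by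
  ext τ y v p I
  rw [cellF, cellRHS, inner_zero_left, add_zero]
  ring

end Medium

section Reflection

variable {N : ℕ} {s : ℝ} {g : EN N → ℝ} {f : ℝ → ℝ} {σ : ℝ → EN N → ℝ}

theorem reflectRHS_cellRHS (f : ℝ → ℝ) (σ : ℝ → EN N → ℝ) (L : ℝ) :
    reflectRHS (cellRHS f σ L) = cellRHS (fun v => -f (-v)) (fun t x => -σ t x) (-L) := by
  ext τ y v I
  simp only [reflectRHS, cellRHS]
  ring

theorem reflectRHS_oscRHS (s : ℝ) (f : ℝ → ℝ) (σ : ℝ → EN N → ℝ) (ε : ℝ) :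
    reflectRHS (oscRHS s f σ ε) = oscRHS s (fun v => -f (-v)) (fun t x => -σ t x) ε := by
  ext t x v I
  simp only [reflectRHS, oscRHS, neg_div]
  ring

theorem SlopeLim.neg {w : ℝ → EN N → ℝ} {lam : ℝ} (h : SlopeLim N w lam) :
    SlopeLim N (fun τ y => -w τ y) (-lam) := fun e he R hR =>
  (h e he R hR).imp fun T hT τ hτ y hy => by
    rw [neg_div, neg_sub_neg, abs_sub_comm]
    exact hT τ hτ y hy

/-- A solution of the cell problem with forcing `L` that vanishes initially and grows with
asymptotic slope `lam`. -/
structure IsCorrector (s : ℝ) (g : EN N → ℝ) (f : ℝ → ℝ) (σ : ℝ → EN N → ℝ) (L lam : ℝ)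
    (w : ℝ → EN N → ℝ) : Prop where
  isSol : IsSol N s g (fun τ y v _ I => cellRHS f σ L τ y v I) (fun _ => 0) w
  slopeLim : SlopeLim N w lam

variable {L lam : ℝ} {w : ℝ → EN N → ℝ}

theorem IsCorrector.isContLocBdd (h : IsCorrector s g f σ L lam w) : IsContLocBdd N w :=
  h.isSol.isContLocBdd (M₀ := 0) (by simp)

theorem IsCorrector.isSuperCorrector (h : IsCorrector s g f σ L lam w) :
    IsSuperCorrector s g f σ L lam w :=
  ⟨h.isSol.2.2.viscSup, h.isContLocBdd, fun y => (h.isSol.initial_eq y).ge, h.slopeLim⟩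

theorem IsCorrector.isSuperCorrector_neg (h : IsCorrector s g f σ L lam w) :
    IsSuperCorrector s g (fun v => -f (-v)) (fun t x => -σ t x) (-L) (-lam)
      (fun τ y => -w τ y) where
  viscSup := reflectRHS_cellRHS f σ L ▸ h.isSol.2.1.viscSub.neg
  isContLocBdd := h.isContLocBdd.neg
  initial_nonneg y := by simp [h.isSol.initial_eq y]
  slopeLim := h.slopeLim.neg

end Reflection

section Homogenization

variable {N : ℕ} {s : ℝ} {g : EN N → ℝ} {u₀ : EN N → ℝ}

theorem IsSol.isCorrector {W : ℝ → ℝ} {σ w : ℝ → EN N → ℝ} {L lam : ℝ}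
    (h : IsSol N s g (cellF N W σ 0 L) (fun _ => 0) w) (hslope : SlopeLim N w lam) :
    IsCorrector s g (deriv W) σ L lam w :=
  ⟨cellF_zero_eq W σ L ▸ h, hslope⟩

theorem H4.exists_lipschitzWith (h : H4 N u₀) : ∃ Λ, LipschitzWith Λ u₀ := by
  obtain ⟨hu₀, M, hM⟩ := h
  lift M to NNReal using (abs_nonneg _).trans (hM 0).1
  exact ⟨M, lipschitzWith_of_nnnorm_fderiv_le (hu₀.differentiable two_ne_zero)
    fun x => (hM x).2.1⟩

theorem convergence_s_lt_half_general (hs : s ∈ Ioo (0 : ℝ) (1 / 2)) (hg : IsAngularDensity g)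
    {f : ℝ → ℝ} {σ : ℝ → EN N → ℝ} (hmed : ∃ K, IsMedium N K f σ) (hu₀ : ContDiff ℝ 2 u₀)
    (hbdd : ∃ M, ∀ x, |u₀ x| ≤ M) (hlip : ∃ Λ, LipschitzWith Λ u₀) {H : ℝ → ℝ}
    (hH : Continuous H) (hcell : ∀ L, ∃ w, IsCorrector s g f σ L (H L) w)
    {uε : ℝ → ℝ → EN N → ℝ}
    (huε : ∀ ε, 0 < ε → IsSol N s g (fun t x v _ I => oscRHS s f σ ε t x v I) u₀ (uε ε))
    {u0 : ℝ → EN N → ℝ} (hu0 : IsSol N s g (fun _ _ _ _ I => H I) u₀ u0) :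
    ∀ η > 0, ∀ T > 0, ∃ ε₀ > 0, ∀ ε, 0 < ε → ε < ε₀ → ∀ t ∈ Icc 0 T, ∀ x,
      |uε ε t x - u0 t x| ≤ η := by
  intro η hη T hT
  obtain ⟨K, hmed⟩ := hmed
  obtain ⟨M, hM⟩ := hbdd
  obtain ⟨Λ, hΛ⟩ := hlip
  obtain ⟨C, hC⟩ := hmed.exists_abs_sub_le
  have hur := fun ε hε => (huε ε hε).isContLocBdd hM
  have hu0r := hu0.isContLocBdd hM
  have upper := hmed.eventually_sub_le hs hg hC hH
    (fun L => (hcell L).imp fun w hw => hw.isSuperCorrector) hu₀ hM hΛ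
    (fun ε hε => (huε ε hε).2.1.viscSub) hur (fun ε hε x => ((huε ε hε).initial_eq x).le)
    hu0.2.2.viscSup hu0r (fun x => (hu0.initial_eq x).ge) hη hT
  -- The lower bound is the upper bound for the problem reflected by `u ↦ -u`.
  have lower := hmed.reflect.eventually_sub_le (C := C) (H := fun L => -H (-L)) hs hg
    (fun v t x => by simpa only [neg_sub_neg, abs_sub_comm] using hC (-v) t x)
    (hH.comp continuous_neg).neg
    (fun L => by
      obtain ⟨w, hw⟩ := hcell (-L)
      exact ⟨_, neg_neg L ▸ hw.isSuperCorrector_neg⟩)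
    hu₀.neg (by simpa using hM) hΛ.neg
    (fun ε hε => reflectRHS_oscRHS s f σ ε ▸ (huε ε hε).2.2.viscSup.neg)
    (fun ε hε => (hur ε hε).neg) (fun ε hε x => by simp [(huε ε hε).initial_eq x])
    (IsSubsol.viscSub (G := fun _ _ _ I => H I) hu0.2.1).neg hu0r.neg
    (fun x => by simp [hu0.initial_eq x]) hη hT
  obtain ⟨ε₀, hε₀, h⟩ := mem_nhdsGT_iff_exists_Ioo_subset.1 (upper.and lower)
  refine ⟨ε₀, hε₀, fun ε hε hεlt t ht x => abs_le.2 ⟨?_, (h ⟨hε, hεlt⟩).1 t ht x⟩⟩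
  linarith [(h ⟨hε, hεlt⟩).2 t ht x]

end Homogenization

/-- **Convergence for `s < 1/2` (Theorem 1.3).** Under (H1)–(H4), the solution `u^ε` of
`∂_t u^ε = I_s[u^ε] − W'(u^ε/ε^{2s}) + σ(t/ε^{2s}, x/ε)`, `u^ε(0,·) = u₀`, converges locally
uniformly to the solution `u⁰` of `∂_t u = H̄₂(I_s[u(t,·)])`, `u(0,·) = u₀`,
where `H̄₂(L) = H̄(0,L)`. -/
theorem convergence_s_lt_half
    (N : ℕ) (hN : 1 ≤ N) (s : ℝ) (hs : s ∈ Set.Ioo (0 : ℝ) (1/2))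
    (g : EN N → ℝ) (hg : H1 N g)
    (W : ℝ → ℝ) (hW : H2 W)
    (σ : ℝ → EN N → ℝ) (hσ : H3 N σ)
    (u₀ : EN N → ℝ) (hu₀ : H4 N u₀)
    -- `H̄` is the effective Hamiltonian given by the ergodicity theorem:
    (Hbar : EN N → ℝ → ℝ)
    (hHbarCont : Continuous (fun q : EN N × ℝ => Hbar q.1 q.2))
    (hHbar : ∀ (p : EN N) (L : ℝ), ∃ w : ℝ → EN N → ℝ,
      IsSol N s g (cellF N W σ p L) (fun _ => 0) w ∧ SlopeLim N w (Hbar p L))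
    -- `u^ε` is the unique viscosity solution of the `ε`-problem:
    (uε : ℝ → ℝ → EN N → ℝ)
    (huε : ∀ ε : ℝ, 0 < ε →
      IsSol N s g
        (fun t x v _ I => I - deriv W (v / ε ^ (2*s)) + σ (t / ε ^ (2*s)) (ε⁻¹ • x))
        u₀ (uε ε) ∧
      (∀ u' : ℝ → EN N → ℝ,
        IsSol N s g
          (fun t x v _ I => I - deriv W (v / ε ^ (2*s)) + σ (t / ε ^ (2*s)) (ε⁻¹ • x))
          u₀ u' → ∀ t, 0 ≤ t → ∀ x, u' t x = uε ε t x))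
    -- `u⁰` is the unique viscosity solution of the homogenized problem:
    (u0 : ℝ → EN N → ℝ)
    (hu0 : IsSol N s g (fun _ _ _ _ I => Hbar 0 I) u₀ u0)
    (hu0uniq : ∀ u' : ℝ → EN N → ℝ,
      IsSol N s g (fun _ _ _ _ I => Hbar 0 I) u₀ u' →
      ∀ t, 0 ≤ t → ∀ x, u' t x = u0 t x) :
    -- then `u^ε → u⁰` locally uniformly in `(t,x)` as `ε → 0`:
    ∀ η > 0, ∀ T > 0, ∀ R > 0, ∃ ε₀ > 0, ∀ ε : ℝ, 0 < ε → ε < ε₀ →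
      ∀ t ∈ Set.Icc (0:ℝ) T, ∀ x : EN N, ‖x‖ ≤ R → |uε ε t x - u0 t x| ≤ η := by
  intro η hη T hT R _
  obtain ⟨ε₀, hε₀, h⟩ := convergence_s_lt_half_general hs hg.isAngularDensity
    (hW.exists_isMedium hσ) hu₀.1 (hu₀.2.imp fun _ hM x => (hM x).1) hu₀.exists_lipschitzWith
    (by fun_prop) (fun L => (hHbar 0 L).imp fun _ hw => hw.1.isCorrector hw.2)
    (fun ε hε => (huε ε hε).1) hu0 η hη T hT
  exact ⟨ε₀, hε₀, fun ε hε hεlt t ht x _ => h ε hε hεlt t ht x⟩
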